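/- arXiv:1011.4762 — 2 statements merged into one kernel-verified Lean document; each statement's English description precedes it below -/
import Mathlib

section
/- Let μ₁, …, μₙ be probability measures on ℝⁿ absolutely continuous with respect to Lebesgue measure, and let q ≥ 1 be an arbitrary integer. Then there exist closed convex sets V₁, …, V_q ⊆ ℝⁿ whose union is ℝⁿ, whose pairwise intersections have Lebesgue measure zero, and such that μᵢ(Vⱼ) = 1/q for every i = 1, …, n and every j = 1, …, q. -/
open MeasureTheory

/-!
The partition is built by strong induction on `q`. Let `p` be a prime divisor of `q = p * s`. It is
enough to find `p` affine functions on `ℝⁿ`, not all equal, such that each cell of their upper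
envelope has, for every `μᵢ`, the mass `m / p`, where `m < p` is the number of indices at which the
corresponding function occurs. The conditional measures in such a cell can be split into
`m * s < q` parts by induction, and the intersections of these parts with the cell have
`μᵢ`-measure `1 / q` (`equipartition`). Since functions may coincide, the argument does not need
the optimal configuration space; the repeated functions only make a cell heavier.

The affine functions come from a limit (`exists_split`). At inverse temperature `T` the indicator
functions of the cells are replaced by their softmax versions, whose `μᵢ`-integrals are continuous
in the `p`-tuple `x` and equivariant under cyclic shifts. If for every `T` there is a tuple with
all these integrals equal to `1 / p`, a limit point of such tuples as `T → ∞` has the required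
property, because ties between distinct affine functions are null sets. The tuples range over a
compact set `GoodSet p n` on which the `p` functions are never all equal.

The tuple at a fixed `T` is a zero of an equivariant map with values in `n` copies of the reduced
regular representation of `ℤ/p` (`exists_zero`), a Borsuk–Ulam type statement that is proved
combinatorially. On ordered chains, a tower is a sequence `c 0, c 1, …` with `∂ c 0 = 1` and
`∂ c (k + 1) = D (k + 1) (c k)`, where `D` alternates between the norm and `1 - G` for a generator
`G` of `ℤ/p`. Iterated joins of orbits give such a tower inside `GoodSet p n` up to level
`n (p - 1)`, and barycentric subdivision makes its simplices small. If there is no zero, label each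
point with the pairs `(i, j)` at which its value is maximal. On a small simplex no `i` occurs with
all `j`, since otherwise all values `yᵢⱼ` would be positive, while their sum over `j` vanishes. The
sets of labels of the faces then form a tower of chains of sets without a full row
(`exists_full_row`), on which `ℤ/p` acts freely. Such sets have at most `n (p - 1)` elements, so all
lists of `n (p - 1) + 1` decreasing nonempty ones are degenerate. On the other hand the exactness of
the periodic resolution for a free action (`FreeOn.exact`) shows that no level of such a tower
is degenerate (`Tower.nd_ne_zero`), a contradiction.
-/

namespace ConvexEquipartition

/-! ### Chains of lists -/

/-- Augmented ordered chains on the vertex set `α`: integral combinations of lists of vertices.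
A list of length `k + 1` is a `k`-simplex; the empty list is the `(-1)`-simplex, so the
augmentation is part of the boundary. -/
abbrev Ch (α : Type*) := List α →₀ ℤ

section Chains

variable {α β : Type*}

/-- Chains supported on the lists that satisfy `A`. -/
abbrev Sup (A : List α → Prop) : Submodule ℤ (Ch α) := Finsupp.supported ℤ ℤ {l | A l}

/-- The cone operator, which puts the vertex `a` in front of every list. -/
noncomputable def cone (a : α) : Ch α →ₗ[ℤ] Ch α := Finsupp.lmapDomain ℤ ℤ (List.cons a)

/-- The boundary of a single list. -/
noncomputable def bdL : List α → Ch α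
  | [] => 0
  | a :: l => Finsupp.single l 1 - cone a (bdL l)

/-- The simplicial boundary operator. -/
noncomputable def bd : Ch α →ₗ[ℤ] Ch α := Finsupp.linearCombination ℤ bdL

/-- The operator induced on chains by a map of vertices. -/
noncomputable def mp (φ : α → β) : Ch α →ₗ[ℤ] Ch β := Finsupp.lmapDomain ℤ ℤ (List.map φ)

/-- The subdivision operator with apex function `b`: a list `l` of length `k` is sent to the cone
with apex `b l` over the subdivision of its boundary. With `b` the barycentre this is barycentric
subdivision. The index `k` is the length of the lists to which the operator is applied. -/
noncomputable def sd (b : List α → β) : ℕ → Ch α →ₗ[ℤ] Ch β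
  | 0 => Finsupp.linearCombination ℤ fun l => if l = [] then Finsupp.single [] 1 else 0
  | k + 1 => Finsupp.linearCombination ℤ fun l => cone (b l) (sd b k (bdL l))

@[simp] lemma cone_single (a : α) (l : List α) (c : ℤ) :
    cone a (Finsupp.single l c) = Finsupp.single (a :: l) c := by
  simp [cone]

@[simp] lemma bd_single (l : List α) : bd (Finsupp.single l 1) = bdL l := by
  simp [bd]

@[simp] lemma mp_single (φ : α → β) (l : List α) (c : ℤ) :
    mp φ (Finsupp.single l c) = Finsupp.single (l.map φ) c := by
  simp [mp]

lemma ext_single {M : Type*} [AddCommGroup M] {f g : Ch α →ₗ[ℤ] M}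
    (h : ∀ l, f (Finsupp.single l 1) = g (Finsupp.single l 1)) : f = g :=
  Finsupp.lhom_ext' fun l => LinearMap.ext_ring (by simpa using h l)

lemma bd_cone (a : α) (z : Ch α) : bd (cone a z) = z - cone a (bd z) := by
  have : bd ∘ₗ cone a = LinearMap.id - cone a ∘ₗ bd := by
    apply ext_single; intro l; simp [bdL]
  exact LinearMap.congr_fun this z

lemma bd_bd (z : Ch α) : bd (bd z) = 0 := by
  have : bd ∘ₗ bd = (0 : Ch α →ₗ[ℤ] Ch α) := by
    apply ext_single; intro l
    simp only [LinearMap.comp_apply, bd_single, LinearMap.zero_apply]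
    induction l with
    | nil => simp [bdL]
    | cons a l ih => simp [bdL, bd_cone, ih]
  exact LinearMap.congr_fun this z

lemma mp_cone (φ : α → β) (a : α) (z : Ch α) : mp φ (cone a z) = cone (φ a) (mp φ z) := by
  have : mp φ ∘ₗ cone a = cone (φ a) ∘ₗ mp φ := by
    apply ext_single; intro l; simp
  exact LinearMap.congr_fun this z

lemma mp_bdL (φ : α → β) (l : List α) : mp φ (bdL l) = bdL (l.map φ) := by
  induction l with
  | nil => simp [bdL]
  | cons a l ih => simp [bdL, mp_cone, ih]

lemma mp_bd (φ : α → β) (z : Ch α) : mp φ (bd z) = bd (mp φ z) := by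
  have : mp φ ∘ₗ bd = bd ∘ₗ mp φ := by
    apply ext_single; intro l; simp [mp_bdL]
  exact LinearMap.congr_fun this z

lemma sd_succ_single (b : List α → β) (k : ℕ) (l : List α) :
    sd b (k + 1) (Finsupp.single l 1) = cone (b l) (sd b k (bdL l)) := by
  simp [sd]

lemma bd_sd (b : List α → β) (k : ℕ) (z : Ch α) : bd (sd b (k + 1) z) = sd b k (bd z) := by
  suffices h : bd ∘ₗ sd b (k + 1) = sd b k ∘ₗ bd from LinearMap.congr_fun h z
  induction k with
  | zero =>
    have h0 : bd ∘ₗ sd b 0 = 0 := by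
      apply ext_single; intro l
      by_cases hl : l = [] <;> simp [sd, hl, bdL]
    have h1 : ∀ w, bd (sd b 0 w) = 0 := fun w => LinearMap.congr_fun h0 w
    apply ext_single; intro l
    simp only [LinearMap.comp_apply, bd_single]
    rw [sd_succ_single, bd_cone, h1, map_zero, sub_zero]
  | succ k ih =>
    have h1 : ∀ w, bd (sd b (k + 1) w) = sd b k (bd w) := fun w => LinearMap.congr_fun ih w
    apply ext_single; intro l
    simp only [LinearMap.comp_apply, bd_single]
    rw [sd_succ_single, bd_cone, h1, ← bd_single, bd_bd]
    simp

lemma mp_sd {φ : α → α} {ψ : β → β} {b : List α → β} (hb : ∀ l, b (l.map φ) = ψ (b l))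
    (k : ℕ) (z : Ch α) : mp ψ (sd b k z) = sd b k (mp φ z) := by
  suffices h : mp ψ ∘ₗ sd b k = sd b k ∘ₗ mp φ from LinearMap.congr_fun h z
  induction k with
  | zero =>
    apply ext_single; intro l
    by_cases hl : l = [] <;> simp [sd, hl]
  | succ k ih =>
    have h1 : ∀ w, mp ψ (sd b k w) = sd b k (mp φ w) := fun w => LinearMap.congr_fun ih w
    apply ext_single; intro l
    simp [sd, mp_cone, h1, mp_bdL, hb]

lemma lc_mem {f : List α → Ch β} {A : List α → Prop} {B : List β → Prop}
    (h : ∀ l, A l → f l ∈ Sup B) {z : Ch α} (hz : z ∈ Sup A) :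
    Finsupp.linearCombination ℤ f z ∈ Sup B := by
  rw [Finsupp.linearCombination_apply]
  exact Submodule.sum_mem _ fun l hl => Submodule.smul_mem _ _ (h l (hz hl))

lemma map_mem {F : Ch α →ₗ[ℤ] Ch β} {A : List α → Prop} {B : List β → Prop}
    (h : ∀ l, A l → F (Finsupp.single l 1) ∈ Sup B) {z : Ch α} (hz : z ∈ Sup A) :
    F z ∈ Sup B := by
  have : F = Finsupp.linearCombination ℤ fun l => F (Finsupp.single l 1) := by
    apply ext_single; intro l; simp
  rw [this]; exact lc_mem h hz

lemma single_mem {A : List α → Prop} {l : List α} (h : A l) (c : ℤ) :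
    Finsupp.single l c ∈ Sup A := Finsupp.single_mem_supported ℤ c h

lemma bdL_mem (l : List α) :
    bdL l ∈ Sup fun m : List α => m.Sublist l ∧ m.length + 1 = l.length := by
  induction l with
  | nil => simp [bdL]
  | cons a l ih =>
    refine Submodule.sub_mem _ (single_mem (by simp) _) (map_mem (fun m hm => ?_) ih)
    rw [cone_single]
    exact single_mem (by simpa using hm) _

/-- An induction principle for the lists that occur in a subdivision. -/
lemma sd_mem {b : List α → β} (R : List α → List β → Prop) (h0 : R [] [])
    (hs : ∀ l m l', m.Sublist l → m.length + 1 = l.length → R m l' → R l (b l :: l')) :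
    ∀ (k : ℕ) (l : List α), l.length = k → sd b k (Finsupp.single l 1) ∈ Sup (R l) := by
  intro k
  induction k with
  | zero =>
    intro l hl
    obtain rfl := List.length_eq_zero_iff.1 hl
    simpa [sd] using single_mem h0 1
  | succ k ih =>
    intro l hl
    rw [sd_succ_single]
    have h1 : sd b k (bdL l) ∈ Sup fun l' => R l (b l :: l') := by
      refine map_mem (fun m hm => ?_) (bdL_mem l)
      have := ih m (by omega)
      exact Finsupp.supported_mono (fun l' hl' => hs l m l' hm.1 hm.2 hl') this
    refine map_mem (fun m hm => ?_) h1
    rw [cone_single]; exact single_mem hm _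

/-! ### Degenerate lists -/

open Classical in
/-- The projection that kills the degenerate lists, those with two equal consecutive entries. -/
noncomputable def nd : Ch α →ₗ[ℤ] Ch α :=
  Finsupp.linearCombination ℤ fun l => if l.IsChain (· ≠ ·) then Finsupp.single l 1 else 0

lemma nd_single_of {l : List α} (h : l.IsChain (· ≠ ·)) :
    nd (Finsupp.single l 1) = Finsupp.single l 1 := by
  simp [nd, h]

lemma nd_single_of_not {l : List α} (h : ¬ l.IsChain (· ≠ ·)) :
    nd (Finsupp.single l 1) = 0 := by
  simp [nd, h]

lemma nd_cone_nd (a : α) (z : Ch α) : nd (cone a (nd z)) = nd (cone a z) := by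
  have : nd ∘ₗ cone a ∘ₗ nd = nd ∘ₗ cone a := by
    apply ext_single; intro l
    by_cases h : l.IsChain (· ≠ ·)
    · simp [nd_single_of h]
    · have h2 : ¬ (a :: l).IsChain (· ≠ ·) := fun h' => h h'.tail
      simp [nd_single_of_not h, nd_single_of_not h2]
  exact LinearMap.congr_fun this z

lemma nd_bdL {l : List α} (h : ¬ l.IsChain (· ≠ ·)) : nd (bdL l) = 0 := by
  induction l with
  | nil => simp [bdL]
  | cons a l ih =>
    cases l with
    | nil => simp at h
    | cons b l =>
      by_cases hab : a = b
      · subst hab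
        have h3 : nd ∘ₗ cone a ∘ₗ cone a = (0 : Ch α →ₗ[ℤ] Ch α) := by
          apply ext_single; intro m
          simp only [LinearMap.comp_apply, cone_single, LinearMap.zero_apply]
          exact nd_single_of_not (by simp)
        have := LinearMap.congr_fun h3 (bdL l)
        simpa [bdL] using this
      · have h2 : ¬ (b :: l).IsChain (· ≠ ·) := by simpa [List.isChain_cons_cons, hab] using h
        rw [bdL, map_sub, ← nd_cone_nd, ih h2, nd_single_of_not h2]; simp

lemma nd_bd_nd (z : Ch α) : nd (bd (nd z)) = nd (bd z) := by
  have : nd ∘ₗ bd ∘ₗ nd = nd ∘ₗ (bd : Ch α →ₗ[ℤ] Ch α) := by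
    apply ext_single; intro l
    by_cases h : l.IsChain (· ≠ ·)
    · simp [nd_single_of h]
    · simp [nd_single_of_not h, nd_bdL h]
  exact LinearMap.congr_fun this z

lemma nd_mp {φ : α → α} (hφ : φ.Injective) (z : Ch α) : nd (mp φ z) = mp φ (nd z) := by
  have : nd ∘ₗ mp φ = mp φ ∘ₗ nd := by
    apply ext_single; intro l
    have h2 : (l.map φ).IsChain (· ≠ ·) ↔ l.IsChain (· ≠ ·) := by
      rw [List.isChain_map]
      simp [hφ.eq_iff]
    by_cases h : l.IsChain (· ≠ ·)
    · simp [nd_single_of h, nd_single_of (h2.2 h)]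
    · simp [nd_single_of_not h, nd_single_of_not (h2.not.2 h)]
  exact LinearMap.congr_fun this z

lemma nd_mem {A : List α → Prop} {z : Ch α} (hz : z ∈ Sup A) :
    nd z ∈ Sup fun l => A l ∧ l.IsChain (· ≠ ·) := by
  refine map_mem (fun l hl => ?_) hz
  by_cases h : l.IsChain (· ≠ ·)
  · rw [nd_single_of h]; exact single_mem ⟨hl, h⟩ _
  · rw [nd_single_of_not h]; exact Submodule.zero_mem _

/-! ### Towers of chains for a cyclic action -/

/-- For an operator `G` of order `p`, the operators `D k` alternate between the norm
`1 + G + ⋯ + G ^ (p - 1)` (`k` even) and `1 - G` (`k` odd), as in the periodic resolution of the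
cyclic group of order `p`. -/
noncomputable def D {M : Type*} [AddCommGroup M] (p : ℕ) (G : Module.End ℤ M) (k : ℕ) :
    Module.End ℤ M :=
  if Even k then ∑ i ∈ Finset.range p, G ^ i else 1 - G

lemma D_comp {M : Type*} [AddCommGroup M] {p : ℕ} {G : Module.End ℤ M} (hG : G ^ p = 1) (k : ℕ) :
    D p G (k + 1) * D p G k = 0 := by
  by_cases h : Even k
  · have h' : ¬ Even (k + 1) := by simpa [Nat.even_add_one] using h
    simp only [D, h, h', if_true, if_false]
    rw [mul_neg_geom_sum, hG, sub_self]
  · have h' : Even (k + 1) := by simpa [Nat.even_add_one] using h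
    simp only [D, h, h', if_true, if_false]
    rw [geom_sum_mul_neg, hG, sub_self]

lemma D_comm {M N : Type*} [AddCommGroup M] [AddCommGroup N] {p : ℕ} {G : Module.End ℤ M}
    {H : Module.End ℤ N} {F : M →ₗ[ℤ] N} (h : ∀ z, F (G z) = H (F z)) (k : ℕ) (z : M) :
    F (D p G k z) = D p H k (F z) := by
  have hp : ∀ i : ℕ, ∀ z, F ((G ^ i) z) = (H ^ i) (F z) := by
    intro i
    induction i with
    | zero => simp
    | succ i ih => intro z; rw [pow_succ, pow_succ, Module.End.mul_apply, ih, h]; rfl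
  by_cases hk : Even k
  · simp [D, hk, hp]
  · simp [D, hk, h]

lemma D_mem {M : Type*} [AddCommGroup M] {p : ℕ} {G : Module.End ℤ M} {S : Submodule ℤ M}
    (h : ∀ z ∈ S, G z ∈ S) (k : ℕ) {z : M} (hz : z ∈ S) : D p G k z ∈ S := by
  have hp : ∀ i : ℕ, (G ^ i) z ∈ S := by
    intro i
    induction i with
    | zero => simpa
    | succ i ih => rw [pow_succ', Module.End.mul_apply]; exact h _ ih
  by_cases hk : Even k
  · simp only [D, hk, if_true, LinearMap.sum_apply]
    exact Submodule.sum_mem _ fun i _ => hp i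
  · simp only [D, hk, if_false]
    exact Submodule.sub_mem _ hz (h z hz)

/-- A tower: a chain `c 0` of augmentation one and, for each `k` a chain `c (k + 1)` whose boundary is
`D (k + 1) (c k)`, for the action of `φ`. -/
structure Tower (p : ℕ) (φ : α → α) (c : ℕ → Ch α) : Prop where
  zero : bd (c 0) = Finsupp.single [] 1
  succ : ∀ k, bd (c (k + 1)) = D p (mp φ) (k + 1) (c k)

lemma Tower.sd {p : ℕ} {φ : α → α} {ψ : β → β} {c : ℕ → Ch α} (hc : Tower p φ c)
    {b : List α → β} (hb : ∀ l, b (l.map φ) = ψ (b l)) :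
    Tower p ψ fun k => sd b (k + 1) (c k) where
  zero := by rw [bd_sd, hc.zero]; simp [ConvexEquipartition.sd]
  succ k := by
    rw [bd_sd, hc.succ]
    exact D_comm (fun z => (mp_sd hb _ z).symm) _ _

lemma mp_pow {p : ℕ} {φ : α → α} : (mp φ : Module.End ℤ (Ch α)) ^ p = mp (φ^[p]) := by
  induction p with
  | zero => apply ext_single; intro l; simp
  | succ i ih =>
    apply ext_single; intro l
    rw [pow_succ, Module.End.mul_apply, ih]
    simp [Function.iterate_succ]

/-- The tower `c (k + 1) = e (k + 1) * D (k + 1) (c k)` of iterated joins. -/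
noncomputable def joinTower (p : ℕ) (φ : α → α) (e : ℕ → α) : ℕ → Ch α
  | 0 => Finsupp.single [e 0] 1
  | k + 1 => cone (e (k + 1)) (D p (mp φ) (k + 1) (joinTower p φ e k))

lemma joinTower_tower {p : ℕ} {φ : α → α} (hφ : φ^[p] = id) (e : ℕ → α) :
    Tower p φ (joinTower p φ e) := by
  have hG : (mp φ : Module.End ℤ (Ch α)) ^ p = 1 := by
    rw [mp_pow, hφ]; apply ext_single; intro l; simp
  have hz : bd (joinTower p φ e 0) = Finsupp.single [] 1 := by simp [joinTower, bdL]
  refine ⟨hz, fun k => ?_⟩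
  have key : bd (D p (mp φ) (k + 1) (joinTower p φ e k)) = 0 := by
    rw [D_comm (fun z => (mp_bd φ z).symm)]
    induction k with
    | zero => rw [hz]; simp [D]
    | succ k ih =>
      have ih' : bd (D p (mp φ) (k + 1) (joinTower p φ e k)) = 0 := by
        rw [D_comm (fun z => (mp_bd φ z).symm), ih]
      rw [joinTower, bd_cone, ih', map_zero, sub_zero, ← Module.End.mul_apply, D_comp hG]; rfl
  rw [joinTower, bd_cone, key, map_zero, sub_zero]

/-! ### Exactness for free actions -/

/-- The part of a contracting homotopy of the periodic resolution that pairs with `1 - G`;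
`h` is the position in the orbit of the head of a list. -/
noncomputable def hT (p : ℕ) (φ : α → α) (h : α → ℕ) : Ch α →ₗ[ℤ] Ch α :=
  Finsupp.linearCombination ℤ fun l => match l with
    | [] => 0
    | a :: l => ∑ m ∈ Finset.Ico (p - h a) p, Finsupp.single ((a :: l).map φ^[m]) 1

/-- The part of the contracting homotopy that pairs with the norm: it sends the last element of
an orbit to the first one and kills the others. -/
noncomputable def hA (p : ℕ) (φ : α → α) (h : α → ℕ) : Ch α →ₗ[ℤ] Ch α :=
  Finsupp.linearCombination ℤ fun l => match l with
    | [] => 0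
    | a :: l => if h a = p - 1 then Finsupp.single ((a :: l).map φ) 1 else 0

/-- `h` identifies the orbit of every element that satisfies `P` with `ℤ/p`: the map `φ` has
order `p`, preserves `P`, and increases `h` by one modulo `p`. -/
structure FreeOn (p : ℕ) (φ : α → α) (P : α → Prop) (h : α → ℕ) : Prop where
  iter : φ^[p] = id
  map : ∀ a, P a → P (φ a)
  lt : ∀ a, P a → h a < p
  step : ∀ a, P a → h (φ a) = (h a + 1) % p

/-- The lists of length `k` whose entries satisfy `P`. -/
abbrev LP (P : α → Prop) (k : ℕ) : List α → Prop := fun l => l.length = k ∧ ∀ a ∈ l, P a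

variable {p : ℕ} {φ : α → α} {P : α → Prop} {h : α → ℕ}

lemma mp_pow_single (φ : α → α) (m : ℕ) (l : List α) :
    ((mp φ : Module.End ℤ (Ch α)) ^ m) (Finsupp.single l 1) =
      Finsupp.single (l.map φ^[m]) 1 := by
  rw [mp_pow, mp_single]

lemma FreeOn.iterate_map (H : FreeOn p φ P h) (m : ℕ) {a : α} (ha : P a) : P (φ^[m] a) := by
  induction m with
  | zero => simpa
  | succ m ih => rw [Function.iterate_succ_apply']; exact H.map _ ih

lemma FreeOn.iterate_step (H : FreeOn p φ P h) (m : ℕ) {a : α} (ha : P a) :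
    h (φ^[m] a) = (h a + m) % p := by
  induction m with
  | zero => simp [Nat.mod_eq_of_lt (H.lt a ha)]
  | succ m ih =>
    rw [Function.iterate_succ_apply', H.step _ (H.iterate_map m ha), ih]
    simp [add_assoc]

lemma FreeOn.mp_mem (H : FreeOn p φ P h) (k : ℕ) (z : Ch α) (hz : z ∈ Sup (LP P k)) :
    mp φ z ∈ Sup (LP P k) := by
  refine map_mem (fun l hl => ?_) hz
  rw [mp_single]
  refine single_mem ⟨by simpa using hl.1, fun a ha => ?_⟩ _
  obtain ⟨b, hb, rfl⟩ := List.mem_map.1 ha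
  exact H.map _ (hl.2 b hb)

lemma FreeOn.hT_mem (H : FreeOn p φ P h) (k : ℕ) {z : Ch α} (hz : z ∈ Sup (LP P k)) :
    hT p φ h z ∈ Sup (LP P k) := by
  refine lc_mem (fun l hl => ?_) hz
  cases l with
  | nil => exact Submodule.zero_mem _
  | cons a l =>
    refine Submodule.sum_mem _ fun m _ => single_mem ⟨by simpa using hl.1, fun b hb => ?_⟩ _
    obtain ⟨c, hc, rfl⟩ := List.mem_map.1 hb
    exact H.iterate_map m (hl.2 c hc)

lemma FreeOn.hA_mem (H : FreeOn p φ P h) (k : ℕ) {z : Ch α} (hz : z ∈ Sup (LP P k)) :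
    hA p φ h z ∈ Sup (LP P k) := by
  refine lc_mem (fun l hl => ?_) hz
  cases l with
  | nil => exact Submodule.zero_mem _
  | cons a l =>
    dsimp only
    split_ifs
    · refine single_mem ⟨by simpa using hl.1, fun b hb => ?_⟩ _
      obtain ⟨c, hc, rfl⟩ := List.mem_map.1 hb
      exact H.map _ (hl.2 c hc)
    · exact Submodule.zero_mem _

/-- Linear maps that agree on the lists satisfying `A` agree on the chains supported there. -/
lemma eq_of_single {M : Type*} [AddCommGroup M] {f g : Ch α →ₗ[ℤ] M} {A : List α → Prop}
    (hfg : ∀ l, A l → f (Finsupp.single l 1) = g (Finsupp.single l 1)) {z : Ch α}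
    (hz : z ∈ Sup A) : f z = g z := by
  have e : ∀ F : Ch α →ₗ[ℤ] M, F z = z.sum fun l c => c • F (Finsupp.single l 1) := by
    intro F
    have : F = Finsupp.linearCombination ℤ fun l => F (Finsupp.single l 1) := by
      apply ext_single; intro l; simp
    conv_lhs => rw [this]
    rw [Finsupp.linearCombination_apply]
  rw [e f, e g]
  exact Finsupp.sum_congr fun l hl => by rw [hfg l (hz hl)]

/-- The first homotopy identity, `(1 - G) T = A N - 1`. -/
lemma FreeOn.sub_hT (H : FreeOn p φ P h) {k : ℕ} {z : Ch α} (hz : z ∈ Sup (LP P (k + 1))) :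
    hT p φ h z - mp φ (hT p φ h z) =
      hA p φ h ((∑ i ∈ Finset.range p, (mp φ : Module.End ℤ (Ch α)) ^ i) z) - z := by
  refine eq_of_single (f := hT p φ h - mp φ ∘ₗ hT p φ h)
    (g := hA p φ h ∘ₗ (∑ i ∈ Finset.range p, (mp φ : Module.End ℤ (Ch α)) ^ i) - LinearMap.id)
    (fun l hl => ?_) hz
  cases l with
  | nil => exact absurd hl.1 (by simp)
  | cons a l =>
    have ha : P a := hl.2 a (by simp)
    have hlt := H.lt a ha
    set L := a :: l with hL
    have hT1 : hT p φ h (Finsupp.single L 1) =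
        ∑ m ∈ Finset.Ico (p - h a) p, Finsupp.single (L.map φ^[m]) (1 : ℤ) := by
      simp [hT, hL]
    have hG : ∀ m, mp φ (Finsupp.single (L.map φ^[m]) 1) =
        Finsupp.single (L.map φ^[m + 1]) (1 : ℤ) := by
      intro m; rw [mp_single, List.map_map, Function.iterate_succ']
    have hA1 : ∀ m ∈ Finset.range p, hA p φ h (Finsupp.single (L.map φ^[m]) 1) =
        if m = p - 1 - h a then Finsupp.single (L.map φ^[m + 1]) (1 : ℤ) else 0 := by
      intro m hm
      rw [Finset.mem_range] at hm
      have e1 : hA p φ h (Finsupp.single (L.map φ^[m]) 1) =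
          if h (φ^[m] a) = p - 1 then Finsupp.single ((L.map φ^[m]).map φ) (1 : ℤ) else 0 := by
        simp [hA, hL]
      rw [e1, H.iterate_step m ha, List.map_map, ← Function.iterate_succ']
      have e2 : (h a + m) % p = p - 1 ↔ m = p - 1 - h a := by
        rcases lt_or_ge (h a + m) p with h1 | h1
        · rw [Nat.mod_eq_of_lt h1]; omega
        · rw [Nat.mod_eq_sub_mod h1, Nat.mod_eq_of_lt (by omega)]; omega
      simp only [e2]
    have hN : (∑ i ∈ Finset.range p, (mp φ : Module.End ℤ (Ch α)) ^ i) (Finsupp.single L 1) =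
        ∑ m ∈ Finset.range p, Finsupp.single (L.map φ^[m]) (1 : ℤ) := by
      rw [LinearMap.sum_apply]
      exact Finset.sum_congr rfl fun m _ => mp_pow_single φ m L
    simp only [LinearMap.sub_apply, LinearMap.comp_apply, LinearMap.id_apply]
    rw [hN, map_sum, Finset.sum_congr rfl hA1, Finset.sum_ite_eq', if_pos (by simp; omega), hT1,
      map_sum, Finset.sum_congr rfl fun m _ => hG m]
    rw [show p - 1 - h a + 1 = p - h a by omega]
    have e3 := Finset.sum_Ico_sub (fun m => Finsupp.single (L.map φ^[m]) (1 : ℤ))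
      (show p - h a ≤ p by omega)
    rw [Finset.sum_sub_distrib] at e3
    have e4 : L.map φ^[p] = L := by rw [H.iter]; simp
    rw [e4] at e3
    rw [← neg_sub, e3, neg_sub]

/-- The second homotopy identity, `T (1 - G) = N A - 1`. -/
lemma FreeOn.hT_sub (H : FreeOn p φ P h) {k : ℕ} {z : Ch α} (hz : z ∈ Sup (LP P (k + 1))) :
    hT p φ h (z - mp φ z) =
      (∑ i ∈ Finset.range p, (mp φ : Module.End ℤ (Ch α)) ^ i) (hA p φ h z) - z := by
  suffices key : ∀ l, LP P (k + 1) l →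
      (hT p φ h ∘ₗ (LinearMap.id - mp φ)) (Finsupp.single l 1) =
      ((∑ i ∈ Finset.range p, (mp φ : Module.End ℤ (Ch α)) ^ i) ∘ₗ hA p φ h -
        (LinearMap.id : Ch α →ₗ[ℤ] Ch α)) (Finsupp.single l 1) by
    have := eq_of_single key hz
    simpa only [LinearMap.sub_apply, LinearMap.comp_apply, LinearMap.id_apply] using this
  intro l hl
  cases l with
  | nil => exact absurd hl.1 (by simp)
  | cons a l =>
    have ha : P a := hl.2 a (by simp)
    have hlt := H.lt a ha
    set L := a :: l with hL
    have hT1 : hT p φ h (Finsupp.single L 1) =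
        ∑ m ∈ Finset.Ico (p - h a) p, Finsupp.single (L.map φ^[m]) (1 : ℤ) := by
      simp [hT, hL]
    have hT2 : hT p φ h (Finsupp.single (L.map φ) 1) =
        ∑ m ∈ Finset.Ico (p - (h a + 1) % p) p, Finsupp.single (L.map φ^[m + 1]) (1 : ℤ) := by
      rw [← H.step a ha]
      simp [hT, hL, Function.iterate_succ]
    have hN : (∑ i ∈ Finset.range p, (mp φ : Module.End ℤ (Ch α)) ^ i)
        (Finsupp.single (L.map φ) 1) =
        ∑ m ∈ Finset.range p, Finsupp.single (L.map φ^[m + 1]) (1 : ℤ) := by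
      rw [LinearMap.sum_apply]
      refine Finset.sum_congr rfl fun m _ => ?_
      rw [mp_pow_single, List.map_map, Function.iterate_succ]
    have hA1 : hA p φ h (Finsupp.single L 1) =
        if h a = p - 1 then Finsupp.single (L.map φ) (1 : ℤ) else 0 := by
      simp [hA, hL]
    have e4 : L.map φ^[p] = L := by rw [H.iter]; simp
    simp only [LinearMap.sub_apply, LinearMap.comp_apply, LinearMap.id_apply, map_sub, mp_single]
    rw [hT1, hT2, hA1]
    by_cases hp : h a = p - 1
    · rw [if_pos hp, hN, show (h a + 1) % p = 0 by rw [hp, Nat.sub_add_cancel (by omega)]; simp,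
        hp, show p - (p - 1) = 1 by omega, Nat.sub_zero, Finset.Ico_self, Finset.sum_empty,
        sub_zero]
      obtain ⟨r, rfl⟩ : ∃ r, p = r + 1 := ⟨p - 1, by omega⟩
      rw [Finset.sum_range_succ, e4, Finset.sum_Ico_eq_sum_range]
      simp [add_comm]
    · rw [if_neg hp, map_zero, zero_sub, Nat.mod_eq_of_lt (by omega),
        Finset.sum_Ico_add' (fun m => Finsupp.single (L.map φ^[m]) (1 : ℤ)),
        show p - (h a + 1) + 1 = p - h a by omega, Finset.sum_Ico_succ_top (by omega), e4]
      simp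

/-- Exactness of the periodic resolution on chains with a free action. -/
lemma FreeOn.exact (H : FreeOn p φ P h) {k : ℕ} {z : Ch α} (hz : z ∈ Sup (LP P (k + 1)))
    (j : ℕ) (hj : D p (mp φ) (j + 1) z = 0) :
    ∃ w ∈ Sup (LP P (k + 1)), z = D p (mp φ) j w := by
  by_cases hk : Even j
  · have h' : ¬ Even (j + 1) := by simpa [Nat.even_add_one] using hk
    refine ⟨_, H.hA_mem _ hz, ?_⟩
    have h1 : z - mp φ z = 0 := by simpa [D, h'] using hj
    have h2 := H.hT_sub hz
    rw [h1, map_zero] at h2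
    simp only [D, hk, if_true]
    exact (sub_eq_zero.1 h2.symm).symm
  · have h' : Even (j + 1) := by simpa [Nat.even_add_one] using hk
    refine ⟨-hT p φ h z, Submodule.neg_mem _ (H.hT_mem _ hz), ?_⟩
    simp only [D, h', if_true] at hj
    have h2 := H.sub_hT hz
    rw [hj, map_zero, zero_sub] at h2
    simp only [D, hk, if_false, LinearMap.sub_apply, Module.End.one_apply, map_neg]
    calc z = -(-z) := (neg_neg z).symm
      _ = _ := by rw [← h2, neg_sub]

lemma bd_mem_LP {k : ℕ} {z : Ch α} (hz : z ∈ Sup (LP P (k + 1))) : bd z ∈ Sup (LP P k) := by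
  refine map_mem (fun l hl => ?_) hz
  rw [bd_single]
  have hsub : {m : List α | m.Sublist l ∧ m.length + 1 = l.length} ⊆ {m | LP P k m} :=
    fun m hm => ⟨by have := hm.2; have := hl.1; omega, fun a ha => hl.2 a (hm.1.subset ha)⟩
  exact Finsupp.supported_mono hsub (bdL_mem l)

/-- A tower of chains on which the action is free does not become degenerate: if, up to level `N`,
it consists of lists with entries in the free part, then `nd (c N)` is nonzero. -/
lemma Tower.nd_ne_zero {c : ℕ → Ch α} (hc : Tower p φ c) (H : FreeOn p φ P h) (hp : 2 ≤ p)
    {N : ℕ} (hP : ∀ k ≤ N, c k ∈ Sup (LP P (k + 1))) : nd (c N) ≠ 0 := by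
  intro hN
  have hinj : φ.Injective := by
    have h1 : (φ^[p]).Injective := by rw [H.iter]; exact Function.injective_id
    rw [show p = p - 1 + 1 by omega, Function.iterate_succ] at h1
    exact h1.of_comp
  have hnd : ∀ {k : ℕ} {z : Ch α}, z ∈ Sup (LP P k) → nd z ∈ Sup (LP P k) := fun hz =>
    Finsupp.supported_mono (fun l hl => hl.1) (nd_mem hz)
  have hG : ∀ k z, nd (bd (D p (mp φ) k z)) = D p (mp φ) k (nd (bd z)) := fun k z =>
    D_comm (F := nd ∘ₗ bd) (fun z => by simp [← mp_bd, nd_mp hinj]) k z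
  -- Descending induction on `k = N - j`: modulo boundaries, the chain is `D k` of something.
  have key : ∀ j k, k + j = N → ∃ b, ∃ w ∈ Sup (LP P (k + 1)),
      nd (c k) = nd (bd b) + D p (mp φ) k w := by
    intro j
    induction j with
    | zero =>
      rintro k rfl
      exact ⟨0, 0, Submodule.zero_mem _, by simpa using hN⟩
    | succ j ih =>
      intro k hk
      obtain ⟨b, w, hw, e⟩ := ih (k + 1) (by omega)
      have h1 : D p (mp φ) (k + 1) (nd (c k)) = D p (mp φ) (k + 1) (nd (bd w)) := by
        have h2 : nd (bd (nd (c (k + 1)))) = D p (mp φ) (k + 1) (nd (c k)) := by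
          rw [nd_bd_nd, hc.succ]
          exact D_comm (fun z => nd_mp hinj z) _ _
        rw [← h2, e, map_add, map_add, nd_bd_nd, bd_bd, map_zero, zero_add, hG]
      have h3 : nd (c k) - nd (bd w) ∈ Sup (LP P (k + 1)) :=
        Submodule.sub_mem _ (hnd (hP k (by omega))) (hnd (bd_mem_LP hw))
      obtain ⟨v, hv, e'⟩ := H.exact h3 k (by rw [map_sub, h1, sub_self])
      exact ⟨w, v, hv, by rw [← e']; abel⟩
  obtain ⟨b, w, hw, e⟩ := key N 0 (by omega)
  have h1 : nd (bd (nd (c 0))) = Finsupp.single [] 1 := by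
    rw [nd_bd_nd, hc.zero, nd_single_of (by simp)]
  rw [e, map_add, map_add, nd_bd_nd, bd_bd, map_zero, zero_add, hG] at h1
  have h2 : nd (bd w) = Finsupp.single [] (nd (bd w) []) := by
    have h3 := hnd (bd_mem_LP hw)
    ext l
    cases l with
    | nil => simp
    | cons a l =>
      rw [Finsupp.single_apply_eq_zero.2 (by simp)]
      by_contra h4
      have := (h3 (Finsupp.mem_support_iff.2 h4)).1
      simp at this
  rw [h2] at h1
  have h4 := DFunLike.congr_fun h1 []
  have h5 : ∀ m : ℤ, (D p (mp φ) 0 (Finsupp.single ([] : List α) m)) [] = p * m := by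
    intro m
    simp [D, mp_pow]
  rw [h5, Finsupp.single_eq_same] at h4
  have h6 : (p : ℤ) ∣ 1 := ⟨_, h4.symm⟩
  have h7 := Int.le_of_dvd one_pos h6
  omega

end Chains

/-! ### Barycentric subdivision -/

lemma sum_getElem {E : Type*} [AddCommMonoid E] (l : List E) :
    ∑ i : Fin l.length, l[i] = l.sum := Fin.sum_univ_getElem l

section Subdivision

variable {E : Type*} [NormedAddCommGroup E] [NormedSpace ℝ E]

/-- The barycentre of a list of points. -/
noncomputable def bary (l : List E) : E := (l.length : ℝ)⁻¹ • l.sum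

/-- All distances between points of the list are at most `d`. -/
def Diam (d : ℝ) (l : List E) : Prop := ∀ x ∈ l, ∀ y ∈ l, ‖x - y‖ ≤ d

lemma bary_map (φ : E →ₗ[ℝ] E) (l : List E) : bary (l.map φ) = φ (bary l) := by
  simp [bary, map_list_sum]

lemma bary_mem_convexHull {l : List E} (hl : l ≠ []) : bary l ∈ convexHull ℝ {x | x ∈ l} := by
  have hpos : (l.length : ℝ) ≠ 0 := by
    simpa using hl
  have e : bary l = ∑ i : Fin l.length, (l.length : ℝ)⁻¹ • l[i] := by
    rw [bary, ← Finset.smul_sum, sum_getElem]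
  rw [e]
  refine (convex_convexHull ℝ _).sum_mem (fun i _ => by positivity) ?_
    fun i _ => subset_convexHull ℝ _ (by simp)
  simp [hpos]

lemma norm_bary_sub_le {l : List E} {d : ℝ} {N : ℕ} (hd : Diam d l) (hN : l.length ≤ N + 1)
    {v : E} (hv : v ∈ l) : ‖bary l - v‖ ≤ N / (N + 1) * d := by
  have h0 : 0 ≤ d := (norm_nonneg _).trans (hd v hv v hv)
  have hpos : 0 < l.length := List.length_pos_of_mem hv
  have hpos' : (0 : ℝ) < l.length := by exact_mod_cast hpos
  obtain ⟨i₀, hi₀, rfl⟩ := List.getElem_of_mem hv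
  have e : bary l - l[i₀] = (l.length : ℝ)⁻¹ • ∑ i : Fin l.length, (l[i] - l[i₀]) := by
    rw [bary, Finset.sum_sub_distrib, sum_getElem, smul_sub]
    simp [← Nat.cast_smul_eq_nsmul ℝ, smul_smul, hpos'.ne']
  have h1 : ‖∑ i : Fin l.length, (l[i] - l[i₀])‖ ≤ (l.length - 1) * d := by
    rw [← Finset.sum_erase (a := (⟨i₀, hi₀⟩ : Fin l.length)) _ (by simp)]
    refine (norm_sum_le_of_le (f := fun i : Fin l.length => l[i] - l[i₀]) (n := fun _ => d) _
      fun i _ => hd _ (by simp) _ (by simp)).trans ?_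
    rw [Finset.sum_const, Finset.card_erase_of_mem (Finset.mem_univ _), Finset.card_univ,
      Fintype.card_fin, nsmul_eq_mul, Nat.cast_sub hpos]
    simp
  rw [e, norm_smul, norm_inv, Real.norm_natCast, inv_mul_le_iff₀ hpos']
  refine h1.trans ?_
  have hN' : (l.length : ℝ) ≤ N + 1 := by exact_mod_cast hN
  have : (l.length : ℝ) - 1 ≤ l.length * (N / (N + 1)) := by
    rw [mul_div_assoc', le_div_iff₀ (by positivity)]
    nlinarith
  calc ((l.length : ℝ) - 1) * d ≤ (l.length * (N / (N + 1))) * d :=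
        mul_le_mul_of_nonneg_right this h0
    _ = _ := by ring

/-- Barycentric subdivision stays in the convex hull and contracts diameters. -/
lemma sd_bary_mem (N k : ℕ) (l : List E) (hl : l.length = k) :
    sd bary k (Finsupp.single l 1) ∈ Sup fun l' : List E => l'.length = l.length ∧
      (∀ y ∈ l', y ∈ convexHull ℝ {x | x ∈ l}) ∧
      ∀ d, Diam d l → l.length ≤ N + 1 → Diam (N / (N + 1) * d) l' := by
  refine sd_mem (fun l l' : List E => l'.length = l.length ∧
      (∀ y ∈ l', y ∈ convexHull ℝ {x | x ∈ l}) ∧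
      ∀ d, Diam d l → l.length ≤ N + 1 → Diam (N / (N + 1) * d) l')
    ⟨rfl, by simp, by simp [Diam]⟩ ?_ k l hl
  rintro l m l' hml hlen ⟨h1, h2, h3⟩
  have hne : l ≠ [] := by rintro rfl; simp at hlen
  have hsub : convexHull ℝ {x | x ∈ m} ⊆ convexHull ℝ {x | x ∈ l} :=
    convexHull_mono fun x hx => hml.subset hx
  refine ⟨by simp [h1, hlen], ?_, ?_⟩
  · intro y hy
    rcases List.mem_cons.1 hy with rfl | hy
    · exact bary_mem_convexHull hne
    · exact hsub (h2 y hy)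
  · intro d hd hN
    have h0 : 0 ≤ d := by
      obtain ⟨x, hx⟩ := List.exists_mem_of_ne_nil l hne
      exact (norm_nonneg _).trans (hd x hx x hx)
    have hb : ∀ y ∈ l', ‖bary l - y‖ ≤ N / (N + 1) * d := by
      intro y hy
      have : convexHull ℝ {x | x ∈ l} ⊆ Metric.closedBall (bary l) (N / (N + 1) * d) := by
        refine convexHull_min (fun v hv => ?_) (convex_closedBall _ _)
        rw [Metric.mem_closedBall', dist_eq_norm]
        exact norm_bary_sub_le hd hN hv
      have := this (hsub (h2 y hy))
      rwa [Metric.mem_closedBall', dist_eq_norm] at this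
    have h4 := h3 d (fun x hx y hy => hd x (hml.subset hx) y (hml.subset hy)) (by omega)
    intro x hx y hy
    rcases List.mem_cons.1 hx with rfl | hx <;> rcases List.mem_cons.1 hy with rfl | hy
    · rw [sub_self, norm_zero]; positivity
    · exact hb y hy
    · rw [norm_sub_rev]; exact hb x hx
    · exact h4 x hx y hy

/-- Every tower can be refined to one with arbitrarily small simplices. -/
lemma exists_fine_tower {p : ℕ} (φ : E →ₗ[ℝ] E) {c : ℕ → Ch E} (hc : Tower p φ c) (N : ℕ)
    {Good : List E → Prop} {d : ℝ} (hdiam : ∀ l, Good l → Diam d l)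
    (hgood : ∀ l l', Good l → (∀ y ∈ l', y ∈ convexHull ℝ {x | x ∈ l}) → Good l')
    (hs : ∀ k ≤ N, c k ∈ Sup fun l => l.length = k + 1 ∧ Good l) {ε : ℝ} (hε : 0 < ε) :
    ∃ c' : ℕ → Ch E, Tower p φ c' ∧
      ∀ k ≤ N, c' k ∈ Sup fun l => l.length = k + 1 ∧ Good l ∧ Diam ε l := by
  have key : ∀ r : ℕ, ∃ c' : ℕ → Ch E, Tower p φ c' ∧
      ∀ k ≤ N, c' k ∈ Sup fun l => l.length = k + 1 ∧ Good l ∧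
        Diam ((N / (N + 1) : ℝ) ^ r * d) l := by
    intro r
    induction r with
    | zero =>
      refine ⟨c, hc, fun k hk => ?_⟩
      have hsub : {l : List E | l.length = k + 1 ∧ Good l} ⊆
          {l | l.length = k + 1 ∧ Good l ∧ Diam ((N / (N + 1) : ℝ) ^ 0 * d) l} :=
        fun l hl => ⟨hl.1, hl.2, by simpa using hdiam l hl.2⟩
      exact Finsupp.supported_mono hsub (hs k hk)
    | succ r ih =>
      obtain ⟨c', hc', h'⟩ := ih
      refine ⟨_, hc'.sd (bary_map φ), fun k hk => map_mem (fun l hl => ?_) (h' k hk)⟩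
      have hsub : {l' : List E | l'.length = l.length ∧
          (∀ y ∈ l', y ∈ convexHull ℝ {x | x ∈ l}) ∧
          ∀ d, Diam d l → l.length ≤ N + 1 → Diam (N / (N + 1) * d) l'} ⊆
          {l | l.length = k + 1 ∧ Good l ∧ Diam ((N / (N + 1) : ℝ) ^ (r + 1) * d) l} := by
        rintro l' ⟨h1, h2, h3⟩
        refine ⟨h1.trans hl.1, hgood l l' hl.2.1 h2, ?_⟩
        have := h3 _ hl.2.2 (by have := hl.1; omega)
        rwa [← mul_assoc, ← pow_succ'] at this
      exact Finsupp.supported_mono hsub (sd_bary_mem N _ l hl.1)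
  have hlt : (N / (N + 1) : ℝ) < 1 := by
    rw [div_lt_one (by positivity)]; linarith
  have ht : Filter.Tendsto (fun r : ℕ => (N / (N + 1) : ℝ) ^ r * d) Filter.atTop (nhds (0 * d)) :=
    (tendsto_pow_atTop_nhds_zero_of_lt_one (by positivity) hlt).mul_const d
  rw [zero_mul] at ht
  obtain ⟨r, hr⟩ := (ht.eventually (gt_mem_nhds hε)).exists
  obtain ⟨c', hc', h'⟩ := key r
  refine ⟨c', hc', fun k hk => ?_⟩
  have hsub : {l | l.length = k + 1 ∧ Good l ∧ Diam ((N / (N + 1) : ℝ) ^ r * d) l} ⊆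
      {l : List E | l.length = k + 1 ∧ Good l ∧ Diam ε l} :=
    fun l hl => ⟨hl.1, hl.2.1, fun x hx y hy => (hl.2.2 x hx y hy).trans hr.le⟩
  exact Finsupp.supported_mono hsub (h' k hk)

end Subdivision

/-! ### Labellings -/

section Labelling

variable {p n : ℕ}

/-- The cyclic shift of a set of labels. -/
def shift (S : Finset (Fin n × ZMod p)) : Finset (Fin n × ZMod p) :=
  S.map (Equiv.prodCongr (Equiv.refl _) (Equiv.addRight (1 : ZMod p))).toEmbedding

/-- A nonempty set of labels that contains no full row `{i} × ℤ/p`. -/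
def NoRow (S : Finset (Fin n × ZMod p)) : Prop := S.Nonempty ∧ ∀ i, ∃ j, (i, j) ∉ S

/-- The row of index `i` of a set of labels. -/
def rowOf (S : Finset (Fin n × ZMod p)) (i : Fin n) : Finset (ZMod p) :=
  (S.filter fun a => a.1 = i).image Prod.snd

lemma mem_rowOf {S : Finset (Fin n × ZMod p)} {i : Fin n} {j : ZMod p} :
    j ∈ rowOf S i ↔ (i, j) ∈ S := by
  simp only [rowOf, Finset.mem_image, Finset.mem_filter, Prod.exists, exists_eq_right]

lemma mem_shift {S : Finset (Fin n × ZMod p)} {i : Fin n} {j : ZMod p} :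
    (i, j + 1) ∈ shift S ↔ (i, j) ∈ S := by
  simp [shift]

lemma mem_shift' {S : Finset (Fin n × ZMod p)} {i : Fin n} {j : ZMod p} :
    (i, j) ∈ shift S ↔ (i, j - 1) ∈ S := by
  rw [← mem_shift (j := j - 1), sub_add_cancel]

lemma shift_iterate (m : ℕ) (S : Finset (Fin n × ZMod p)) (i : Fin n) (j : ZMod p) :
    (i, j) ∈ shift^[m] S ↔ (i, j - m) ∈ S := by
  induction m generalizing S with
  | zero => simp
  | succ m ih =>
    rw [Function.iterate_succ_apply, ih, mem_shift', Nat.cast_succ, sub_sub]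

lemma rowOf_shift (S : Finset (Fin n × ZMod p)) (i : Fin n) :
    rowOf (shift S) i = (rowOf S i).map (Equiv.addRight (1 : ZMod p)).toEmbedding := by
  ext j
  rw [mem_rowOf, mem_shift']
  simp [mem_rowOf, ← sub_eq_add_neg]

/-- The set of indices of nonempty rows. -/
def rows (S : Finset (Fin n × ZMod p)) : Finset (Fin n) := S.image Prod.fst

lemma rows_shift (S : Finset (Fin n × ZMod p)) : rows (shift S) = rows S := by
  ext i
  simp only [rows, Finset.mem_image, Prod.exists, exists_and_right, exists_eq_right]
  exact ⟨fun ⟨j, hj⟩ => ⟨j - 1, mem_shift'.1 hj⟩, fun ⟨j, hj⟩ => ⟨j + 1, mem_shift.2 hj⟩⟩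

open Classical in
/-- The average in `ℤ/p` of the first nonempty row of `S`. Its size is prime to `p` when the
row is not full, and the average then increases by one under the shift. -/
noncomputable def phase (S : Finset (Fin n × ZMod p)) : ZMod p :=
  if hS : (rows S).Nonempty then
    (∑ j ∈ rowOf S ((rows S).min' hS), j) * ((rowOf S ((rows S).min' hS)).card : ZMod p)⁻¹
  else 0

lemma phase_shift [Fact p.Prime] {S : Finset (Fin n × ZMod p)} (hS : NoRow S) :
    phase (shift S) = phase S + 1 := by
  have hne : (rows S).Nonempty := hS.1.image _
  rw [phase, phase]
  simp only [rows_shift, hne, dif_pos]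
  set i := (rows S).min' hne with hi
  have hcard : ((rowOf S i).card : ZMod p) ≠ 0 := by
    intro h0
    rw [ZMod.natCast_eq_zero_iff] at h0
    have h1 : (rowOf S i).Nonempty := by
      obtain ⟨⟨i', j⟩, ha, hi'⟩ := Finset.mem_image.1 ((rows S).min'_mem hne)
      exact ⟨j, mem_rowOf.2 (by rw [hi, ← hi']; exact ha)⟩
    obtain ⟨j, hj⟩ := hS.2 i
    have h2 : (rowOf S i).card < p := by
      have := Finset.card_lt_univ_of_notMem (mt mem_rowOf.1 hj)
      rwa [ZMod.card] at this
    exact absurd (Nat.le_of_dvd h1.card_pos h0) (by omega)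
  rw [rowOf_shift, Finset.sum_map, Finset.card_map]
  simp only [Equiv.coe_toEmbedding, Equiv.coe_addRight, Finset.sum_add_distrib, Finset.sum_const,
    nsmul_eq_mul, mul_one, add_mul]
  rw [mul_inv_cancel₀ hcard]

lemma shift_freeOn [Fact p.Prime] :
    FreeOn p (shift (p := p) (n := n)) NoRow fun S => (phase S).val where
  iter := by
    funext S; ext ⟨i, j⟩
    rw [shift_iterate]; simp
  map S hS := by
    refine ⟨by simpa [shift] using hS.1, fun i => ?_⟩
    obtain ⟨j, hj⟩ := hS.2 i
    exact ⟨j + 1, mt mem_shift.1 hj⟩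
  lt S _ := ZMod.val_lt _
  step S hS := by
    have := (Fact.out : p.Prime).one_lt
    rw [phase_shift hS, ZMod.val_add, ZMod.val_one]

lemma NoRow.card_le [Fact p.Prime] {S : Finset (Fin n × ZMod p)} (hS : NoRow S) :
    S.card ≤ n * (p - 1) := by
  have h1 : S.card = ∑ i : Fin n, (S.filter fun a => a.1 = i).card :=
    Finset.card_eq_sum_card_fiberwise fun _ _ => Finset.mem_coe.2 (Finset.mem_univ _)
  have h2 : ∀ i ∈ (Finset.univ : Finset (Fin n)), (S.filter fun a => a.1 = i).card ≤ p - 1 := by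
    intro i _
    have h3 : (S.filter fun a => a.1 = i).card = (rowOf S i).card := by
      refine (Finset.card_image_of_injOn ?_).symm
      rintro ⟨a, b⟩ h ⟨c, d⟩ h' (e : b = d)
      simp only [Finset.coe_filter, Set.mem_ofPred_eq] at h h'
      rw [e, h.2, h'.2]
    obtain ⟨j, hj⟩ := hS.2 i
    have := Finset.card_lt_univ_of_notMem (mt mem_rowOf.1 hj)
    rw [ZMod.card] at this
    omega
  rw [h1]
  simpa using Finset.sum_le_sum h2

/-- A strictly decreasing list of nonempty sets is at most as long as its first set is large. -/
lemma length_le_card : ∀ (l : List (Finset (Fin n × ZMod p))) (S : Finset (Fin n × ZMod p)),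
    (S :: l).Pairwise (fun S T => T ⊆ S) → (S :: l).IsChain (· ≠ ·) →
    (∀ T ∈ S :: l, T.Nonempty) → (S :: l).length ≤ S.card
  | [], S, _, _, h => by simpa using h S (by simp)
  | T :: l, S, h1, h2, h3 => by
    have ih := length_le_card l T h1.tail h2.tail fun U hU => h3 U (List.mem_cons_of_mem _ hU)
    have h4 : T ⊆ S := (List.pairwise_cons.1 h1).1 T (by simp)
    have h5 : S ≠ T := (List.isChain_cons_cons.1 h2).1
    have h6 := Finset.card_lt_card (h4.ssubset_of_ne h5.symm)
    simp only [List.length_cons] at ih ⊢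
    omega

open Classical in
/-- The set of all labels of the points of a list, for a labelling that may give several labels
to one point. -/
noncomputable def labels {E : Type*} [Fact p.Prime] (lab : E → Fin n × ZMod p → Prop)
    (l : List E) : Finset (Fin n × ZMod p) :=
  Finset.univ.filter fun a => ∃ x ∈ l, lab x a

/-- A combinatorial Borsuk–Ulam theorem for `ℤ/p` (of the type of the Tucker and Fan lemmas): in
an equivariant labelling of a tower of height `n (p - 1)`, some simplex receives all the labels
of some row. -/
theorem exists_full_row {E : Type*} [Fact p.Prime] {φ : E → E} {c : ℕ → Ch E} (hc : Tower p φ c)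
    {Q : List E → Prop} (hQ : ∀ k ≤ n * (p - 1), c k ∈ Sup fun l => l.length = k + 1 ∧ Q l)
    {lab : E → Fin n × ZMod p → Prop} (hlab : ∀ x i j, lab (φ x) (i, j + 1) ↔ lab x (i, j))
    (hex : ∀ l, Q l → ∀ x ∈ l, ∃ a, lab x a) :
    ∃ l, Q l ∧ ∃ i, ∀ j, ∃ x ∈ l, lab x (i, j) := by
  by_contra! hcon
  set b := labels (E := E) lab with hbdef
  have hb_mem : ∀ l a, a ∈ b l ↔ ∃ x ∈ l, lab x a := by
    intro l a; simp [hbdef, labels]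
  have hb : ∀ l, b (l.map φ) = shift (b l) := by
    intro l
    ext ⟨i, j⟩
    rw [mem_shift', hb_mem, hb_mem]
    simp only [List.mem_map, exists_exists_and_eq_and]
    refine exists_congr fun x => and_congr_right fun _ => ?_
    rw [← hlab x i (j - 1), sub_add_cancel]
  have hsd : ∀ (k : ℕ) (l : List E), l.length = k → sd b k (Finsupp.single l 1) ∈
      Sup fun l' => l'.length = l.length ∧ l'.Pairwise (fun S T => T ⊆ S) ∧
        ∀ S ∈ l', ∃ m : List E, m ≠ [] ∧ m ⊆ l ∧ S = b m := by
    refine sd_mem (fun (l : List E) l' => l'.length = l.length ∧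
      l'.Pairwise (fun S T => T ⊆ S) ∧ ∀ S ∈ l', ∃ m : List E, m ≠ [] ∧ m ⊆ l ∧ S = b m)
      ⟨rfl, List.Pairwise.nil, by simp⟩ ?_
    rintro l m l' hml hlen ⟨h1, h2, h3⟩
    refine ⟨by simp [h1, hlen], List.pairwise_cons.2 ⟨fun S hS => ?_, h2⟩, fun S hS => ?_⟩
    · obtain ⟨m', -, hm', rfl⟩ := h3 S hS
      intro a ha
      obtain ⟨x, hx, hxa⟩ := (hb_mem _ _).1 ha
      exact (hb_mem _ _).2 ⟨x, hml.subset (hm' hx), hxa⟩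
    · rcases List.mem_cons.1 hS with rfl | hS
      · exact ⟨l, by rintro rfl; simp at hlen, List.Subset.refl _, rfl⟩
      · obtain ⟨m', hm0, hm', rfl⟩ := h3 S hS
        exact ⟨m', hm0, fun x hx => hml.subset (hm' hx), rfl⟩
  have hsup : ∀ k ≤ n * (p - 1), sd b (k + 1) (c k) ∈
      Sup fun l' => LP NoRow (k + 1) l' ∧ l'.Pairwise (fun S T => T ⊆ S) := by
    intro k hk
    refine map_mem (fun l hl => ?_) (hQ k hk)
    refine Finsupp.supported_mono (fun l' hl' => ?_) (hsd (k + 1) l hl.1)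
    obtain ⟨h1, h2, h3⟩ := hl'
    refine ⟨⟨h1.trans hl.1, fun S hS => ?_⟩, h2⟩
    obtain ⟨m, hm0, hml, rfl⟩ := h3 S hS
    constructor
    · obtain ⟨x, hx⟩ := List.exists_mem_of_ne_nil m hm0
      obtain ⟨a, ha⟩ := hex l hl.2 x (hml hx)
      exact ⟨a, (hb_mem _ _).2 ⟨x, hx, ha⟩⟩
    · intro i
      obtain ⟨j, hj⟩ := hcon l hl.2 i
      refine ⟨j, fun hmem => ?_⟩
      obtain ⟨x, hx, hxa⟩ := (hb_mem _ _).1 hmem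
      exact hj x (hml hx) hxa
  refine (hc.sd hb).nd_ne_zero shift_freeOn (Fact.out : p.Prime).two_le (N := n * (p - 1))
    (fun k hk => Finsupp.supported_mono (fun l hl => hl.1) (hsup k hk)) ?_
  -- A strictly decreasing list of sets of labels without full rows is too short for the top level.
  have hempty := nd_mem (hsup _ le_rfl)
  rw [← Finsupp.support_eq_empty]
  by_contra hne
  obtain ⟨l, hl⟩ := Finset.nonempty_iff_ne_empty.2 hne
  obtain ⟨⟨⟨h1, h2⟩, h3⟩, h4⟩ := hempty hl
  cases l with
  | nil => simp at h1
  | cons S l =>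
    have h5 := length_le_card l S h3 h4 fun T hT => (h2 T hT).1
    have h6 := (h2 S (by simp)).card_le
    omega

end Labelling

/-! ### Zeros of equivariant maps -/

section Zeros

variable {p n : ℕ} [Fact p.Prime]

/-- The parameter space: a `p`-tuple of affine functions on `ℝⁿ`, each given by its `n + 1`
coefficients. -/
abbrev Param (p n : ℕ) : Type := ZMod p → Fin (n + 1) → ℝ

/-- The cyclic shift of a `p`-tuple of affine functions. -/
def rot (p n : ℕ) : Param p n →ₗ[ℝ] Param p n where
  toFun x j := x (j - 1)
  map_add' _ _ := rfl
  map_smul' _ _ := rfl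

lemma rot_iterate : (rot p n)^[p] = id := by
  have h : ∀ (m : ℕ) (x : Param p n) (j : ZMod p), (rot p n)^[m] x j = x (j - m) := by
    intro m
    induction m with
    | zero => simp
    | succ m ih =>
      intro x j
      rw [Function.iterate_succ_apply, ih]
      simp [rot, sub_sub]
  funext x j
  rw [h]; simp

/-- The standard simplex in the parameter space. -/
def stdPos (p n : ℕ) [Fact p.Prime] : Set (Param p n) :=
  {x | (∀ j r, 0 ≤ x j r) ∧ ∑ j, ∑ r, x j r = 1}

lemma convex_stdPos : Convex ℝ (stdPos p n) := by
  rintro x ⟨hx, hx1⟩ y ⟨hy, hy1⟩ a b ha hb hab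
  refine ⟨fun j r => ?_, ?_⟩
  · have := hx j r; have := hy j r
    simp only [Pi.add_apply, Pi.smul_apply, smul_eq_mul]
    positivity
  · simp only [Pi.add_apply, Pi.smul_apply, smul_eq_mul, Finset.sum_add_distrib,
      ← Finset.mul_sum, hx1, hy1, mul_one, hab]

/-- The lists of points that span a simplex in the join of the boundary complexes of `n + 1`
simplices with `p` vertices: for every coefficient `r`, one of the `p` functions has vanishing
`r`-th coefficient on the whole list. -/
def GoodList (l : List (Param p n)) : Prop :=
  (∀ x ∈ l, x ∈ stdPos p n) ∧ ∀ r, ∃ j, ∀ x ∈ l, x j r = 0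

/-- The union of the simplices spanned by good lists. In particular, the `p` functions are not
all equal. -/
def GoodSet (p n : ℕ) [Fact p.Prime] : Set (Param p n) :=
  stdPos p n ∩ {x | ∀ r, ∃ j, x j r = 0}

lemma GoodList.mem {l : List (Param p n)} (hl : GoodList l) {x : Param p n} (hx : x ∈ l) :
    x ∈ GoodSet p n :=
  ⟨hl.1 x hx, fun r => (hl.2 r).imp fun _ hj => hj x hx⟩

lemma GoodList.hull {l l' : List (Param p n)} (hl : GoodList l)
    (h : ∀ y ∈ l', y ∈ convexHull ℝ {x | x ∈ l}) : GoodList l' := by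
  refine ⟨fun y hy => convexHull_min (fun x hx => hl.1 x hx) convex_stdPos (h y hy), fun r => ?_⟩
  obtain ⟨j, hj⟩ := hl.2 r
  refine ⟨j, fun y hy => ?_⟩
  have hconv : Convex ℝ {x : Param p n | x j r = 0} := by
    intro x hx y hy a b _ _ _
    simp only [Set.mem_ofPred_eq] at hx hy ⊢
    simp [hx, hy]
  exact convexHull_min (fun x hx => hj x hx) hconv (h y hy)

lemma le_one_of_mem_stdPos {x : Param p n} (hx : x ∈ stdPos p n) (j : ZMod p) (r : Fin (n + 1)) :
    x j r ≤ 1 := by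
  rw [← hx.2]
  calc x j r ≤ ∑ r, x j r := Finset.single_le_sum (f := fun r => x j r)
        (fun r _ => hx.1 j r) (Finset.mem_univ r)
    _ ≤ _ := Finset.single_le_sum (f := fun j => ∑ r, x j r)
        (fun j _ => Finset.sum_nonneg fun r _ => hx.1 j r) (Finset.mem_univ j)

lemma isCompact_goodSet : IsCompact (GoodSet p n) := by
  have hc : ∀ (j : ZMod p) (r : Fin (n + 1)), Continuous fun x : Param p n => x j r := fun j r => by
    fun_prop
  refine (isCompact_Icc (a := (0 : Param p n)) (b := 1)).of_isClosed_subset ?_ ?_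
  · have e : GoodSet p n = ({x | ∀ j r, 0 ≤ x j r} ∩ {x | ∑ j, ∑ r, x j r = 1}) ∩
        ⋂ r, ⋃ j, {x : Param p n | x j r = 0} := by
      ext x
      simp [GoodSet, stdPos]
    rw [e]
    refine IsClosed.inter (IsClosed.inter ?_ ?_) ?_
    · simp only [Set.ofPred_forall]
      exact isClosed_iInter fun j => isClosed_iInter fun r =>
        isClosed_le continuous_const (hc j r)
    · exact isClosed_eq (by fun_prop) continuous_const
    · exact isClosed_iInter fun r => isClosed_iUnion_of_finite fun j =>
        isClosed_eq (hc j r) continuous_const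
  · intro x hx
    exact ⟨fun j r => hx.1.1 j r, fun j r => le_one_of_mem_stdPos hx.1 j r⟩

lemma GoodList.diam {l : List (Param p n)} (hl : GoodList l) : Diam 1 l := by
  intro x hx y hy
  rw [pi_norm_le_iff_of_nonneg zero_le_one]
  intro j
  rw [pi_norm_le_iff_of_nonneg zero_le_one]
  intro r
  have h1 := le_one_of_mem_stdPos (hl.1 x hx) j r
  have h2 := le_one_of_mem_stdPos (hl.1 y hy) j r
  have h3 := (hl.1 x hx).1 j r
  have h4 := (hl.1 y hy).1 j r
  rw [Pi.sub_apply, Pi.sub_apply, Real.norm_eq_abs, abs_le]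
  constructor <;> linarith

/-- The vertex with group element `a` in the `k`-th orbit: the `a`-th function has a single nonzero
coefficient, of index `k / (p - 1)`, and the others vanish. Each coefficient thus serves only `p - 1`
orbits, so a simplex with one vertex from each orbit misses one of the `p` functions. -/
def vert (p n : ℕ) (a : ZMod p) (k : ℕ) : Param p n :=
  fun j r => if j = a ∧ (r : ℕ) = k / (p - 1) then 1 else 0

lemma rot_vert (a : ZMod p) (k : ℕ) : rot p n (vert p n a k) = vert p n (a + 1) k := by
  funext j r
  simp [rot, vert, sub_eq_iff_eq_add]

lemma vert_mem {a : ZMod p} {k : ℕ} (hk : k ≤ n * (p - 1)) : vert p n a k ∈ stdPos p n := by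
  have hp := (Fact.out : p.Prime).two_le
  have hr : k / (p - 1) < n + 1 := by
    have : k / (p - 1) ≤ n := Nat.div_le_of_le_mul (by rwa [mul_comm])
    omega
  refine ⟨fun j r => by unfold vert; positivity, ?_⟩
  rw [Finset.sum_eq_single a, Finset.sum_eq_single ⟨k / (p - 1), hr⟩]
  · simp [vert]
  · intro r _ hne
    have : (r : ℕ) ≠ k / (p - 1) := fun h => hne (Fin.ext h)
    simp [vert, this]
  · simp
  · intro j _ hne
    simp [vert, hne]
  · simp

/-- The shape of the simplices in the join tower: at most one vertex from each of the first
`k + 1` orbits. -/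
def Joined (k : ℕ) (l : List (Param p n)) : Prop :=
  l.length = k + 1 ∧ ∃ a : ℕ → ZMod p, ∀ x ∈ l, ∃ i ≤ k, x = vert p n (a i) i

lemma joined_joinTower (k : ℕ) :
    joinTower p (rot p n) (vert p n 0) k ∈ Sup (Joined (p := p) (n := n) k) := by
  induction k with
  | zero => exact single_mem ⟨rfl, fun _ => 0, by simp⟩ _
  | succ k ih =>
    have h1 := D_mem (p := p) (G := mp (rot p n)) (S := Sup (Joined (p := p) (n := n) k))
      (fun z hz => map_mem (fun l hl => ?_) hz) (k + 1) ih
    · refine map_mem (fun l hl => ?_) h1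
      rw [cone_single]
      obtain ⟨hl1, a, ha⟩ := hl
      refine single_mem ⟨by simp [hl1], fun i => if i ≤ k then a i else 0, fun x hx => ?_⟩ _
      rcases List.mem_cons.1 hx with rfl | hx
      · exact ⟨k + 1, le_rfl, by simp⟩
      · obtain ⟨i, hi, rfl⟩ := ha x hx
        exact ⟨i, by omega, by simp [hi]⟩
    · obtain ⟨hl1, a, ha⟩ := hl
      rw [mp_single]
      refine single_mem ⟨by simpa using hl1, fun i => a i + 1, fun x hx => ?_⟩ _
      obtain ⟨y, hy, rfl⟩ := List.mem_map.1 hx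
      obtain ⟨i, hi, rfl⟩ := ha y hy
      exact ⟨i, hi, rot_vert _ _⟩

lemma Joined.good {k : ℕ} (hk : k ≤ n * (p - 1)) {l : List (Param p n)} (hl : Joined k l) :
    GoodList l := by
  have hp := (Fact.out : p.Prime).two_le
  obtain ⟨-, a, ha⟩ := hl
  constructor
  · intro x hx
    obtain ⟨i, hi, rfl⟩ := ha x hx
    exact vert_mem (hi.trans hk)
  · intro r
    set T : Finset (ZMod p) := (Finset.Ico (r * (p - 1)) ((r + 1) * (p - 1))).image a
    have hT : T.card < (Finset.univ : Finset (ZMod p)).card := by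
      refine Finset.card_image_le.trans_lt ?_
      rw [Nat.card_Ico, Finset.card_univ, ZMod.card, ← Nat.sub_mul]
      simp; omega
    obtain ⟨j, -, hj⟩ := Finset.exists_mem_notMem_of_card_lt_card hT
    refine ⟨j, fun x hx => ?_⟩
    obtain ⟨i, hi, rfl⟩ := ha x hx
    refine if_neg ?_
    rintro ⟨rfl, hr⟩
    refine hj (Finset.mem_image_of_mem a (Finset.mem_Ico.2 ?_))
    rw [hr]
    have h1 := Nat.div_add_mod i (p - 1)
    have h2 := Nat.mod_lt i (show p - 1 > 0 by omega)
    exact ⟨Nat.div_mul_le_self _ _, by nlinarith⟩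

/-- An equivariant map from the parameter space to `n` copies of the reduced regular
representation of `ℤ/p` has a zero on `GoodSet p n`. -/
theorem exists_zero (hn : 0 < n) (y : Param p n → Fin n → ZMod p → ℝ) (hy : Continuous y)
    (hsum : ∀ x i, ∑ j, y x i j = 0) (heq : ∀ x i j, y (rot p n x) i (j + 1) = y x i j) :
    ∃ x ∈ GoodSet p n, y x = 0 := by
  by_contra! hcon
  have : Nonempty (Fin n) := ⟨⟨0, hn⟩⟩
  set F : Param p n → ℝ := fun x =>
    Finset.univ.sup' Finset.univ_nonempty fun a : Fin n × ZMod p => y x a.1 a.2 with hF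
  have hFle : ∀ x i j, y x i j ≤ F x := fun x i j =>
    Finset.le_sup' (fun a : Fin n × ZMod p => y x a.1 a.2) (Finset.mem_univ (i, j))
  have hFc : Continuous F := by
    refine Continuous.finset_sup'_apply _ fun a _ => ?_
    fun_prop
  have hFpos : ∀ x ∈ GoodSet p n, 0 < F x := by
    intro x hx
    by_contra! hle
    refine hcon x hx ?_
    funext i j
    have h1 : ∀ j ∈ Finset.univ, 0 ≤ - y x i j := fun j _ => by
      have := hFle x i j; linarith
    have h2 := (Finset.sum_eq_zero_iff_of_nonneg h1).1 (by simp [hsum])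
    simpa using h2 j (Finset.mem_univ j)
  obtain ⟨m, hm0, hm⟩ := isCompact_goodSet.exists_forall_le' hFc.continuousOn hFpos
  obtain ⟨δ, hδ, hu⟩ := Metric.uniformContinuousOn_iff.1
    (isCompact_goodSet.uniformContinuousOn_of_continuous hy.continuousOn) m hm0
  obtain ⟨c, hc, hcs⟩ := exists_fine_tower (rot p n)
    (joinTower_tower (rot_iterate (p := p) (n := n)) (vert p n 0)) (n * (p - 1))
    (Good := GoodList) (fun l hl => hl.diam) (fun l l' hl h => hl.hull h)
    (fun k hk => Finsupp.supported_mono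
      (fun l hl => (⟨hl.1, Joined.good hk hl⟩ : l.length = k + 1 ∧ GoodList l))
      (joined_joinTower k)) (half_pos hδ)
  -- A point receives all the labels `(i, j)` at which its value is maximal.
  obtain ⟨l, ⟨hl, hd⟩, i, hi⟩ := exists_full_row hc hcs
    (lab := fun x a => ∀ i' j', y x i' j' ≤ y x a.1 a.2)
    (fun x i j => by
      constructor
      · intro h i' j'
        simpa [heq] using h i' (j' + 1)
      · intro h i' j'
        have := h i' (j' - 1)
        rwa [← heq x i j, ← heq x i' (j' - 1), sub_add_cancel] at this)
    (fun l hl x hx => by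
      obtain ⟨a, -, ha⟩ := Finset.exists_mem_eq_sup' Finset.univ_nonempty
        fun a : Fin n × ZMod p => y x a.1 a.2
      exact ⟨a, fun i' j' => (hFle x i' j').trans ha.le⟩)
  obtain ⟨x₀, hx₀, -⟩ := hi 0
  have hpos : ∀ j ∈ Finset.univ, 0 < y x₀ i j := by
    intro j _
    obtain ⟨x, hx, hxj⟩ := hi j
    have h1 : F x ≤ y x i j := Finset.sup'_le _ _ fun a _ => hxj a.1 a.2
    have h2 := hm x (hl.mem hx)
    have h3 : dist (y x) (y x₀) < m := by
      refine hu x (hl.mem hx) x₀ (hl.mem hx₀) ?_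
      rw [dist_eq_norm]
      linarith [hd x hx x₀ hx₀]
    have h4 := (dist_le_pi_dist (y x i) (y x₀ i) j).trans (dist_le_pi_dist (y x) (y x₀) i)
    rw [Real.dist_eq] at h4
    have h5 := le_abs_self (y x i j - y x₀ i j)
    linarith
  exact (Finset.sum_pos hpos Finset.univ_nonempty).ne' (hsum x₀ i)

end Zeros

/-! ### Softened convex partitions -/

section Softmax

variable {p n : ℕ}

/-- The affine function on `ℝⁿ` with coefficients `a`; the last one is the constant term. -/
def aff (a : Fin (n + 1) → ℝ) (ξ : EuclideanSpace ℝ (Fin n)) : ℝ :=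
  ∑ r : Fin n, a r.castSucc * ξ r + a (Fin.last n)

lemma continuous_aff : Continuous fun z : (Fin (n + 1) → ℝ) × EuclideanSpace ℝ (Fin n) =>
    aff z.1 z.2 := by
  unfold aff
  fun_prop

lemma continuous_aff_left (ξ : EuclideanSpace ℝ (Fin n)) : Continuous fun a => aff a ξ :=
  continuous_aff.comp (by fun_prop : Continuous fun a : Fin (n + 1) → ℝ => (a, ξ))

lemma continuous_aff_right (a : Fin (n + 1) → ℝ) : Continuous (aff a) :=
  continuous_aff.comp
    (by fun_prop : Continuous fun ξ : EuclideanSpace ℝ (Fin n) => (a, ξ))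

lemma aff_sub (a b : Fin (n + 1) → ℝ) (ξ : EuclideanSpace ℝ (Fin n)) :
    aff (a - b) ξ = aff a ξ - aff b ξ := by
  simp only [aff, Pi.sub_apply, sub_mul, Finset.sum_sub_distrib]; ring

lemma aff_comb (a : Fin (n + 1) → ℝ) {s t : ℝ} (hst : s + t = 1)
    (ξ η : EuclideanSpace ℝ (Fin n)) : aff a (s • ξ + t • η) = s * aff a ξ + t * aff a η := by
  have h : ∀ r : Fin n, a r.castSucc * (s • ξ + t • η) r =
      s * (a r.castSucc * ξ r) + t * (a r.castSucc * η r) := by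
    intro r; simp; ring
  simp only [aff, h, Finset.sum_add_distrib, ← Finset.mul_sum]
  linear_combination (-a (Fin.last n)) * hst

/-- The zero set of a nonzero affine function is a hyperplane or empty, hence null. -/
lemma volume_aff_eq_zero {c : Fin (n + 1) → ℝ} (hc : c ≠ 0) :
    volume {ξ : EuclideanSpace ℝ (Fin n) | aff c ξ = 0} = 0 := by
  let S : AffineSubspace ℝ (EuclideanSpace ℝ (Fin n)) :=
    { carrier := {ξ | aff c ξ = 0}
      smul_vsub_vadd_mem' := by
        intro t a b d ha hb hd
        have e : aff c (t • (a -ᵥ b) +ᵥ d) = t * aff c a - t * aff c b + aff c d := by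
          have h : ∀ r : Fin n, c r.castSucc * (t • (a -ᵥ b) +ᵥ d) r =
              t * (c r.castSucc * a r) - t * (c r.castSucc * b r) + c r.castSucc * d r := by
            intro r; simp; ring
          simp only [aff, h, Finset.sum_add_distrib, Finset.sum_sub_distrib, ← Finset.mul_sum]
          ring
        simp only [Set.mem_ofPred_eq] at ha hb hd ⊢
        rw [e, ha, hb, hd]
        ring }
  refine Measure.addHaar_affineSubspace volume S fun htop => hc ?_
  have h : ∀ ξ, aff c ξ = 0 := by
    intro ξ
    have : ξ ∈ S := by rw [htop]; trivial
    exact this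
  have hlast : c (Fin.last n) = 0 := by simpa [aff] using h 0
  funext r
  refine Fin.lastCases hlast (fun r => ?_) r
  have := h (EuclideanSpace.single r 1)
  simpa [aff, hlast, Finset.sum_ite_eq] using this

lemma volume_aff_eq {a b : Fin (n + 1) → ℝ} (hab : a ≠ b) :
    volume {ξ : EuclideanSpace ℝ (Fin n) | aff a ξ = aff b ξ} = 0 := by
  have := volume_aff_eq_zero (sub_ne_zero.2 hab)
  simpa only [aff_sub, sub_eq_zero] using this

/-- The closed convex cell on which the affine function `v` dominates all the `x k`. -/
def cell (x : Param p n) (v : Fin (n + 1) → ℝ) : Set (EuclideanSpace ℝ (Fin n)) :=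
  {ξ | ∀ k, aff (x k) ξ ≤ aff v ξ}

lemma isClosed_cell (x : Param p n) (v : Fin (n + 1) → ℝ) : IsClosed (cell x v) := by
  simp only [cell, Set.ofPred_forall]
  exact isClosed_iInter fun k => isClosed_le (continuous_aff_right _) (continuous_aff_right _)

lemma convex_cell (x : Param p n) (v : Fin (n + 1) → ℝ) : Convex ℝ (cell x v) := by
  intro ξ hξ η hη s t hs ht hst k
  rw [aff_comb _ hst, aff_comb _ hst]
  exact add_le_add (mul_le_mul_of_nonneg_left (hξ k) hs) (mul_le_mul_of_nonneg_left (hη k) ht)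

variable [Fact p.Prime]

/-- The softened indicator functions (softmax at inverse temperature `T`) of the cells on which
the affine functions `x j` are maximal. -/
noncomputable def soft (T : ℝ) (x : Param p n) (ξ : EuclideanSpace ℝ (Fin n)) (j : ZMod p) : ℝ :=
  Real.exp (T * aff (x j) ξ) / ∑ k, Real.exp (T * aff (x k) ξ)

lemma sum_exp_pos (T : ℝ) (x : Param p n) (ξ : EuclideanSpace ℝ (Fin n)) :
    0 < ∑ k, Real.exp (T * aff (x k) ξ) :=
  Finset.sum_pos (fun _ _ => Real.exp_pos _) Finset.univ_nonempty

lemma soft_nonneg (T : ℝ) (x : Param p n) (ξ : EuclideanSpace ℝ (Fin n)) (j : ZMod p) :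
    0 ≤ soft T x ξ j := div_nonneg (Real.exp_pos _).le (sum_exp_pos T x ξ).le

lemma sum_soft (T : ℝ) (x : Param p n) (ξ : EuclideanSpace ℝ (Fin n)) :
    ∑ j, soft T x ξ j = 1 := by
  simp only [soft, ← Finset.sum_div]
  exact div_self (sum_exp_pos T x ξ).ne'

lemma soft_le_one (T : ℝ) (x : Param p n) (ξ : EuclideanSpace ℝ (Fin n)) (j : ZMod p) :
    soft T x ξ j ≤ 1 := by
  rw [← sum_soft T x ξ]
  exact Finset.single_le_sum (fun j _ => soft_nonneg T x ξ j) (Finset.mem_univ j)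

lemma soft_le_exp (T : ℝ) (x : Param p n) (ξ : EuclideanSpace ℝ (Fin n)) (j k : ZMod p) :
    soft T x ξ j ≤ Real.exp (T * (aff (x j) ξ - aff (x k) ξ)) := by
  rw [soft, div_le_iff₀ (sum_exp_pos T x ξ), mul_sub, Real.exp_sub, div_mul_eq_mul_div,
    le_div_iff₀ (Real.exp_pos _)]
  refine mul_le_mul_of_nonneg_left ?_ (Real.exp_pos _).le
  exact Finset.single_le_sum (f := fun k => Real.exp (T * aff (x k) ξ))
    (fun k _ => (Real.exp_pos _).le) (Finset.mem_univ k)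

lemma continuous_soft (T : ℝ) (j : ZMod p) :
    Continuous fun z : Param p n × EuclideanSpace ℝ (Fin n) => soft T z.1 z.2 j := by
  have h : ∀ k : ZMod p, Continuous fun z : Param p n × EuclideanSpace ℝ (Fin n) =>
      aff (z.1 k) z.2 := fun k => continuous_aff.comp
    (by fun_prop : Continuous fun z : Param p n × EuclideanSpace ℝ (Fin n) => (z.1 k, z.2))
  unfold soft
  exact Continuous.div (by fun_prop) (by fun_prop) fun z => (sum_exp_pos T z.1 z.2).ne'

/-- The softened cells are permuted cyclically along with the affine functions. -/
lemma soft_rot (T : ℝ) (x : Param p n) (ξ : EuclideanSpace ℝ (Fin n)) (j : ZMod p) :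
    soft T (rot p n x) ξ (j + 1) = soft T x ξ j := by
  have h1 : ∀ k, rot p n x k = x (k - 1) := fun _ => rfl
  simp only [soft, h1, add_sub_cancel_right]
  congr 1
  exact Equiv.sum_comp (Equiv.subRight (1 : ZMod p)) fun k => Real.exp (T * aff (x k) ξ)

lemma integrable_soft (μ : Measure (EuclideanSpace ℝ (Fin n))) [IsProbabilityMeasure μ] (T : ℝ)
    (x : Param p n) (j : ZMod p) : Integrable (fun ξ => soft T x ξ j) μ := by
  refine Integrable.of_bound (C := 1) ?_ (Filter.Eventually.of_forall fun ξ => ?_)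
  · exact ((continuous_soft T j).comp (by fun_prop :
      Continuous fun ξ : EuclideanSpace ℝ (Fin n) => (x, ξ))).aestronglyMeasurable
  · rw [Real.norm_eq_abs, abs_of_nonneg (soft_nonneg _ _ _ _)]
    exact soft_le_one _ _ _ _

/-- For every `T` there are parameters that split all the measures equally in the softened sense. -/
lemma exists_soft_split (hn : 0 < n) (μs : Fin n → Measure (EuclideanSpace ℝ (Fin n)))
    [∀ i, IsProbabilityMeasure (μs i)] (T : ℝ) :
    ∃ x ∈ GoodSet p n, ∀ i j, ∫ ξ, soft T x ξ j ∂(μs i) = 1 / p := by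
  have hp : (p : ℝ) ≠ 0 := by exact_mod_cast (Fact.out : p.Prime).ne_zero
  let y : Param p n → Fin n → ZMod p → ℝ := fun x i j => ∫ ξ, soft T x ξ j ∂(μs i) - 1 / p
  have hcont : Continuous y := by
    refine continuous_pi fun i => continuous_pi fun j => Continuous.sub ?_ continuous_const
    refine continuous_of_dominated (bound := fun _ => 1) ?_ ?_ (integrable_const 1) ?_
    · exact fun x => (integrable_soft (μs i) T x j).aestronglyMeasurable
    · refine fun x => Filter.Eventually.of_forall fun ξ => ?_
      rw [Real.norm_eq_abs, abs_of_nonneg (soft_nonneg _ _ _ _)]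
      exact soft_le_one _ _ _ _
    · exact Filter.Eventually.of_forall fun ξ => (continuous_soft T j).comp
        (by fun_prop : Continuous fun x : Param p n => (x, ξ))
  have hsum : ∀ x i, ∑ j, y x i j = 0 := by
    intro x i
    simp only [y]
    rw [Finset.sum_sub_distrib, ← integral_finsetSum _ fun j _ => integrable_soft (μs i) T x j]
    simp [sum_soft, hp]
  obtain ⟨x, hx, h⟩ := exists_zero hn y hcont hsum fun x i j => by simp only [y, soft_rot]
  exact ⟨x, hx, fun i j => sub_eq_zero.1 (congrFun (congrFun h i) j)⟩

/-! ### The hard limit -/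

open Filter Topology in
lemma tendsto_soft_zero {x : ℕ → Param p n} {x₀ : Param p n} (hx : Tendsto x atTop (𝓝 x₀))
    {T : ℕ → ℝ} (hT : Tendsto T atTop atTop) {ξ : EuclideanSpace ℝ (Fin n)} {j k : ZMod p}
    (h : aff (x₀ j) ξ < aff (x₀ k) ξ) :
    Tendsto (fun m => soft (T m) (x m) ξ j) atTop (𝓝 0) := by
  have h1 : ∀ k, Tendsto (fun m => aff (x m k) ξ) atTop (𝓝 (aff (x₀ k) ξ)) := fun k =>
    ((continuous_aff_left ξ).tendsto _).comp (tendsto_pi_nhds.1 hx k)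
  have h2 := hT.atTop_mul_neg (sub_neg.2 h) ((h1 j).sub (h1 k))
  exact tendsto_of_tendsto_of_tendsto_of_le_of_le tendsto_const_nhds
    (Real.tendsto_exp_atBot.comp h2) (fun m => soft_nonneg _ _ _ _) fun m => soft_le_exp _ _ _ _ _

open Classical in
/-- The number of indices at which the value `v` is taken. -/
noncomputable def mult (x : Param p n) (v : Fin (n + 1) → ℝ) : ℕ :=
  (Finset.univ.filter fun k => x k = v).card

open Filter Topology in
/-- Some tuple of affine functions, not all equal, gives each of its cells a mass proportional
to its multiplicity. -/
theorem exists_split (hn : 0 < n) (μs : Fin n → Measure (EuclideanSpace ℝ (Fin n)))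
    [∀ i, IsProbabilityMeasure (μs i)] (hac : ∀ i, μs i ≪ volume) :
    ∃ x ∈ GoodSet p n, ∀ i j, (μs i).real (cell x (x j)) = mult x (x j) / p := by
  classical
  choose x hxG hx using fun m : ℕ => exists_soft_split (p := p) hn μs (m : ℝ)
  obtain ⟨x₀, hx₀, φ, hφ, hlim⟩ := isCompact_goodSet.tendsto_subseq hxG
  refine ⟨x₀, hx₀, fun i j => ?_⟩
  set A : Finset (ZMod p) := Finset.univ.filter fun k => x₀ k = x₀ j with hA
  have hT : Tendsto (fun m => (φ m : ℝ)) atTop atTop :=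
    tendsto_natCast_atTop_atTop.comp hφ.tendsto_atTop
  set g : ℕ → EuclideanSpace ℝ (Fin n) → ℝ := fun m ξ => ∑ k ∈ A, soft (φ m) (x (φ m)) ξ k
  have hg : ∀ m, ∫ ξ, g m ξ ∂(μs i) = mult x₀ (x₀ j) / p := by
    intro m
    rw [integral_finsetSum _ fun k _ => integrable_soft (μs i) _ _ k]
    simp [hx, mult, hA, div_eq_mul_inv]
  have hgint : ∀ m, Integrable (g m) (μs i) := fun m =>
    integrable_finsetSum _ fun k _ => integrable_soft (μs i) _ _ k
  have hties : ∀ᵐ ξ ∂(μs i), ∀ k, x₀ k ≠ x₀ j → aff (x₀ k) ξ ≠ aff (x₀ j) ξ := by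
    have hvol : ∀ᵐ ξ ∂(volume : Measure (EuclideanSpace ℝ (Fin n))),
        ∀ k, x₀ k ≠ x₀ j → aff (x₀ k) ξ ≠ aff (x₀ j) ξ := by
      rw [ae_all_iff]
      intro k
      by_cases hk : x₀ k = x₀ j
      · exact Eventually.of_forall fun ξ h => absurd hk h
      · have := volume_aff_eq hk
        rw [← compl_mem_ae_iff] at this
        filter_upwards [this] with ξ hξ _ using hξ
    exact (hac i).ae_le hvol
  have hpt : ∀ᵐ ξ ∂(μs i), Tendsto (fun m => g m ξ) atTop
      (𝓝 ((cell x₀ (x₀ j)).indicator (fun _ => (1 : ℝ)) ξ)) := by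
    filter_upwards [hties] with ξ hξ
    by_cases hmem : ξ ∈ cell x₀ (x₀ j)
    · rw [Set.indicator_of_mem hmem]
      have h1 : ∀ m, g m ξ = 1 - ∑ k ∈ Aᶜ, soft (φ m) (x (φ m)) ξ k := by
        intro m
        rw [← sum_soft (φ m) (x (φ m)) ξ, ← Finset.sum_add_sum_compl A, add_sub_cancel_right]
      have h2 : Tendsto (fun m => ∑ k ∈ Aᶜ, soft (φ m) (x (φ m)) ξ k) atTop (𝓝 (∑ k ∈ Aᶜ, 0)) := by
        refine tendsto_finsetSum _ fun k hk => ?_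
        have hk' : x₀ k ≠ x₀ j := by simpa [hA] using hk
        exact tendsto_soft_zero hlim hT (lt_of_le_of_ne (hmem k) (hξ k hk'))
      simp only [h1]
      simpa using h2.const_sub 1
    · rw [Set.indicator_of_notMem hmem]
      simp only [cell, Set.mem_ofPred_eq, not_forall, not_le] at hmem
      obtain ⟨k', hk'⟩ := hmem
      have h2 : Tendsto (fun m => g m ξ) atTop (𝓝 (∑ k ∈ A, 0)) := by
        refine tendsto_finsetSum _ fun k hk => ?_
        have hk1 : x₀ k = x₀ j := by simpa [hA] using hk
        exact tendsto_soft_zero hlim hT (k := k') (by rwa [hk1])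
      simpa using h2
  have h3 : Tendsto (fun m => ∫ ξ, g m ξ ∂(μs i)) atTop
      (𝓝 (∫ ξ, (cell x₀ (x₀ j)).indicator (fun _ => (1 : ℝ)) ξ ∂(μs i))) := by
    refine tendsto_integral_of_dominated_convergence (fun _ => 1)
      (fun m => (hgint m).aestronglyMeasurable) (integrable_const 1) (fun m => ?_) hpt
    refine Eventually.of_forall fun ξ => ?_
    rw [Real.norm_eq_abs, abs_of_nonneg (Finset.sum_nonneg fun k _ => soft_nonneg _ _ _ _),
      ← sum_soft (φ m) (x (φ m)) ξ]
    exact Finset.sum_le_sum_of_subset_of_nonneg (Finset.subset_univ A)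
      fun k _ _ => soft_nonneg _ _ _ _
  simp only [hg] at h3
  have h4 := tendsto_nhds_unique h3 tendsto_const_nhds
  rw [integral_indicator_const _ (isClosed_cell _ _).measurableSet] at h4
  simpa using h4

end Softmax

/-! ### Induction on the number of parts -/

/-- A point of `GoodSet` whose functions all coincide would have only zero coefficients, contrary
to the normalization of their sum. -/
lemma mult_lt {p n : ℕ} [Fact p.Prime] {x : Param p n} (hx : x ∈ GoodSet p n)
    (v : Fin (n + 1) → ℝ) : mult x v < p := by
  classical
  by_contra! hle
  have h1 : (Finset.univ.filter fun k => x k = v) = Finset.univ := by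
    rw [← Finset.card_eq_iff_eq_univ, ZMod.card]
    refine le_antisymm ?_ (hle.trans (le_of_eq (by unfold mult; congr)))
    simpa [ZMod.card] using Finset.card_le_univ (Finset.univ.filter fun k => x k = v)
  have h2 : ∀ k, x k = v := by simpa [Finset.filter_eq_self] using h1
  have h3 : ∀ j r, x j r = 0 := by
    intro j r
    obtain ⟨k, hk⟩ := hx.2 r
    rw [h2 j, ← h2 k, hk]
  have h4 := hx.1.2
  simp [h3] at h4

/-- The partition with `q = p * s` parts, `p` prime: a cell of multiplicity `m < p` has mass
`m / p` for every measure, and the conditional measures in it are split into `m * s < q` parts. -/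
theorem equipartition {n : ℕ} (hn : 0 < n) (q : ℕ) (hq : 1 ≤ q) :
    ∀ (μs : Fin n → Measure (EuclideanSpace ℝ (Fin n))) (_ : ∀ i, IsProbabilityMeasure (μs i))
      (_ : ∀ i, μs i ≪ volume),
    ∃ V : Fin q → Set (EuclideanSpace ℝ (Fin n)),
      (∀ j, IsClosed (V j)) ∧ (∀ j, Convex ℝ (V j)) ∧
      (⋃ j, V j) = Set.univ ∧
      (∀ j l, j ≠ l → volume (V j ∩ V l) = 0) ∧
      ∀ (i : Fin n) (j : Fin q), μs i (V j) = 1 / q := by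
  classical
  induction q using Nat.strong_induction_on with
  | _ q ih =>
  intro μs hprob hac
  rcases hq.eq_or_lt with rfl | hq1
  · refine ⟨fun _ => Set.univ, fun _ => isClosed_univ, fun _ => convex_univ,
      Set.iUnion_const _, fun j l h => absurd (Subsingleton.elim j l) h, fun i j => by simp⟩
  obtain ⟨p, hp, s, rfl⟩ : ∃ p, p.Prime ∧ ∃ s, q = p * s :=
    ⟨_, Nat.minFac_prime (by omega), Nat.minFac_dvd q⟩
  have hs : 0 < s := Nat.pos_of_ne_zero (by rintro rfl; simp at hq)
  have : Fact p.Prime := ⟨hp⟩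
  obtain ⟨x, hxG, hx⟩ := exists_split (p := p) hn μs hac
  set I : Finset (Fin (n + 1) → ℝ) := Finset.univ.image x with hI
  have hIx : ∀ v : I, ∃ j, x j = v := fun v => by
    obtain ⟨j, -, hj⟩ := Finset.mem_image.1 v.2
    exact ⟨j, hj⟩
  have hpos : ∀ v : I, 0 < mult x v := by
    intro v
    obtain ⟨j, hj⟩ := hIx v
    exact Finset.card_pos.2 ⟨j, by simp [hj]⟩
  have hmass : ∀ i (v : I), μs i (cell x v) = (mult x v : ENNReal) / p := by
    intro i v
    obtain ⟨j, hj⟩ := hIx v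
    have h1 := hx i j
    rw [hj] at h1
    rw [← ENNReal.ofReal_toReal (measure_ne_top (μs i) (cell x v))]
    rw [show (μs i (cell x v)).toReal = mult x v / p from h1,
      ENNReal.ofReal_div_of_pos (by exact_mod_cast hp.pos)]
    simp
  have hmass0 : ∀ i (v : I), μs i (cell x v) ≠ 0 := by
    intro i v
    rw [hmass]
    simp [(hpos v).ne']
  have hsub : ∀ v : I, ∃ V : Fin (mult x v * s) → Set (EuclideanSpace ℝ (Fin n)),
      (∀ j, IsClosed (V j)) ∧ (∀ j, Convex ℝ (V j)) ∧
      (⋃ j, V j) = Set.univ ∧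
      (∀ j l, j ≠ l → volume (V j ∩ V l) = 0) ∧
      ∀ (i : Fin n) (j : Fin (mult x v * s)),
        ProbabilityTheory.cond (μs i) (cell x v) (V j) = 1 / (mult x v * s : ℕ) := fun v =>
    ih (mult x v * s) (Nat.mul_lt_mul_of_pos_right (mult_lt hxG v) hs)
      (Nat.mul_pos (hpos v) hs) _
      (fun i => ProbabilityTheory.cond_isProbabilityMeasure (hmass0 i v))
      (fun i => ProbabilityTheory.cond_absolutelyContinuous.trans (hac i))
  choose V hVc hVx hVu hVd hVm using hsub
  have hcard : Fintype.card ((v : I) × Fin (mult x v * s)) = p * s := by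
    rw [Fintype.card_sigma]
    simp only [Fintype.card_fin]
    rw [← Finset.sum_mul, Finset.sum_coe_sort I fun v => mult x v]
    congr 1
    have := Finset.card_eq_sum_card_image x (Finset.univ : Finset (ZMod p))
    rw [Finset.card_univ, ZMod.card] at this
    refine Eq.trans (Finset.sum_congr rfl fun v _ => ?_) this.symm
    unfold mult
    congr
  let e : Fin (p * s) ≃ (v : I) × Fin (mult x v * s) := (Fintype.equivFinOfCardEq hcard).symm
  refine ⟨fun j => cell x (e j).1 ∩ V (e j).1 (e j).2, fun j => (isClosed_cell _ _).inter (hVc _ _),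
    fun j => (convex_cell _ _).inter (hVx _ _), ?_, ?_, ?_⟩
  · refine Set.eq_univ_of_forall fun ξ => ?_
    obtain ⟨j, -, hj⟩ := Finset.exists_max_image Finset.univ (fun k => aff (x k) ξ)
      Finset.univ_nonempty
    let v : I := ⟨x j, Finset.mem_image_of_mem x (Finset.mem_univ j)⟩
    obtain ⟨t, ht⟩ := Set.mem_iUnion.1 ((hVu v).symm ▸ Set.mem_univ ξ : ξ ∈ ⋃ t, V v t)
    refine Set.mem_iUnion.2 ⟨e.symm ⟨v, t⟩, ?_⟩
    rw [Equiv.apply_symm_apply]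
    exact ⟨fun k => hj k (Finset.mem_univ k), ht⟩
  · intro j l hjl
    have hne : e j ≠ e l := e.injective.ne hjl
    dsimp only
    generalize e j = a at hne ⊢
    generalize e l = b at hne ⊢
    obtain ⟨v, t⟩ := a
    obtain ⟨w, u⟩ := b
    by_cases hvw : v = w
    · subst hvw
      refine measure_mono_null ?_ (hVd v t u fun h => hne (by rw [h]))
      exact fun ξ hξ => ⟨hξ.1.2, hξ.2.2⟩
    · refine measure_mono_null ?_ (volume_aff_eq (n := n) (Subtype.coe_injective.ne hvw))
      rintro ξ ⟨⟨h1, -⟩, ⟨h2, -⟩⟩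
      obtain ⟨k, hk⟩ := hIx v
      obtain ⟨k', hk'⟩ := hIx w
      have h3 := h1 k'
      have h4 := h2 k
      rw [hk'] at h3
      rw [hk] at h4
      exact le_antisymm h4 h3
  · intro i j
    dsimp only
    generalize e j = a
    obtain ⟨v, t⟩ := a
    have h1 := ProbabilityTheory.cond_mul_eq_inter (isClosed_cell x (v : Fin (n + 1) → ℝ)).measurableSet
      (V v t) (μs i)
    dsimp only
    rw [← h1, hVm, hmass]
    have hm : (mult x v : ENNReal) ≠ 0 := by exact_mod_cast (hpos v).ne'
    have hm' : (mult x v : ENNReal) ≠ ⊤ := ENNReal.natCast_ne_top _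
    have hp0 : (p : ENNReal) ≠ 0 := by exact_mod_cast hp.ne_zero
    push_cast
    rw [one_div, one_div, ENNReal.mul_inv (Or.inl hm) (Or.inl hm'),
      ENNReal.mul_inv (Or.inl hp0) (Or.inl (ENNReal.natCast_ne_top _)), div_eq_mul_inv]
    calc _ = ((mult x v : ENNReal)⁻¹ * mult x v) * ((p : ENNReal)⁻¹ * (s : ENNReal)⁻¹) := by ring
      _ = _ := by rw [ENNReal.inv_mul_cancel hm hm', one_mul]

end ConvexEquipartition

/-- Any `n` absolutely continuous probability measures on `ℝⁿ` can be simultaneously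
partitioned into `q` equal parts by a convex partition of `ℝⁿ`, for arbitrary `q ≥ 1`. -/
theorem stmt_2 (n : ℕ) (μs : Fin n → Measure (EuclideanSpace ℝ (Fin n)))
    (hprob : ∀ i, IsProbabilityMeasure (μs i)) (hac : ∀ i, μs i ≪ volume)
    (q : ℕ) (hq : 1 ≤ q) :
    ∃ V : Fin q → Set (EuclideanSpace ℝ (Fin n)),
      (∀ j, IsClosed (V j)) ∧ (∀ j, Convex ℝ (V j)) ∧
      (⋃ j, V j) = Set.univ ∧
      (∀ j l, j ≠ l → volume (V j ∩ V l) = 0) ∧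
      ∀ (i : Fin n) (j : Fin q), μs i (V j) = 1 / q := by
  rcases Nat.eq_zero_or_pos n with rfl | hn
  · -- Without measures the partition into one full cell and `q - 1` empty ones will do.
    refine ⟨fun j => if j = ⟨0, hq⟩ then Set.univ else ∅, fun j => ?_, fun j => ?_, ?_,
      fun j l hjl => ?_, fun i => i.elim0⟩
    · dsimp only; split_ifs <;> simp
    · dsimp only; split_ifs
      · exact convex_univ
      · exact convex_empty
    · exact Set.eq_univ_of_forall fun ξ => Set.mem_iUnion.2 ⟨⟨0, hq⟩, by simp⟩
    · by_cases h : j = ⟨0, hq⟩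
      · have : l ≠ ⟨0, hq⟩ := fun h' => hjl (h.trans h'.symm)
        simp [this]
      · simp [h]
  · exact ConvexEquipartition.equipartition hn q hq μs hprob hac
end

section
/- Let C ⊆ ℝ² be a convex body and let q be a prime power. Then C can be partitioned into q closed convex parts V₁, …, V_q (their union is C and their pairwise intersections have Lebesgue measure zero) that all have equal areas and equal perimeters: λ(V₁) = ⋯ = λ(V_q) and 𝓗¹(∂V₁) = ⋯ = 𝓗¹(∂V_q), where λ is Lebesgue measure and 𝓗¹(∂V) denotes the one-dimensional Hausdorff measure of the topological boundary of V. -/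
open MeasureTheory

/-!
The parts are the cells of a power diagram. Given distinct sites `z i` and weights `w i`, the cell
of `i` is the set of `x ∈ C` at which the affine function `⟪z i, x⟫ + w i` is maximal among
all `⟪z j, x⟫ + w j`. Cells are compact and convex, cover `C` and meet in null sets. For distinct
sites there are weights giving all cells the same area (`exists_fair`), and the resulting cells do
not depend on the choice of weights (`cell_eq_of_fair`). So each injective family of sites has well
defined perimeters `per C z i`. They are equivariant under permutations of the sites (`per_perm`),
and weak inequalities between them pass to limits (`per_le_of_tendsto`), since for convex sets the
perimeter is monotone and nearby cells are sandwiched between homothetic copies of each other.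
It remains to find sites for which the perimeters agree.

The sites are taken in the family `site t`, `t : Fin n → ℝ`, whose first coordinates are the `t i`
and whose second coordinates separate indices with equal `t i`. Since the second coordinate only
sees pairs with `|t i - t j| < 1`, the family has partial symmetry: if the values of `t` split into
two groups `A`, `Aᶜ` with a gap of at least `1` between them, then `site` is equivariant under
every permutation that is increasing on `A` and on `Aᶜ` (`site_shuffle`).

The parameter is found by a Sperner type argument. Divide the hyperplane `∑ t i = 0`
(equivalently `ℝⁿ` modulo the diagonal) into the simplices with vertices
`v, v + e_{τ 0}, v + e_{τ 0} + e_{τ 1}, …`, where `v` is an integer vector with sum `0`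
and `τ` a permutation. Label a vertex by an index of maximal perimeter, and, far from the
origin, by an index of minimal coordinate. The signed number of simplices carrying all labels does
not change when finitely many labels are changed (`finsum_wt_sub`), because these simplices can be
counted through facets, along which neighbouring simplices cancel (`exists_facet_partner`). For
the labelling by minimal coordinate the number is `1` (`eq_zero_of_lab_injective`), so it is `1`
here as well. On the other hand, simplices with a gap contribute a multiple of `p`
when `n = p ^ m`: by the partial symmetry, the contribution of those with lower group `A` depends
on `A` only through its cardinality `k`, and there are `n.choose k` such sets
(`dvd_finsum_gap`). So some simplex without a gap, hence in a bounded region, carries all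
labels (`exists_simplex`): each index has the maximal perimeter at one of its vertices.
Rescaling by `1 / M` with `M → ∞` and passing to a limit, one obtains `t` at which every index has
the maximal perimeter (`exists_equal_per`).
-/

namespace FairPartition

/-! ### Signs of labellings -/

/-- The sign of `l` if `l` is a permutation and `0` otherwise, as the determinant of the matrix
whose row `k` is the basis vector `l k`. -/
def eps {n : ℕ} (l : Fin n → Fin n) : ℤ :=
  Matrix.det (Matrix.of fun k i => if l k = i then (1 : ℤ) else 0)

/-- The sign of a labelling is a sum over facets: the `j`-th term vanishes unless the labels on the
facet opposite to the vertex `j` are exactly the indices other than `i₀`. Adding all columns of the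
matrix to column `i₀` turns the latter into the constant `1`. -/
theorem eps_eq_sum_update {n : ℕ} (l : Fin n → Fin n) (i₀ : Fin n) :
    eps l = ∑ j, eps (Function.update l j i₀) := by
  set M : Matrix (Fin n) (Fin n) ℤ := Matrix.of fun k i => if l k = i then (1 : ℤ) else 0 with hM
  have h1 : ∀ j, eps (Function.update l j i₀) = M.adjugate i₀ j := by
    intro j
    rw [Matrix.adjugate_apply, eps]
    congr 1
    ext k i
    by_cases hk : k = j
    · subst hk
      simp [Pi.single_apply, eq_comm]
    · simp [hM, hk, Matrix.updateRow_apply]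
  have h2 : ∀ j, ∑ i, M j i = 1 := by
    intro j
    simp [hM]
  have h3 : ∀ i, ∑ j, M.adjugate i₀ j * M j i = M.det * (1 : Matrix (Fin n) (Fin n) ℤ) i₀ i := by
    intro i
    have := congrFun (congrFun (Matrix.adjugate_mul M) i₀) i
    rw [Matrix.mul_apply] at this
    simpa using this
  calc eps l = M.det := rfl
    _ = ∑ i, M.det * (1 : Matrix (Fin n) (Fin n) ℤ) i₀ i := by
      simp [Matrix.one_apply]
    _ = ∑ i, ∑ j, M.adjugate i₀ j * M j i := by simp only [h3]
    _ = ∑ j, M.adjugate i₀ j * ∑ i, M j i := by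
      rw [Finset.sum_comm]; simp only [Finset.mul_sum]
    _ = ∑ j, eps (Function.update l j i₀) := by simp only [h1, h2, mul_one]

theorem eps_perm_comp {n : ℕ} (π : Equiv.Perm (Fin n)) (l : Fin n → Fin n) :
    eps (fun k => π (l k)) = (Equiv.Perm.sign π : ℤ) * eps l := by
  have := Matrix.det_permute' π⁻¹ (Matrix.of fun k i => if l k = i then (1 : ℤ) else 0)
  rw [Equiv.Perm.sign_inv, Int.cast_id] at this
  rw [eps, eps, ← this]
  congr 1
  ext k i
  simp [Matrix.submatrix_apply, Equiv.eq_symm_apply]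

theorem injective_of_eps_ne_zero {n : ℕ} {l : Fin n → Fin n} (h : eps l ≠ 0) :
    Function.Injective l := by
  intro a b hab
  by_contra hne
  exact h (Matrix.det_zero_of_row_eq hne (by ext i; simp [hab]))

theorem eps_id {n : ℕ} : eps (fun k : Fin n => k) = 1 := by
  have : (Matrix.of fun k i : Fin n => if k = i then (1 : ℤ) else 0) = 1 := by
    ext k i; simp [Matrix.one_apply]
  rw [eps, this, Matrix.det_one]

/-! ### Simplices and labels -/

/-- The `k`-th vertex `v + e_{τ 0} + ⋯ + e_{τ (k - 1)}` of the simplex with base vertex `v` and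
permutation `τ`. -/
def vert {n : ℕ} (v : Fin n → ℤ) (τ : Equiv.Perm (Fin n)) (k : Fin n) : Fin n → ℤ :=
  fun i => v i + if τ.symm i < k then 1 else 0

theorem vert_perm {n : ℕ} (v : Fin n → ℤ) (τ π : Equiv.Perm (Fin n)) (k : Fin n) :
    vert (v ∘ π.symm) (π * τ) k = vert v τ k ∘ π.symm := by
  ext i
  have : (π * τ).symm i = τ.symm (π.symm i) := by
    rw [Equiv.symm_apply_eq]; simp
  simp [vert, this]

/-- For each `j`, the simplices are paired with their neighbours across the facet opposite to the
vertex `j`: the two share all other vertices and have opposite orientations. For `0 < j` the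
pairing exchanges `τ (j - 1)` and `τ j`; for `j = 0` it exchanges `τ 0` and `τ (n - 1)` and moves
the base vertex by `e_{τ 0} - e_{τ (n - 1)}`. -/
theorem exists_facet_partner {n : ℕ} (hn : 2 ≤ n) (j : Fin n) :
    ∃ e : Equiv.Perm ((Fin n → ℤ) × Equiv.Perm (Fin n)), ∀ x,
      ∑ i, (e x).1 i = ∑ i, x.1 i ∧ (Equiv.Perm.sign (e x).2 : ℤ) = -(Equiv.Perm.sign x.2 : ℤ) ∧
      ∀ k, k ≠ j → vert (e x).1 (e x).2 k = vert x.1 x.2 k := by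
  by_cases hj : (j : ℕ) = 0
  · set a : Fin n := ⟨0, by omega⟩ with ha
    set b : Fin n := ⟨n - 1, by omega⟩ with hb
    have hab : a ≠ b := by
      rw [ha, hb, Ne, Fin.mk.injEq]; omega
    have hinv : Function.Involutive (fun x : (Fin n → ℤ) × Equiv.Perm (Fin n) =>
        (x.1 + Pi.single (x.2 a) 1 - Pi.single (x.2 b) 1, x.2 * Equiv.swap a b)) := by
      intro x
      ext i
      · simp
      · simp
    refine ⟨hinv.toPerm, fun x => ⟨?_, ?_, ?_⟩⟩
    · simp [Finset.sum_add_distrib, Finset.sum_sub_distrib]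
    · simp [Equiv.Perm.sign_swap hab]
    · intro k hk
      have hk0 : (0 : ℕ) < k := by
        have : (k : ℕ) ≠ j := fun h => hk (Fin.ext h)
        omega
      have hkn := k.2
      ext i
      have hs : (x.2 * Equiv.swap a b).symm i = Equiv.swap a b (x.2.symm i) := by
        rw [Equiv.symm_apply_eq]; simp
      have hlt_a : a < k := by rw [Fin.lt_def]; exact hk0
      have hlt_b : ¬ b < k := by rw [Fin.lt_def]; simp only [hb]; omega
      simp only [Function.Involutive.coe_toPerm, vert, hs, Pi.add_apply, Pi.sub_apply,
        Pi.single_apply]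
      obtain ⟨r, rfl⟩ := x.2.surjective i
      simp only [Equiv.symm_apply_apply, EmbeddingLike.apply_eq_iff_eq]
      by_cases h1 : r = a
      · subst h1
        simp [hab, hlt_a, hlt_b]
      · by_cases h2 : r = b
        · subst h2
          simp [hlt_a, hlt_b, h1]
        · simp [h1, h2, Equiv.swap_apply_of_ne_of_ne]
  · set a : Fin n := ⟨j - 1, by omega⟩ with ha
    have hab : a ≠ j := by
      rw [ha, Ne, Fin.ext_iff]; simp only; omega
    have hinv : Function.Involutive (fun x : (Fin n → ℤ) × Equiv.Perm (Fin n) =>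
        (x.1, x.2 * Equiv.swap a j)) := by
      intro x
      ext i
      · simp
      · simp
    refine ⟨hinv.toPerm, fun x => ⟨?_, ?_, ?_⟩⟩
    · simp
    · simp [Equiv.Perm.sign_swap hab]
    · intro k hk
      have hk0 : (k : ℕ) ≠ j := fun h => hk (Fin.ext h)
      ext i
      have hs : (x.2 * Equiv.swap a j).symm i = Equiv.swap a j (x.2.symm i) := by
        rw [Equiv.symm_apply_eq]; simp
      have hiff : a < k ↔ j < k := by
        rw [Fin.lt_def, Fin.lt_def]; simp only [ha]; omega
      simp only [Function.Involutive.coe_toPerm, vert, hs]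
      generalize x.2.symm i = r
      by_cases h1 : r = a
      · subst h1; simp [hiff]
      · by_cases h2 : r = j
        · subst h2; simp [hiff]
        · simp [Equiv.swap_apply_of_ne_of_ne, h1, h2]

/-- The quantity minimised by the label: indices are compared by decreasing `P i`, ties being broken
by increasing `u i` and then by the index itself. -/
def key {n : ℕ} {α : Type*} (P : Fin n → α) (u : Fin n → ℤ) (i : Fin n) :
    Lex (αᵒᵈ × Lex (ℤ × Fin n)) :=
  toLex (OrderDual.toDual (P i), toLex (u i, i))

theorem key_le_iff {n : ℕ} {α : Type*} [LinearOrder α] (P : Fin n → α) (u : Fin n → ℤ)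
    (i j : Fin n) : key P u i ≤ key P u j ↔
      P j < P i ∨ (P i = P j ∧ (u i < u j ∨ (u i = u j ∧ i ≤ j))) := by
  simp [key, Prod.Lex.le_iff]

theorem key_injective {n : ℕ} {α : Type*} (P : Fin n → α) (u : Fin n → ℤ) :
    Function.Injective (key P u) := by
  intro i j h
  have h1 := congrArg (fun y => (ofLex (ofLex y).2).2) h
  simpa [key] using h1

theorem exists_lab {n : ℕ} [NeZero n] {α : Type*} [LinearOrder α] (P : Fin n → α)
    (u : Fin n → ℤ) : ∃ l, ∀ j, key P u l ≤ key P u j := by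
  obtain ⟨l, -, hl⟩ := Finset.exists_min_image Finset.univ (key P u) Finset.univ_nonempty
  exact ⟨l, fun j => hl j (Finset.mem_univ j)⟩

/-- The label of the vertex `u`: the index of maximal `P`, ties being broken by the smallest
coordinate of `u` and then by the smallest index. For constant `P` it is the first index of a
minimal coordinate. -/
noncomputable def lab {n : ℕ} [NeZero n] {α : Type*} [LinearOrder α] (P : Fin n → α)
    (u : Fin n → ℤ) : Fin n := (exists_lab P u).choose

theorem lab_spec {n : ℕ} [NeZero n] {α : Type*} [LinearOrder α] (P : Fin n → α)
    (u : Fin n → ℤ) (j : Fin n) : key P u (lab P u) ≤ key P u j :=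
  (exists_lab P u).choose_spec j

theorem le_lab {n : ℕ} [NeZero n] {α : Type*} [LinearOrder α] (P : Fin n → α)
    (u : Fin n → ℤ) (j : Fin n) : P j ≤ P (lab P u) := by
  rcases (key_le_iff _ _ _ _).1 (lab_spec P u j) with h | h
  · exact h.le
  · exact h.1.ge

/-- The label is equivariant under a permutation which carries the data of `u` to those of `u'` and
preserves the order among indices with equal coordinates, so that ties are broken alike. -/
theorem lab_equivariant {n : ℕ} [NeZero n] {α : Type*} [LinearOrder α] {P P' : Fin n → α}
    {u u' : Fin n → ℤ} (π : Equiv.Perm (Fin n)) (hP : ∀ i, P' (π i) = P i)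
    (hu : ∀ i, u' (π i) = u i) (hπ : ∀ i j, u i = u j → i ≤ j → π i ≤ π j) :
    lab P' u' = π (lab P u) := by
  apply key_injective P' u'
  apply le_antisymm (lab_spec P' u' _)
  have h := lab_spec P u (π.symm (lab P' u'))
  have h1 := hP (π.symm (lab P' u'))
  have h2 := hu (π.symm (lab P' u'))
  have h3 := hπ (lab P u) (π.symm (lab P' u'))
  rw [Equiv.apply_symm_apply] at h1 h2 h3
  rw [key_le_iff] at h ⊢
  rw [hP, hu, h1, h2]
  rcases h with h | ⟨h, h' | ⟨huv, hij⟩⟩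
  · exact Or.inl h
  · exact Or.inr ⟨h, Or.inl h'⟩
  · exact Or.inr ⟨h, Or.inr ⟨huv, h3 huv hij⟩⟩

/-- The signed indicator of the fully labelled simplices: the orientation of the simplex `x` times
the sign of its labelling by `L`. Only simplices with base vertex of coordinate sum `0` count. -/
noncomputable def wt {n : ℕ} (L : (Fin n → ℤ) → Fin n)
    (x : (Fin n → ℤ) × Equiv.Perm (Fin n)) : ℤ :=
  if ∑ i, x.1 i = 0 then
    (Equiv.Perm.sign x.2 : ℤ) * eps (fun k => L (vert x.1 x.2 k)) else 0

theorem vert_le {n : ℕ} (v : Fin n → ℤ) (τ : Equiv.Perm (Fin n)) (k i : Fin n) :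
    vert v τ k i ≤ v i + 1 := by
  unfold vert; split_ifs <;> omega

theorem le_vert {n : ℕ} (v : Fin n → ℤ) (τ : Equiv.Perm (Fin n)) (k i : Fin n) :
    v i ≤ vert v τ k i := by
  unfold vert; split_ifs <;> omega

theorem finite_box {n : ℕ} (K : ℤ) :
    {x : (Fin n → ℤ) × Equiv.Perm (Fin n) | ∀ i, |x.1 i| ≤ K}.Finite := by
  apply ((Set.finite_Icc (fun _ : Fin n => -K) (fun _ => K)).prod
    (Set.finite_univ (α := Equiv.Perm (Fin n)))).subset
  intro x hx
  simp only [Set.mem_prod, Set.mem_Icc, Set.mem_univ, and_true]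
  exact ⟨fun i => (abs_le.1 (hx i)).1, fun i => (abs_le.1 (hx i)).2⟩

theorem exists_vert_large {n : ℕ} {v : Fin n → ℤ} {K : ℤ} (h : ¬ ∀ i, |v i| ≤ K + 1)
    (τ : Equiv.Perm (Fin n)) (k : Fin n) : ¬ ∀ i, |vert v τ k i| ≤ K := by
  push Not at h ⊢
  obtain ⟨i, hi⟩ := h
  refine ⟨i, ?_⟩
  have h1 := vert_le v τ k i
  have h2 := le_vert v τ k i
  rw [lt_abs] at hi ⊢
  omega

/-! ### Counting fully labelled simplices -/

/-- The signed number of fully labelled simplices does not depend on the labels in a bounded region.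
After expanding over facets by `eps_eq_sum_update`, the terms cancel in pairs. -/
theorem finsum_wt_sub {n : ℕ} (hn : 2 ≤ n) (L L₀ : (Fin n → ℤ) → Fin n) (K : ℤ)
    (hL : ∀ u, (¬ ∀ i, |u i| ≤ K) → L u = L₀ u) :
    ∑ᶠ x, (wt L x - wt L₀ x) = 0 := by
  set i₀ : Fin n := ⟨0, by omega⟩
  set h : (Fin n → ℤ) × Equiv.Perm (Fin n) → Fin n → ℤ := fun x j =>
    if ∑ i, x.1 i = 0 then (Equiv.Perm.sign x.2 : ℤ) *
      (eps (Function.update (fun k => L (vert x.1 x.2 k)) j i₀) -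
        eps (Function.update (fun k => L₀ (vert x.1 x.2 k)) j i₀)) else 0 with hh
  have h1 : ∀ x, wt L x - wt L₀ x = ∑ j, h x j := by
    intro x
    simp only [wt, hh]
    split_ifs
    · rw [eps_eq_sum_update _ i₀, eps_eq_sum_update (fun k => L₀ (vert x.1 x.2 k)) i₀,
        ← mul_sub, ← Finset.sum_sub_distrib, Finset.mul_sum]
    · simp
  have hfin : ∀ j, Function.HasFiniteSupport fun x => h x j := by
    intro j
    apply (finite_box (n := n) (K + 1)).subset
    intro x hx
    by_contra hc
    apply hx
    have : (fun k => L (vert x.1 x.2 k)) = fun k => L₀ (vert x.1 x.2 k) :=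
      funext fun k => hL _ (exists_vert_large hc x.2 k)
    simp only [hh, this]
    simp
  simp only [h1]
  rw [finsum_sum_comm _ _ (fun j _ => hfin j)]
  apply Finset.sum_eq_zero
  intro j _
  obtain ⟨e, he⟩ := exists_facet_partner hn j
  have h2 : ∀ x, h (e x) j = - h x j := by
    intro x
    obtain ⟨e1, e2, e3⟩ := he x
    have e4 : ∀ M : (Fin n → ℤ) → Fin n,
        Function.update (fun k => M (vert (e x).1 (e x).2 k)) j i₀ =
        Function.update (fun k => M (vert x.1 x.2 k)) j i₀ := by
      intro M
      ext k
      by_cases hk : k = j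
      · subst hk; simp
      · simp [hk, e3 k hk]
    simp only [hh, e1, e2, e4]
    split_ifs <;> ring
  have h3 := finsum_comp_equiv e (f := fun x => h x j)
  simp only [h2, finsum_neg_distrib] at h3
  omega

theorem key_const_le_iff {n : ℕ} (u : Fin n → ℤ) (i j : Fin n) :
    key (fun _ => ()) u i ≤ key (fun _ => ()) u j ↔ u i < u j ∨ (u i = u j ∧ i ≤ j) := by
  simp [key_le_iff]

/-- For the labelling by minimal coordinate, the only fully labelled simplex is the one at the
origin with the identity permutation. -/
theorem eq_zero_of_lab_injective {n : ℕ} [NeZero n] {v : Fin n → ℤ} {τ : Equiv.Perm (Fin n)}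
    (hv : ∑ i, v i = 0)
    (h : Function.Injective fun k => lab (fun _ => ()) (vert v τ k)) : v = 0 ∧ τ = 1 := by
  have hs := Finite.surjective_of_injective h
  have hlab : ∀ k j, vert v τ k (lab (fun _ => ()) (vert v τ k)) < vert v τ k j ∨
      (vert v τ k (lab (fun _ => ()) (vert v τ k)) = vert v τ k j ∧
        lab (fun _ => ()) (vert v τ k) ≤ j) := fun k j =>
    (key_const_le_iff _ _ _).1 (lab_spec (fun _ => ()) (vert v τ k) j)
  obtain ⟨a, -, ha⟩ := Finset.exists_min_image Finset.univ v Finset.univ_nonempty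
  replace ha : ∀ i, v a ≤ v i := fun i => ha i (Finset.mem_univ i)
  have hle : ∀ i, v i ≤ v a + 1 := by
    intro i
    obtain ⟨k, hk⟩ := hs i
    have h1 := hlab k a
    simp only at hk
    rw [hk] at h1
    have h2 := vert_le v τ k a
    have h3 := le_vert v τ k i
    omega
  -- The coordinates take the two values `v a`, `v a + 1` only and sum to `0`, so they all agree:
  -- the number of coordinates equal to `v a + 1` is a multiple of `n` smaller than `n`.
  have hconst : ∀ i, v i = v a := by
    have hsum : ∑ i, (v i - v a) = - (n * v a) := by
      simp [Finset.sum_sub_distrib, hv]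
    have hlt : ∑ i, (v i - v a) < n := by
      have : ∑ i, (v i - v a) < ∑ i : Fin n, (1 : ℤ) :=
        Finset.sum_lt_sum (fun i _ => by have := hle i; omega) ⟨a, Finset.mem_univ a, by omega⟩
      simpa using this
    have hnn : 0 ≤ ∑ i, (v i - v a) := Finset.sum_nonneg fun i _ => by have := ha i; omega
    have hz : ∑ i, (v i - v a) = 0 := by
      apply Int.eq_zero_of_dvd_of_nonneg_of_lt hnn hlt
      rw [hsum]
      exact Dvd.intro (-v a) (by ring)
    intro i
    have := (Finset.sum_eq_zero_iff_of_nonneg (fun i _ => by have := ha i; omega)).1 hz i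
      (Finset.mem_univ i)
    omega
  have hv0 : v = 0 := by
    have hna : (n : ℤ) * v a = 0 := by
      rw [← hv]; simp [hconst]
    have : v a = 0 := by
      rcases mul_eq_zero.1 hna with h | h
      · exact absurd (by exact_mod_cast h) (NeZero.ne n)
      · exact h
    ext i
    simp [hconst i, this]
  subst hv0
  refine ⟨rfl, ?_⟩
  set g : Fin n → Fin n := fun k => lab (fun _ => ()) (vert 0 τ k) with hg
  have hg1 : ∀ k, k ≤ τ.symm (g k) := by
    intro k
    by_contra hc
    have h1 := hlab k (τ k)
    simp [vert] at h1
    simp only [hg] at hc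
    push Not at hc
    simp [hc] at h1
    exact absurd h1.1 (not_le.2 hc)
  have hg2 : ∀ k i, k ≤ τ.symm i → g k ≤ i := by
    intro k i hi
    have h1 := hlab k i
    have h2 := hg1 k
    have h3 : ¬ τ.symm (lab (fun _ => ()) (vert 0 τ k)) < k := not_lt.2 (hg1 k)
    have h4 : ¬ τ.symm i < k := not_lt.2 hi
    simp [vert] at h1 h3
    simp [h4, not_lt.2 h3] at h1
    exact h1
  have hmono : StrictMono g := by
    apply Monotone.strictMono_of_injective _ h
    intro k k' hk
    exact hg2 k (g k') (hk.trans (hg1 k'))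
  have hle : ∀ i, τ.symm i ≤ i := fun i => (hmono.le_apply).trans (hg2 _ i le_rfl)
  have : ∀ i, τ.symm i = i := by
    have hsum : ∑ i, ((τ.symm i : Fin n) : ℕ) = ∑ i : Fin n, (i : ℕ) :=
      Equiv.sum_comp τ.symm (fun i : Fin n => (i : ℕ))
    have := (Finset.sum_eq_sum_iff_of_le (fun i _ => Fin.le_def.1 (hle i))).1 hsum
    intro i
    exact Fin.ext (this i (Finset.mem_univ i))
  ext i
  have := this (τ i)
  simp at this
  simp [← this]

theorem lab_vert_zero {n : ℕ} [NeZero n] (k : Fin n) :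
    lab (fun _ => ()) (vert (0 : Fin n → ℤ) 1 k) = k := by
  have h := (key_const_le_iff _ _ _).1 (lab_spec (fun _ => ()) (vert (0 : Fin n → ℤ) 1 k) k)
  set l := lab (fun _ => ()) (vert (0 : Fin n → ℤ) 1 k)
  have hs : ∀ i, (1 : Equiv.Perm (Fin n)).symm i = i := fun i => rfl
  by_cases hl : l < k
  · simp [vert, hs, hl] at h
  · simp [vert, hs, hl] at h
    exact le_antisymm h (not_lt.1 hl)

theorem wt_lab_eq {n : ℕ} [NeZero n] (x : (Fin n → ℤ) × Equiv.Perm (Fin n)) :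
    wt (fun u => lab (fun _ => ()) u) x = if x = (0, 1) then 1 else 0 := by
  split_ifs with hx
  · subst hx
    simp [wt, lab_vert_zero, eps_id]
  · by_contra hne
    apply hx
    unfold wt at hne
    split_ifs at hne with h0
    · have := injective_of_eps_ne_zero (right_ne_zero_of_mul hne)
      have := eq_zero_of_lab_injective h0 this
      exact Prod.ext this.1 this.2
    · exact (hne rfl).elim

/-- A labelling which far out is given by the minimal coordinate has signed number of fully labelled
simplices equal to `1`. -/
theorem finsum_wt_eq_one {n : ℕ} [NeZero n] (hn : 2 ≤ n) (L : (Fin n → ℤ) → Fin n) (K : ℤ)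
    (hL : ∀ u, (¬ ∀ i, |u i| ≤ K) → L u = lab (fun _ => ()) u) :
    (Function.HasFiniteSupport (wt L)) ∧ ∑ᶠ x, wt L x = 1 := by
  have h1 := finsum_wt_sub hn L _ K hL
  have hf0 : Function.HasFiniteSupport (wt (fun u : Fin n → ℤ => lab (fun _ => ()) u)) := by
    apply (Set.finite_singleton ((0, 1) : (Fin n → ℤ) × Equiv.Perm (Fin n))).subset
    intro x hx
    rw [Function.mem_support, wt_lab_eq] at hx
    by_contra hc
    exact hx (if_neg hc)
  have hf : Function.HasFiniteSupport (wt L) := by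
    apply ((finite_box (n := n) (K + 1)).union hf0).subset
    intro x hx
    by_contra hc
    rw [Set.mem_union, not_or] at hc
    apply hx
    have h3 : wt L x = wt (fun u => lab (fun _ => ()) u) x := by
      have : (fun k => L (vert x.1 x.2 k)) = fun k => lab (fun _ => ()) (vert x.1 x.2 k) :=
        funext fun k => hL _ (exists_vert_large hc.1 x.2 k)
      simp only [wt, this]
    rw [h3]
    simpa using hc.2
  refine ⟨hf, ?_⟩
  rw [finsum_sub_distrib hf hf0] at h1
  have h2 : ∑ᶠ x, wt (fun u : Fin n → ℤ => lab (fun _ => ()) u) x = 1 := by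
    rw [finsum_eq_single _ (0, 1) (fun x hx => by rw [wt_lab_eq, if_neg hx]), wt_lab_eq,
      if_pos rfl]
  omega

/-! ### Gaps and shuffles -/

/-- The coordinates of `u` indexed by `A` lie below all others, with a gap of at least `g`; both
groups are nonempty. -/
def Gap {n : ℕ} (g : ℤ) (A : Finset (Fin n)) (u : Fin n → ℤ) : Prop :=
  A.Nonempty ∧ Aᶜ.Nonempty ∧ ∀ a ∈ A, ∀ b ∉ A, u a + g ≤ u b

/-- `A` is the smallest lower group of a gap of `u`. -/
def MinGap {n : ℕ} (g : ℤ) (A : Finset (Fin n)) (u : Fin n → ℤ) : Prop :=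
  Gap g A u ∧ ∀ B, Gap g B u → A ⊆ B

/-- `π` preserves the order of indices within `A` and within its complement. -/
def IsShuffle {n : ℕ} (A : Finset (Fin n)) (π : Equiv.Perm (Fin n)) : Prop :=
  ∀ i j, (i ∈ A ↔ j ∈ A) → i ≤ j → π i ≤ π j

/-- Lower groups of gaps are nested, whence smallest ones exist and are unique. -/
theorem Gap.total {n : ℕ} {g : ℤ} (hg : 0 < g) {A B : Finset (Fin n)} {u : Fin n → ℤ}
    (hA : Gap g A u) (hB : Gap g B u) : A ⊆ B ∨ B ⊆ A := by
  by_contra! h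
  obtain ⟨a, ha, ha'⟩ := Finset.not_subset.1 h.1
  obtain ⟨b, hb, hb'⟩ := Finset.not_subset.1 h.2
  have h1 := hA.2.2 a ha b hb'
  have h2 := hB.2.2 b hb a ha'
  omega

theorem Gap.exists_minGap {n : ℕ} {g : ℤ} (hg : 0 < g) {A : Finset (Fin n)} {u : Fin n → ℤ}
    (hA : Gap g A u) : ∃ B, MinGap g B u := by
  classical
  obtain ⟨B, hB, hmin⟩ := Finset.exists_min_image
    (Finset.univ.filter fun B : Finset (Fin n) => Gap g B u) Finset.card ⟨A, by simpa using hA⟩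
  simp only [Finset.mem_filter, Finset.mem_univ, true_and] at hB hmin
  refine ⟨B, hB, fun D hD => ?_⟩
  rcases hB.total hg hD with h | h
  · exact h
  · exact (Finset.eq_of_subset_of_card_le h (hmin D hD)).ge

theorem MinGap.unique {n : ℕ} {g : ℤ} {A B : Finset (Fin n)} {u : Fin n → ℤ}
    (hA : MinGap g A u) (hB : MinGap g B u) : A = B :=
  Finset.Subset.antisymm (hA.2 B hB.1) (hB.2 A hA.1)

theorem gap_map {n : ℕ} {g : ℤ} {A : Finset (Fin n)} {u : Fin n → ℤ} (π : Equiv.Perm (Fin n)) :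
    Gap g (A.map π.toEmbedding) (u ∘ π.symm) ↔ Gap g A u := by
  have h1 : (A.map π.toEmbedding)ᶜ = Aᶜ.map π.toEmbedding := by
    ext i
    simp
  unfold Gap
  rw [h1, Finset.map_nonempty, Finset.map_nonempty]
  refine and_congr Iff.rfl (and_congr Iff.rfl ⟨fun h a ha b hb => ?_, fun h a ha b hb => ?_⟩)
  · simpa using h (π a) (by simpa using ha) (π b) (by simpa using hb)
  · have := h (π.symm a) (by simpa using ha) (π.symm b) (by simpa using hb)
    simpa using this

theorem minGap_map {n : ℕ} {g : ℤ} {A : Finset (Fin n)} {u : Fin n → ℤ}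
    (π : Equiv.Perm (Fin n)) :
    MinGap g (A.map π.toEmbedding) (u ∘ π.symm) ↔ MinGap g A u := by
  unfold MinGap
  rw [gap_map]
  refine and_congr Iff.rfl ⟨fun h B hB => ?_, fun h B hB => ?_⟩
  · have := h (B.map π.toEmbedding) ((gap_map π).2 hB)
    simpa using this
  · have e : B = (B.map π.symm.toEmbedding).map π.toEmbedding := by
      ext i; simp
    rw [e] at hB ⊢
    have := h _ ((gap_map π).1 hB)
    simpa using this

/-- Any two sets of indices of the same size are related by a shuffle: map each one, and its
complement, increasingly onto the other. -/
theorem exists_shuffle {n : ℕ} {A A' : Finset (Fin n)} (h : A.card = A'.card) :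
    ∃ π : Equiv.Perm (Fin n), IsShuffle A π ∧ A.map π.toEmbedding = A' := by
  classical
  have hc : Aᶜ.card = A'ᶜ.card := by
    rw [Finset.card_compl, Finset.card_compl, h]
  let e1 : A ≃o A' := (A.orderIsoOfFin h).symm.trans (A'.orderIsoOfFin rfl)
  let e2 : (Aᶜ : Finset (Fin n)) ≃o (A'ᶜ : Finset (Fin n)) :=
    (Aᶜ.orderIsoOfFin hc).symm.trans (A'ᶜ.orderIsoOfFin rfl)
  let f : Fin n → Fin n := fun i => if hi : i ∈ A then e1 ⟨i, hi⟩ else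
    e2 ⟨i, Finset.mem_compl.2 hi⟩
  have f1 : ∀ i (hi : i ∈ A), f i = e1 ⟨i, hi⟩ := fun i hi => dif_pos hi
  have f2 : ∀ i (hi : i ∉ A), f i = e2 ⟨i, Finset.mem_compl.2 hi⟩ := fun i hi => dif_neg hi
  have m1 : ∀ i (hi : i ∈ A), f i ∈ A' := fun i hi => by
    rw [f1 i hi]; exact (e1 ⟨i, hi⟩).2
  have m2 : ∀ i (hi : i ∉ A), f i ∉ A' := fun i hi => by
    rw [f2 i hi]; exact Finset.mem_compl.1 (e2 ⟨i, Finset.mem_compl.2 hi⟩).2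
  have hinj : Function.Injective f := by
    intro i j hij
    by_cases hi : i ∈ A <;> by_cases hj : j ∈ A
    · rw [f1 i hi, f1 j hj] at hij
      simpa using e1.injective (Subtype.ext hij)
    · exact absurd (hij ▸ m1 i hi) (m2 j hj)
    · exact absurd (hij ▸ m1 j hj) (m2 i hi)
    · rw [f2 i hi, f2 j hj] at hij
      simpa using e2.injective (Subtype.ext hij)
  let π : Equiv.Perm (Fin n) := Equiv.ofBijective f (Finite.injective_iff_bijective.1 hinj)
  refine ⟨π, ?_, ?_⟩
  · intro i j hij hle
    change f i ≤ f j
    by_cases hi : i ∈ A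
    · have hj := hij.1 hi
      rw [f1 i hi, f1 j hj]
      exact e1.monotone (a := ⟨i, hi⟩) (b := ⟨j, hj⟩) hle
    · have hj := fun hj => hi (hij.2 hj)
      rw [f2 i hi, f2 j hj]
      exact e2.monotone (a := ⟨i, _⟩) (b := ⟨j, _⟩) hle
  · apply Finset.eq_of_subset_of_card_le
    · intro x hx
      obtain ⟨i, hi, rfl⟩ := Finset.mem_map.1 hx
      exact m1 i hi
    · rw [Finset.card_map, h]

theorem Gap.vert {n : ℕ} {g : ℤ} {A : Finset (Fin n)} {v : Fin n → ℤ} (h : Gap (g + 1) A v)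
    (τ : Equiv.Perm (Fin n)) (k : Fin n) : Gap g A (vert v τ k) := by
  refine ⟨h.1, h.2.1, fun a ha b hb => ?_⟩
  have h1 := h.2.2 a ha b hb
  have h2 := vert_le v τ k a
  have h3 := le_vert v τ k b
  omega

/-- Without a gap, consecutive coordinates differ by less than `g`, so that the coordinates spread
over at most `n * g`. -/
theorem sub_le_of_not_gap {n : ℕ} {g : ℤ} (hg : 0 < g) {v : Fin n → ℤ} (h : ∀ A, ¬ Gap g A v)
    (a b : Fin n) : v b - v a ≤ n * g := by
  classical
  by_contra! hlt
  have key : ∀ r : ℕ, r < n → r + 1 ≤ (Finset.univ.filter fun i => v i ≤ v a + r * g).card := by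
    intro r
    induction r with
    | zero =>
      intro _
      exact Finset.card_pos.2 ⟨a, by simp⟩
    | succ r ih =>
      intro hr
      set A := Finset.univ.filter fun i => v i ≤ v a + r * g with hA
      have hrn : (r : ℤ) * g ≤ n * g := by
        apply mul_le_mul_of_nonneg_right _ hg.le
        exact_mod_cast (by omega : r ≤ n)
      have hgap := h A
      have hne : ∃ i ∈ A, ∃ j ∉ A, v j < v i + g := by
        by_contra! hc
        refine hgap ⟨⟨a, ?_⟩, ⟨b, ?_⟩, hc⟩
        · simp only [hA, Finset.mem_filter, Finset.mem_univ, true_and]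
          have : 0 ≤ (r : ℤ) * g := by positivity
          omega
        · simp only [hA, Finset.mem_compl, Finset.mem_filter, Finset.mem_univ, true_and]
          omega
      obtain ⟨i, hi, j, hj, hij⟩ := hne
      have hsub : A ⊂ Finset.univ.filter fun i => v i ≤ v a + (r + 1 : ℕ) * g := by
        rw [Finset.ssubset_iff_of_subset]
        · refine ⟨j, ?_, hj⟩
          simp only [hA, Finset.mem_filter, Finset.mem_univ, true_and] at hi ⊢
          push_cast
          linarith
        · intro i hi
          simp only [hA, Finset.mem_filter, Finset.mem_univ, true_and] at hi ⊢
          push_cast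
          linarith
      have := Finset.card_lt_card hsub
      have := ih (by omega)
      omega
  have hn : 0 < n := Fin.pos a
  have h1 := key (n - 1) (by omega)
  have h2 : (Finset.univ.filter fun i => v i ≤ v a + (n - 1 : ℕ) * g) = Finset.univ := by
    apply Finset.eq_univ_of_card
    apply le_antisymm (Finset.card_le_univ _)
    rw [Fintype.card_fin]
    omega
  have h3 : b ∈ Finset.univ.filter fun i => v i ≤ v a + (n - 1 : ℕ) * g := by rw [h2]; simp
  simp only [Finset.mem_filter, Finset.mem_univ, true_and] at h3
  have h4 : ((n - 1 : ℕ) : ℤ) * g ≤ n * g := by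
    apply mul_le_mul_of_nonneg_right _ hg.le
    exact_mod_cast (by omega : n - 1 ≤ n)
  omega

theorem abs_le_of_sub_le {n : ℕ} {v : Fin n → ℤ} {K : ℤ} (hv : ∑ i, v i = 0)
    (h : ∀ a b, v b - v a ≤ K) (i : Fin n) : |v i| ≤ K := by
  have hn : (0 : ℤ) < n := by exact_mod_cast Fin.pos i
  have h1 : ∑ j, (v i - v j) ≤ ∑ j : Fin n, K := Finset.sum_le_sum fun j _ => h j i
  have h2 : ∑ j, (v j - v i) ≤ ∑ j : Fin n, K := Finset.sum_le_sum fun j _ => h i j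
  simp [Finset.sum_sub_distrib, hv] at h1 h2
  rw [abs_le]
  constructor <;> nlinarith

/-- For an equivariant labelling, the simplices with a gap contribute a multiple of `p` to the signed
number of fully labelled simplices. Group them by the smallest lower group `A` of the base
vertex; shuffles identify the contributions of sets of equal size `k`, and `p` divides the number
`n.choose k` of these sets. A gap `g + 1` at the base vertex ensures a gap `g` at all vertices. -/
theorem dvd_finsum_gap {p m n : ℕ} (hp : p.Prime) (hn : n = p ^ m) {g : ℤ} (hg : 0 < g)
    (L : (Fin n → ℤ) → Fin n)
    (hL : ∀ A π u, Gap g A u → IsShuffle A π → L (u ∘ π.symm) = π (L u))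
    (hfin : Function.HasFiniteSupport (wt L)) :
    open Classical in
    (p : ℤ) ∣ ∑ᶠ x, if ∃ A, Gap (g + 1) A x.1 then wt L x else 0 := by
  classical
  set T : Finset (Fin n) → ℤ := fun A => ∑ᶠ x, if MinGap (g + 1) A x.1 then wt L x else 0 with hT
  have h1 : ∀ x, (if ∃ A, Gap (g + 1) A x.1 then wt L x else 0) =
      ∑ A : Finset (Fin n), if MinGap (g + 1) A x.1 then wt L x else 0 := by
    intro x
    split_ifs with h
    · obtain ⟨A, hA⟩ := h
      obtain ⟨B, hB⟩ := hA.exists_minGap (by omega)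
      rw [Finset.sum_eq_single B]
      · rw [if_pos hB]
      · intro D _ hD
        rw [if_neg fun hD' => hD (hD'.unique hB)]
      · simp
    · rw [Finset.sum_eq_zero]
      intro A _
      rw [if_neg fun hA => h ⟨A, hA.1⟩]
  have h2 : ∑ᶠ x, (if ∃ A, Gap (g + 1) A x.1 then wt L x else 0) = ∑ A, T A := by
    simp only [h1]
    rw [finsum_sum_comm]
    intro A _
    apply Set.Finite.subset hfin
    intro x hx hc
    apply hx
    simp [hc]
  have h3 : ∀ A A' : Finset (Fin n), A.card = A'.card → T A = T A' := by
    intro A A' hc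
    obtain ⟨π, hπ, rfl⟩ := exists_shuffle hc
    let e : Equiv.Perm ((Fin n → ℤ) × Equiv.Perm (Fin n)) :=
      (Equiv.arrowCongr π (Equiv.refl ℤ)).prodCongr (Equiv.mulLeft π)
    have he : ∀ x, e x = (x.1 ∘ π.symm, π * x.2) := fun x => rfl
    rw [hT]
    refine Eq.trans ?_ (finsum_comp_equiv e
      (f := fun x => if MinGap (g + 1) (A.map π.toEmbedding) x.1 then wt L x else 0))
    refine finsum_congr fun x => ?_
    simp only [he, minGap_map]
    split_ifs with hx
    · have hs : ∑ i, (x.1 ∘ π.symm) i = ∑ i, x.1 i := Equiv.sum_comp π.symm x.1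
      simp only [wt, hs, vert_perm, hL A π _ (hx.1.vert _ _) hπ, eps_perm_comp,
        Equiv.Perm.sign_mul]
      have hsq : (Equiv.Perm.sign π : ℤ) * (Equiv.Perm.sign π : ℤ) = 1 := by
        rw [← Units.val_mul, Int.units_mul_self, Units.val_one]
      split_ifs
      · push_cast
        linear_combination (-(Equiv.Perm.sign x.2 : ℤ) *
          eps (fun k => L (vert x.1 x.2 k))) * hsq
      · rfl
    · rfl
  rw [h2]
  set A₀ : ℕ → Finset (Fin n) := fun k => Finset.univ.filter fun i => (i : ℕ) < k with hA₀
  have hcard : ∀ k ≤ n, (A₀ k).card = k := by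
    intro k hk
    simp [hA₀, Fin.card_filter_val_lt, hk]
  have h4 : ∑ A, T A = ∑ A ∈ (Finset.univ : Finset (Fin n)).powerset, T (A₀ A.card) := by
    rw [Finset.powerset_univ]
    refine Finset.sum_congr rfl fun A _ => h3 _ _ ?_
    rw [hcard]
    simpa using Finset.card_le_univ A
  rw [h4, Finset.sum_powerset_apply_card (fun k => T (A₀ k))]
  apply Finset.dvd_sum
  intro k hk
  rw [Finset.card_univ, Fintype.card_fin] at *
  rw [nsmul_eq_mul]
  have hkn : k ≤ n := by simp at hk; omega
  by_cases hk0 : k = 0 ∨ k = n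
  · have : T (A₀ k) = 0 := by
      rw [hT]
      simp only
      apply finsum_eq_zero_of_forall_eq_zero
      intro x
      rw [if_neg]
      intro hx
      have c1 := Finset.card_pos.2 hx.1.1
      have c2 := Finset.card_pos.2 hx.1.2.1
      rw [Finset.card_compl, Fintype.card_fin] at c2
      rw [hcard k hkn] at c1 c2
      omega
    rw [this, mul_zero]
    exact dvd_zero _
  · push Not at hk0
    apply Dvd.dvd.mul_right
    rw [hn] at hk0 ⊢
    exact_mod_cast hp.dvd_choose_pow hk0.1 hk0.2

/-- If `P` is equivariant under shuffles wherever there is a gap, then some simplex in an explicit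
bounded region has, for each index `i`, a vertex where `P` is maximal at `i`. -/
theorem exists_simplex {p m n : ℕ} [NeZero n] {α : Type*} [LinearOrder α] (hp : p.Prime)
    (hn : n = p ^ m) (hn2 : 2 ≤ n) {g : ℤ} (hg : 0 < g) (P : (Fin n → ℤ) → Fin n → α)
    (hP : ∀ A π u, Gap g A u → IsShuffle A π → ∀ i, P (u ∘ π.symm) (π i) = P u i) :
    ∃ (v : Fin n → ℤ) (τ : Equiv.Perm (Fin n)), (∀ i, |v i| ≤ n * (g + 1)) ∧
      ∀ i, ∃ k, ∀ j, P (vert v τ k) j ≤ P (vert v τ k) i := by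
  classical
  set K : ℤ := n * (g + 1) + 1 with hK
  set L : (Fin n → ℤ) → Fin n := fun u =>
    if ∀ i, |u i| ≤ K then lab (P u) u else lab (fun _ => ()) u with hLdef
  have hLK : ∀ u, (¬ ∀ i, |u i| ≤ K) → L u = lab (fun _ => ()) u := fun u hu => if_neg hu
  obtain ⟨hfin, hsum⟩ := finsum_wt_eq_one hn2 L K hLK
  have hL : ∀ A π u, Gap g A u → IsShuffle A π → L (u ∘ π.symm) = π (L u) := by
    intro A π u hA hπ
    have h1 : (∀ i, |(u ∘ π.symm) i| ≤ K) ↔ ∀ i, |u i| ≤ K :=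
      ⟨fun h i => by simpa using h (π i), fun h i => h _⟩
    have h2 : ∀ i j, u i = u j → i ≤ j → π i ≤ π j := by
      intro i j hij hle
      refine hπ i j ⟨fun hi => ?_, fun hj => ?_⟩ hle
      · by_contra hj
        have := hA.2.2 i hi j hj
        omega
      · by_contra hi
        have := hA.2.2 j hj i hi
        omega
    simp only [hLdef, h1]
    split_ifs
    · exact lab_equivariant π (hP A π u hA hπ) (by simp) h2
    · exact lab_equivariant π (fun _ => rfl) (by simp) h2
  have hdvd := dvd_finsum_gap hp hn hg L hL hfin
  have hsplit : ∑ᶠ x, wt L x =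
      (∑ᶠ x, if ∃ A, Gap (g + 1) A x.1 then wt L x else 0) +
      ∑ᶠ x, if ∃ A, Gap (g + 1) A x.1 then 0 else wt L x := by
    rw [← finsum_add_distrib]
    · congr 1
      ext x
      split_ifs <;> simp
    · apply Set.Finite.subset hfin
      intro x hx hc
      apply hx
      simp [hc]
    · apply Set.Finite.subset hfin
      intro x hx hc
      apply hx
      simp [hc]
  have hne : ∑ᶠ x, (if ∃ A, Gap (g + 1) A x.1 then 0 else wt L x) ≠ 0 := by
    intro h0
    rw [h0, add_zero, hsum] at hsplit
    rw [← hsplit] at hdvd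
    have := Int.eq_one_of_dvd_one (by positivity) hdvd
    exact hp.one_lt.ne' (by exact_mod_cast this)
  obtain ⟨x, hx⟩ : ∃ x, (if ∃ A, Gap (g + 1) A x.1 then 0 else wt L x) ≠ 0 := by
    by_contra! hc
    exact hne (finsum_eq_zero_of_forall_eq_zero hc)
  split_ifs at hx with hgap
  · exact absurd rfl hx
  · push Not at hgap
    unfold wt at hx
    split_ifs at hx with hs
    · have hbd := abs_le_of_sub_le hs (sub_le_of_not_gap (by omega) hgap)
      have hbij := Finite.surjective_of_injective
        (injective_of_eps_ne_zero (right_ne_zero_of_mul hx))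
      refine ⟨x.1, x.2, hbd, fun i => ?_⟩
      obtain ⟨k, hk⟩ := hbij i
      refine ⟨k, fun j => ?_⟩
      have hb : ∀ i, |vert x.1 x.2 k i| ≤ K := by
        intro i
        have h1 := vert_le x.1 x.2 k i
        have h2 := le_vert x.1 x.2 k i
        have h3 := hbd i
        rw [abs_le] at h3 ⊢
        omega
      have hLk : L (vert x.1 x.2 k) = lab (P (vert x.1 x.2 k)) (vert x.1 x.2 k) := if_pos hb
      rw [← hk]
      simp only
      rw [hLk]
      exact le_lab _ _ _
    · exact absurd rfl hx

/-! ### Perimeter of planar convex sets -/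

/-- The Euclidean plane. -/
abbrev Plane := EuclideanSpace ℝ (Fin 2)

theorem exists_ray_exit {L : Set Plane} (hL : IsCompact L) {x u : Plane} (hx : x ∈ L)
    (hu : u ≠ 0) : ∃ r : ℝ, 0 ≤ r ∧ x + r • u ∈ frontier L := by
  set T : Set ℝ := {r | 0 ≤ r ∧ x + r • u ∈ L} with hT
  have hcont : Continuous fun r : ℝ => x + r • u := by fun_prop
  have hTc : IsClosed T := isClosed_Ici.inter (hL.isClosed.preimage hcont)
  have hTb : BddAbove T := by
    obtain ⟨R, hR⟩ := hL.isBounded.exists_norm_le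
    refine ⟨(R + ‖x‖) / ‖u‖, fun r hr => ?_⟩
    rw [le_div_iff₀ (norm_pos_iff.2 hu)]
    have h1 := hR _ hr.2
    have h2 : ‖r • u‖ ≤ ‖x + r • u‖ + ‖x‖ := by
      simpa using norm_sub_le (x + r • u) x
    rw [norm_smul, Real.norm_of_nonneg hr.1] at h2
    linarith
  have hTn : T.Nonempty := ⟨0, le_rfl, by simpa using hx⟩
  have hm := hTc.csSup_mem hTn hTb
  refine ⟨sSup T, hm.1, ?_⟩
  rw [hL.isClosed.frontier_eq]
  refine ⟨hm.2, fun hint => ?_⟩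
  have hnhds : ∀ᶠ r in nhds (sSup T), x + r • u ∈ L :=
    hcont.continuousAt.eventually (mem_interior_iff_mem_nhds.1 hint)
  obtain ⟨r, hr, hr'⟩ :=
    ((hnhds.filter_mono nhdsWithin_le_nhds).and self_mem_nhdsWithin :
      ∀ᶠ r in nhdsWithin (sSup T) (Set.Ioi (sSup T)), _ ∧ r ∈ Set.Ioi (sSup T)).exists
  rw [Set.mem_Ioi] at hr'
  exact hr'.not_ge (le_csSup hTb ⟨hm.1.trans hr'.le, hr⟩)

/-- Perimeter is monotone: the nearest point map onto `K` is `1`-Lipschitz and maps the boundary of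
`L` onto a set containing the boundary of `K`, as the outer normal ray at a boundary point of `K`
leaves `L` through its boundary. -/
theorem perimeter_mono {K L : Set Plane} (hK : IsCompact K) (hKc : Convex ℝ K)
    (hKi : (interior K).Nonempty) (hL : IsCompact L) (hKL : K ⊆ L) :
    μH[1] (frontier K) ≤ μH[1] (frontier L) := by
  have hproj : ∀ y : Plane, ∃ p ∈ K, ∀ a ∈ K, inner ℝ (y - p) (a - p) ≤ 0 := by
    intro y
    obtain ⟨p, hp, h⟩ := exists_norm_eq_iInf_of_complete_convex (hKi.mono interior_subset)
      hK.isComplete hKc y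
    exact ⟨p, hp, (norm_eq_iInf_iff_real_inner_le_zero hKc hp).1 h⟩
  choose f hfK hf using hproj
  have hlip : LipschitzWith 1 f := by
    apply LipschitzWith.of_dist_le_mul
    intro y y'
    rw [NNReal.coe_one, one_mul, dist_eq_norm, dist_eq_norm]
    have h1 := hf y (f y') (hfK y')
    have h2 := hf y' (f y) (hfK y)
    have h3 : ‖f y - f y'‖ ^ 2 ≤ inner ℝ (y - y') (f y - f y') := by
      rw [← real_inner_self_eq_norm_sq]
      simp only [inner_sub_left, inner_sub_right] at h1 h2 ⊢
      linarith
    have h4 := real_inner_le_norm (y - y') (f y - f y')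
    by_contra! hlt
    have h5 : 0 < ‖f y - f y'‖ := (norm_nonneg _).trans_lt hlt
    nlinarith
  have hsub : frontier K ⊆ f '' frontier L := by
    intro x hx
    rw [hK.isClosed.frontier_eq] at hx
    obtain ⟨F, hF⟩ := geometric_hahn_banach_open_point hKc.interior isOpen_interior hx.2
    have hFle : ∀ a ∈ K, F a ≤ F x := by
      intro a ha
      have ha' : a ∈ closure (interior K) := by
        rw [hKc.closure_interior_eq_closure_of_nonempty_interior hKi]
        exact subset_closure ha
      exact closure_minimal (fun b hb => (hF b hb).le)
        (isClosed_le F.continuous continuous_const) ha'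
    set u : Plane := (InnerProductSpace.toDual ℝ Plane).symm F with hu
    have huF : ∀ a, inner ℝ u a = F a := fun a => by
      rw [hu, InnerProductSpace.toDual_symm_apply]
    have hu0 : u ≠ 0 := by
      intro h0
      obtain ⟨b, hb⟩ := hKi
      have := hF b hb
      rw [← huF, ← huF, h0] at this
      simp at this
    obtain ⟨r, hr, hy⟩ := exists_ray_exit hL (hKL hx.1) hu0
    refine ⟨_, hy, ?_⟩
    set y := x + r • u
    have h1 := hf y x hx.1
    have h2 := hFle (f y) (hfK y)
    rw [← huF, ← huF] at h2
    have h3 : inner ℝ (y - x) (f y - x) ≤ 0 := by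
      have : y - x = r • u := by simp [y]
      rw [this, inner_smul_left, inner_sub_right]
      simp
      nlinarith
    have h4 : ‖f y - x‖ ^ 2 ≤ 0 := by
      rw [← real_inner_self_eq_norm_sq]
      simp only [inner_sub_left, inner_sub_right] at h1 h3 ⊢
      have := real_inner_comm x y
      have := real_inner_comm (f y) x
      have := real_inner_comm (f y) y
      linarith
    have h5 : ‖f y - x‖ = 0 := by
      have := norm_nonneg (f y - x); nlinarith
    exact sub_eq_zero.1 (norm_eq_zero.1 h5)
  calc μH[1] (frontier K) ≤ μH[1] (f '' frontier L) := measure_mono hsub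
    _ ≤ ((1 : NNReal) : ENNReal) ^ (1 : ℝ) * μH[1] (frontier L) :=
      hlip.lipschitzOnWith.hausdorffMeasure_image_le zero_le_one
    _ = μH[1] (frontier L) := by simp

theorem mul_perimeter_le {K L : Set Plane} (hK : IsCompact K) (hKc : Convex ℝ K)
    (hKi : (interior K).Nonempty) (hL : IsCompact L) {s : ℝ} (hs : 0 < s) (c : Plane)
    (hKL : AffineMap.homothety c s '' K ⊆ L) :
    ENNReal.ofReal s * μH[1] (frontier K) ≤ μH[1] (frontier L) := by
  let e : Plane ≃ₜ Plane :=
    ((Homeomorph.subRight c).trans (Homeomorph.smulOfNeZero s hs.ne')).trans (Homeomorph.addRight c)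
  have hcoe : ⇑e = ⇑(AffineMap.homothety c s) := by
    ext1 y
    simp [e, AffineMap.homothety_apply]
  have h1 : frontier (AffineMap.homothety c s '' K) = AffineMap.homothety c s '' frontier K := by
    rw [← hcoe, Homeomorph.image_frontier]
  have h2 : μH[1] (frontier (AffineMap.homothety c s '' K)) =
      ENNReal.ofReal s * μH[1] (frontier K) := by
    rw [h1, hausdorffMeasure_homothety_image zero_le_one c hs.ne', NNReal.rpow_one,
      ENNReal.smul_def, smul_eq_mul]
    congr 1
    rw [← enorm_eq_nnnorm, ← ofReal_norm, Real.norm_of_nonneg hs.le]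
  rw [← h2]
  refine perimeter_mono ?_ (hKc.affine_image _) ?_ hL hKL
  · exact hK.image (by rw [← hcoe]; exact e.continuous)
  · rw [← hcoe, ← Homeomorph.image_interior]
    exact hKi.image _

/-! ### Power diagrams and equal areas -/

/-- The cell of `i` in the power diagram of `C` with sites `z` and weights `w`: the points of `C` at
which the affine function `⟪z i, x⟫ + w i` dominates the others. Up to normalisation of the
weights, these are the inequalities `‖x - z i‖² - r i ≤ ‖x - z j‖² - r j`. -/
def cell {n : ℕ} (C : Set Plane) (z : Fin n → Plane) (w : Fin n → ℝ) (i : Fin n) : Set Plane :=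
  {x | x ∈ C ∧ ∀ j, inner ℝ (z j) x + w j ≤ inner ℝ (z i) x + w i}

theorem cell_subset {n : ℕ} {C : Set Plane} {z : Fin n → Plane} {w : Fin n → ℝ} {i : Fin n} :
    cell C z w i ⊆ C := fun _ hx => hx.1

theorem isClosed_halfPlanes {n : ℕ} (z : Fin n → Plane) (w : Fin n → ℝ) (i : Fin n) :
    IsClosed {x | ∀ j, inner ℝ (z j) x + w j ≤ inner ℝ (z i) x + w i} := by
  simp only [Set.ofPred_forall]
  exact isClosed_iInter fun j => isClosed_le (by fun_prop) (by fun_prop)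

theorem isCompact_cell {n : ℕ} {C : Set Plane} (hC : IsCompact C) (z : Fin n → Plane)
    (w : Fin n → ℝ) (i : Fin n) : IsCompact (cell C z w i) :=
  hC.inter_right (isClosed_halfPlanes z w i)

theorem convex_cell {n : ℕ} {C : Set Plane} (hC : Convex ℝ C) (z : Fin n → Plane)
    (w : Fin n → ℝ) (i : Fin n) : Convex ℝ (cell C z w i) := by
  refine hC.inter (t := {x | ∀ j, inner ℝ (z j) x + w j ≤ inner ℝ (z i) x + w i}) ?_
  simp only [Set.ofPred_forall]
  refine convex_iInter fun j => ?_
  intro x hx y hy a b ha hb hab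
  simp only [Set.mem_ofPred_eq, inner_add_right, inner_smul_right] at hx hy ⊢
  have h1 := mul_le_mul_of_nonneg_left hx ha
  have h2 := mul_le_mul_of_nonneg_left hy hb
  have e1 : w j = a * w j + b * w j := by rw [← add_mul, hab, one_mul]
  have e2 : w i = a * w i + b * w i := by rw [← add_mul, hab, one_mul]
  rw [e1, e2]
  linarith

theorem iUnion_cell {n : ℕ} [NeZero n] (C : Set Plane) (z : Fin n → Plane) (w : Fin n → ℝ) :
    ⋃ i, cell C z w i = C := by
  apply Set.Subset.antisymm (Set.iUnion_subset fun i => cell_subset)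
  intro x hx
  obtain ⟨i, -, hi⟩ := Finset.exists_max_image Finset.univ (fun i => inner ℝ (z i) x + w i)
    Finset.univ_nonempty
  exact Set.mem_iUnion.2 ⟨i, hx, fun j => hi j (Finset.mem_univ j)⟩

theorem volume_line {a : Plane} (ha : a ≠ 0) (b : ℝ) :
    volume {x : Plane | inner ℝ a x = b} = 0 := by
  set s : AffineSubspace ℝ Plane :=
    (AffineSubspace.mk' b ⊥).comap (innerₛₗ ℝ a).toAffineMap with hs
  have hmem : ∀ x, x ∈ s ↔ inner ℝ a x = b := by
    intro x
    rw [hs, AffineSubspace.mem_comap, AffineSubspace.mem_mk']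
    simp [sub_eq_zero]
  have h1 : {x : Plane | inner ℝ a x = b} = s := by
    ext x; exact (hmem x).symm
  rw [h1]
  apply Measure.addHaar_affineSubspace
  intro htop
  have h2 : ∀ x, inner ℝ a x = b := fun x => (hmem x).1 (htop ▸ AffineSubspace.mem_top ℝ _ x)
  have h3 := h2 0
  have h4 := h2 a
  rw [inner_zero_right] at h3
  rw [← h3] at h4
  exact ha (inner_self_eq_zero.1 h4)

theorem volume_tie {n : ℕ} {z : Fin n → Plane} (hz : Function.Injective z) (w : Fin n → ℝ)
    {i j : Fin n} (hij : i ≠ j) :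
    volume {x : Plane | inner ℝ (z i) x + w i = inner ℝ (z j) x + w j} = 0 := by
  have : {x : Plane | inner ℝ (z i) x + w i = inner ℝ (z j) x + w j} =
      {x : Plane | inner ℝ (z i - z j) x = w j - w i} := by
    ext x
    simp only [Set.mem_ofPred_eq, inner_sub_left]
    constructor <;> intro h <;> linarith
  rw [this]
  exact volume_line (sub_ne_zero.2 (hz.ne hij)) _

theorem ae_no_tie {n : ℕ} {z : Fin n → Plane} (hz : Function.Injective z) (w : Fin n → ℝ) :
    ∀ᵐ x : Plane, ∀ i j, i ≠ j → inner ℝ (z i) x + w i ≠ inner ℝ (z j) x + w j := by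
  rw [ae_all_iff]; intro i
  rw [ae_all_iff]; intro j
  by_cases hij : i = j
  · simp [hij]
  · rw [ae_iff]
    simpa [hij] using volume_tie hz w hij

theorem volume_cell_inter {n : ℕ} {C : Set Plane} {z : Fin n → Plane}
    (hz : Function.Injective z) (w : Fin n → ℝ) {i j : Fin n} (hij : i ≠ j) :
    volume (cell C z w i ∩ cell C z w j) = 0 :=
  measure_mono_null (fun _ hx => le_antisymm (hx.2.2 i) (hx.1.2 j)) (volume_tie hz w hij)

theorem volume_cell_ne_top {n : ℕ} {C : Set Plane} (hC : IsCompact C) (z : Fin n → Plane)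
    (w : Fin n → ℝ) (i : Fin n) : volume (cell C z w i) ≠ ⊤ :=
  (isCompact_cell hC z w i).measure_lt_top.ne

theorem sum_area_cell {n : ℕ} [NeZero n] {C : Set Plane} (hC : IsCompact C)
    {z : Fin n → Plane} (hz : Function.Injective z) (w : Fin n → ℝ) :
    ∑ i, volume.real (cell C z w i) = volume.real C := by
  have h := measure_iUnion₀ (μ := (volume : Measure Plane)) (f := cell C z w)
    (fun i j hij => volume_cell_inter hz w hij)
    (fun i => (isCompact_cell hC z w i).measurableSet.nullMeasurableSet)
  rw [iUnion_cell, tsum_fintype] at h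
  rw [Measure.real, h, ENNReal.toReal_sum fun i _ => volume_cell_ne_top hC z w i]
  rfl

/-- Areas of cells depend continuously on the sites and weights, by dominated convergence: off the
null set of ties, membership of a point in a cell is eventually constant. -/
theorem tendsto_area_cell {n : ℕ} {C : Set Plane} (hC : IsCompact C) {ι : Type*}
    {F : Filter ι} [F.IsCountablyGenerated] {zs : ι → Fin n → Plane} {ws : ι → Fin n → ℝ}
    {z : Fin n → Plane} {w : Fin n → ℝ} (hz : Function.Injective z)
    (hzs : Filter.Tendsto zs F (nhds z)) (hws : Filter.Tendsto ws F (nhds w)) (i : Fin n) :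
    Filter.Tendsto (fun m => volume.real (cell C (zs m) (ws m) i)) F
      (nhds (volume.real (cell C z w i))) := by
  apply (ENNReal.tendsto_toReal (volume_cell_ne_top hC z w i)).comp
  apply tendsto_measure_of_ae_tendsto_indicator F
    (isCompact_cell hC z w i).measurableSet
    (fun m => (isCompact_cell hC _ _ i).measurableSet) hC.measurableSet hC.measure_lt_top.ne
    (Filter.Eventually.of_forall fun m => cell_subset)
  filter_upwards [ae_no_tie hz w] with x hx
  have hl : ∀ j, Filter.Tendsto (fun m => inner ℝ (zs m j) x + ws m j) F
      (nhds (inner ℝ (z j) x + w j)) := fun j =>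
    ((tendsto_pi_nhds.1 hzs j).inner tendsto_const_nhds).add (tendsto_pi_nhds.1 hws j)
  by_cases hxC : x ∈ C
  swap
  · exact Filter.Eventually.of_forall fun m => ⟨fun h => absurd h.1 hxC, fun h => absurd h.1 hxC⟩
  by_cases hxi : x ∈ cell C z w i
  · have h1 : ∀ᶠ m in F, ∀ j, inner ℝ (zs m j) x + ws m j ≤ inner ℝ (zs m i) x + ws m i := by
      rw [Filter.eventually_all]
      intro j
      by_cases hj : j = i
      · subst hj; simp
      · exact ((hl j).eventually_lt (hl i)
          (lt_of_le_of_ne (hxi.2 j) (hx j i hj))).mono fun m hm => hm.le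
    exact h1.mono fun m hm => ⟨fun _ => hxi, fun _ => ⟨hxC, hm⟩⟩
  · have h2 : ∃ j, inner ℝ (z i) x + w i < inner ℝ (z j) x + w j := by
      by_contra! hc
      exact hxi ⟨hxC, hc⟩
    obtain ⟨j, hj⟩ := h2
    exact ((hl i).eventually_lt (hl j) hj).mono fun m hm =>
      ⟨fun h => absurd (h.2 j) (not_le.2 hm), fun h => absurd h hxi⟩

theorem exists_strict_point {n : ℕ} {C : Set Plane} (hCc : Convex ℝ C)
    {z : Fin n → Plane} (hz : Function.Injective z) {w : Fin n → ℝ} {i : Fin n}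
    (hi : volume.real (cell C z w i) ≠ 0) :
    ∃ c ∈ interior C, ∀ j, j ≠ i → inner ℝ (z j) c + w j < inner ℝ (z i) c + w i := by
  by_contra! hc
  apply hi
  rw [Measure.real, ENNReal.toReal_eq_zero_iff]
  left
  have h1 : ∀ᵐ x : Plane, x ∉ frontier C := measure_eq_zero_iff_ae_notMem.1
    (hCc.addHaar_frontier volume)
  rw [measure_eq_zero_iff_ae_notMem]
  filter_upwards [h1, ae_no_tie hz w] with x hx hx' hxi
  have hint : x ∈ interior C := by
    by_contra hn
    exact hx ⟨subset_closure hxi.1, hn⟩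
  obtain ⟨j, hj, hle⟩ := hc x hint
  exact hx' j i hj (le_antisymm (hxi.2 j) hle)

/-- The weights `w` give all cells the same area. -/
def Fair {n : ℕ} (C : Set Plane) (z : Fin n → Plane) (w : Fin n → ℝ) : Prop :=
  ∀ i, volume.real (cell C z w i) = volume.real C / n

/-- Fair weights exist. Among the weights in a large box with `w 0 = 0` for which no cell other
than the cell of `0` is too large, take one of maximal sum: if the cell of some `i ≠ 0` were too small,
its weight could be increased. -/
theorem exists_fair {n : ℕ} [NeZero n] {C : Set Plane} (hC : IsCompact C)
    (hpos : 0 < volume.real C) {z : Fin n → Plane} (hz : Function.Injective z) :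
    ∃ w, w 0 = 0 ∧ Fair C z w := by
  classical
  have hn : (0 : ℝ) < n := by exact_mod_cast Nat.pos_of_ne_zero (NeZero.ne n)
  obtain ⟨R, hR⟩ : ∃ R, ∀ x ∈ C, ∀ j, |inner ℝ (z j) x| ≤ R := by
    obtain ⟨R, hR⟩ := hC.isBounded.exists_norm_le
    refine ⟨‖z‖ * R, fun x hx j => (abs_real_inner_le_norm _ _).trans ?_⟩
    exact mul_le_mul (norm_le_pi_norm z j) (hR x hx) (norm_nonneg _) (norm_nonneg _)
  set B : ℝ := 2 * |R| + 1 with hB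
  have hdiff : ∀ x ∈ C, ∀ i j, inner ℝ (z i) x - inner ℝ (z j) x < B := by
    intro x hx i j
    have h1 := abs_le.1 (hR x hx i)
    have h2 := abs_le.1 (hR x hx j)
    have := le_abs_self R
    linarith
  have hBpos : 0 < B := by positivity
  have hempty : ∀ (w : Fin n → ℝ) (i j : Fin n), w i + B ≤ w j → cell C z w i = ∅ := by
    intro w i j hij
    ext x
    simp only [Set.mem_empty_iff_false, iff_false]
    intro hx
    have := hx.2 j
    have := hdiff x hx.1 i j
    linarith
  set a : ℝ := volume.real C / n with ha
  have hapos : 0 < a := by positivity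
  have hcont : ∀ i, Continuous fun w : Fin n → ℝ => volume.real (cell C z w i) := fun i =>
    continuous_iff_continuousAt.2 fun w =>
      tendsto_area_cell hC hz tendsto_const_nhds Filter.tendsto_id i
  set S : Set (Fin n → ℝ) := Set.Icc (fun _ => -B) (fun _ => B) ∩
    ({w | w 0 = 0} ∩ {w | ∀ i, i ≠ 0 → volume.real (cell C z w i) ≤ a}) with hS
  have hScomp : IsCompact S := by
    apply isCompact_Icc.inter_right
    apply (isClosed_eq (continuous_apply 0) continuous_const).inter
    simp only [Set.ofPred_forall]
    exact isClosed_iInter fun i => isClosed_iInter fun _ => isClosed_le (hcont i) continuous_const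
  have hSne : S.Nonempty := by
    refine ⟨fun i => if i = 0 then 0 else -B, ⟨fun i => ?_, fun i => ?_⟩, by simp, ?_⟩
    · simp only; split_ifs <;> linarith
    · simp only; split_ifs <;> linarith
    · intro i hi
      rw [hempty _ i 0 (by simp [hi])]
      simpa using hapos.le
  obtain ⟨w, hw, hmax⟩ := hScomp.exists_isMaxOn hSne
    (f := fun w : Fin n → ℝ => ∑ i, w i) (by fun_prop)
  have hsum := sum_area_cell hC hz w
  have hna : (n : ℝ) * a = volume.real C := by rw [ha]; field_simp
  have hltB : ∀ i, w i < B := by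
    intro i
    by_contra! hge
    have h0 : volume.real (cell C z w 0) = 0 := by
      rw [hempty w 0 i (by rw [hw.2.1]; simpa using hge)]; simp
    have : ∑ i, volume.real (cell C z w i) < ∑ i : Fin n, a := by
      apply Finset.sum_lt_sum
      · intro j _
        by_cases hj : j = 0
        · rw [hj, h0]; exact hapos.le
        · exact hw.2.2 j hj
      · exact ⟨0, Finset.mem_univ _, by rw [h0]; exact hapos⟩
    rw [hsum] at this
    simp [hna] at this
  have heq : ∀ i, i ≠ 0 → volume.real (cell C z w i) = a := by
    intro i hi
    by_contra hne
    have hlt : volume.real (cell C z w i) < a := lt_of_le_of_ne (hw.2.2 i hi) hne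
    -- If a cell is too small, its weight can be raised a little without leaving `S`.
    have hc : Continuous fun δ : ℝ => Function.update w i (w i + δ) := by fun_prop
    have h1 : ∀ᶠ δ in nhds (0 : ℝ),
        volume.real (cell C z (Function.update w i (w i + δ)) i) < a := by
      apply ((hcont i).comp hc).continuousAt.eventually_lt continuousAt_const
      simpa using hlt
    have h2 : ∀ᶠ δ in nhds (0 : ℝ), w i + δ < B := by
      apply ContinuousAt.eventually_lt (by fun_prop) continuousAt_const
      simpa using hltB i
    obtain ⟨δ, ⟨hδ1, hδ2⟩, hδ⟩ := (((h1.and h2).filter_mono nhdsWithin_le_nhds).and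
      self_mem_nhdsWithin : ∀ᶠ δ in nhdsWithin (0 : ℝ) (Set.Ioi 0), _ ∧ δ ∈ Set.Ioi (0 : ℝ)).exists
    rw [Set.mem_Ioi] at hδ
    have hmem : Function.update w i (w i + δ) ∈ S := by
      refine ⟨⟨fun j => ?_, fun j => ?_⟩, ?_, fun j hj => ?_⟩
      · have h3 := hw.1.1 j
        by_cases hj : j = i
        · subst hj; simp at h3 ⊢; linarith
        · simpa [hj] using h3
      · by_cases hj : j = i
        · subst hj; simpa using hδ2.le
        · simpa [hj] using (hltB j).le
      · simpa [hi.symm] using hw.2.1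
      · by_cases hji : j = i
        · subst hji; exact hδ1.le
        · refine le_trans (measureReal_mono ?_ (volume_cell_ne_top hC z w j)) (hw.2.2 j hj)
          intro x hx
          refine ⟨hx.1, fun k => ?_⟩
          have h4 := hx.2 k
          simp only [ne_eq, hji, not_false_eq_true, Function.update_of_ne] at h4
          by_cases hk : k = i
          · subst hk; simp at h4; linarith
          · simpa [hk] using h4
    have h5 := hmax hmem
    simp only [Set.mem_ofPred_eq] at h5
    rw [Finset.sum_update_of_mem (Finset.mem_univ i),
      ← Finset.add_sum_erase _ w (Finset.mem_univ i), Finset.sdiff_singleton_eq_erase] at h5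
    linarith
  refine ⟨w, hw.2.1, fun i => ?_⟩
  by_cases hi : i = 0
  · subst hi
    have h6 := Finset.add_sum_erase Finset.univ (fun i => volume.real (cell C z w i))
      (Finset.mem_univ 0)
    rw [hsum, Finset.sum_congr rfl (fun j hj => heq j (Finset.ne_of_mem_erase hj))] at h6
    have h7 := Finset.add_sum_erase Finset.univ (fun _ : Fin n => a) (Finset.mem_univ 0)
    simp only [Finset.sum_const, Finset.card_univ, Fintype.card_fin, nsmul_eq_mul] at h6 h7
    linarith
  · exact heq i hi

/-! ### Uniqueness of equal area diagrams and continuity of perimeters -/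

/-- Fair weights are unique up to a common constant. Let `I` be the set of indices where `w' - w` is
maximal. If there are other indices, then the points where the functions with index in `I` are just
below the others for `w` pass to cells with index in `I` for `w'`; by connectedness they form a
nonempty open set, so that those cells gain area. -/
theorem fair_unique {n : ℕ} [NeZero n] {C : Set Plane} (hC : IsCompact C) (hCc : Convex ℝ C)
    (hpos : 0 < volume.real C) {z : Fin n → Plane} (hz : Function.Injective z)
    {w w' : Fin n → ℝ} (hw : Fair C z w) (hw' : Fair C z w') (i j : Fin n) :
    w' i - w i = w' j - w j := by
  classical
  have hn : (0 : ℝ) < n := by exact_mod_cast Nat.pos_of_ne_zero (NeZero.ne n)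
  have hapos : 0 < volume.real C / n := by positivity
  obtain ⟨m, -, hm⟩ := Finset.exists_max_image Finset.univ (fun i => w' i - w i)
    Finset.univ_nonempty
  replace hm : ∀ i, w' i - w i ≤ w' m - w m := fun i => hm i (Finset.mem_univ i)
  set D := w' m - w m with hD
  suffices h : ∀ i, w' i - w i = D by rw [h, h]
  by_contra! hne
  obtain ⟨l, hl⟩ := hne
  set I : Finset (Fin n) := Finset.univ.filter fun i => w' i - w i = D with hI
  have hIn : I.Nonempty := ⟨m, by simp [hI, hD]⟩
  have hJn : Iᶜ.Nonempty := ⟨l, by simp [hI, hl]⟩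
  have hIm : ∀ i, i ∈ I ↔ w' i - w i = D := fun i => by simp [hI]
  obtain ⟨q, hq, hqmax⟩ := Finset.exists_max_image Iᶜ (fun i => w' i - w i) hJn
  set δ := D - (w' q - w q) with hδ
  have hδpos : 0 < δ := by
    have h1 := hm q
    have h2 : w' q - w q ≠ D := fun h => (Finset.mem_compl.1 hq) ((hIm q).2 h)
    have := lt_of_le_of_ne h1 h2
    linarith
  have hJ : ∀ j, j ∉ I → w' j - w j ≤ D - δ := fun j hj => by
    have := hqmax j (Finset.mem_compl.2 hj)
    linarith
  let f : Plane → ℝ := fun x => I.sup' hIn fun i => inner ℝ (z i) x + w i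
  let h : Plane → ℝ := fun x => Iᶜ.sup' hJn fun i => inner ℝ (z i) x + w i
  have hf : Continuous f := Continuous.finset_sup'_apply hIn fun i _ => by fun_prop
  have hh : Continuous h := Continuous.finset_sup'_apply hJn fun i _ => by fun_prop
  -- Cells with index in `I` can only grow when passing from `w` to `w'`; as their areas do not
  -- change, what they gain is null.
  have hgain : ∀ i ∈ I, volume (cell C z w' i \ cell C z w i) = 0 := by
    intro i hi
    have hsub : cell C z w i ⊆ cell C z w' i := by
      intro x hx
      refine ⟨hx.1, fun j => ?_⟩
      have h1 := hx.2 j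
      have h2 := hm j
      have h3 := (hIm i).1 hi
      linarith
    rw [measure_sdiff hsub (isCompact_cell hC z w i).measurableSet.nullMeasurableSet
      (volume_cell_ne_top hC z w i)]
    have h4 : volume (cell C z w' i) = volume (cell C z w i) := by
      rw [← ENNReal.toReal_eq_toReal_iff' (volume_cell_ne_top hC z w' i)
        (volume_cell_ne_top hC z w i)]
      exact (hw' i).trans (hw i).symm
    rw [h4, tsub_self]
  set O : Set Plane := interior C ∩ {x | h x - δ < f x ∧ f x < h x} with hO
  have hOopen : IsOpen O := isOpen_interior.inter
    ((isOpen_lt (by fun_prop) hf).inter (isOpen_lt hf hh))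
  have hOsub : O ⊆ ⋃ i ∈ I, (cell C z w' i \ cell C z w i) := by
    intro x hx
    obtain ⟨i, hi, hfi⟩ := Finset.exists_mem_eq_sup' hIn fun i => inner ℝ (z i) x + w i
    obtain ⟨j, hj, hhj⟩ := Finset.exists_mem_eq_sup' hJn fun i => inner ℝ (z i) x + w i
    have e1 : f x = inner ℝ (z i) x + w i := hfi
    have e2 : h x = inner ℝ (z j) x + w j := hhj
    have h1 := hx.2.1
    have h2 := hx.2.2
    refine Set.mem_iUnion₂.2 ⟨i, hi, ⟨interior_subset hx.1, fun k => ?_⟩, fun hc => ?_⟩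
    · have h3 := (hIm i).1 hi
      by_cases hk : k ∈ I
      · have h4 := (hIm k).1 hk
        have h5 : inner ℝ (z k) x + w k ≤ f x :=
          Finset.le_sup' (fun i => inner ℝ (z i) x + w i) hk
        linarith
      · have h4 := hJ k hk
        have h5 : inner ℝ (z k) x + w k ≤ h x :=
          Finset.le_sup' (fun i => inner ℝ (z i) x + w i) (Finset.mem_compl.2 hk)
        linarith
    · have := hc.2 j
      linarith
  have hOnull : volume O = 0 := by
    apply measure_mono_null hOsub
    exact (measure_biUnion_null_iff I.countable_toSet).2 hgain
  have hOne : O.Nonempty := by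
    obtain ⟨u, hu, hu'⟩ := exists_strict_point hCc hz (w := w) (i := m)
      (by rw [hw m]; exact hapos.ne')
    obtain ⟨v, hv, hv'⟩ := exists_strict_point hCc hz (w := w) (i := l)
      (by rw [hw l]; exact hapos.ne')
    have hmI : m ∈ I := (hIm m).2 rfl
    have hlI : l ∉ I := fun hc => hl ((hIm l).1 hc)
    have hu2 : h u < f u := by
      refine lt_of_lt_of_le ((Finset.sup'_lt_iff hJn).2 fun j hj => hu' j ?_)
        (Finset.le_sup' (fun i => inner ℝ (z i) u + w i) hmI)
      rintro rfl
      exact (Finset.mem_compl.1 hj) hmI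
    have hv2 : f v < h v := by
      refine lt_of_lt_of_le ((Finset.sup'_lt_iff hIn).2 fun j hj => hv' j ?_)
        (Finset.le_sup' (fun i => inner ℝ (z i) v + w i) (Finset.mem_compl.2 hlI))
      rintro rfl
      exact hlI hj
    have hival := hCc.interior.isPreconnected.intermediate_value hv hu
      (f := fun x => f x - h x) (by fun_prop)
    have hmem : max (-δ / 2) (f v - h v) ∈ Set.Icc (f v - h v) (f u - h u) :=
      ⟨le_max_right _ _, max_le (by linarith) (by linarith)⟩
    obtain ⟨x, hx, hxe⟩ := hival hmem
    simp only at hxe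
    refine ⟨x, hx, ?_, ?_⟩
    · have := le_max_left (-δ / 2) (f v - h v)
      linarith
    · have : max (-δ / 2) (f v - h v) < 0 := max_lt (by linarith) (by linarith)
      linarith
  exact (hOopen.measure_pos volume hOne).ne' hOnull

theorem cell_eq_of_fair {n : ℕ} [NeZero n] {C : Set Plane} (hC : IsCompact C)
    (hCc : Convex ℝ C) (hpos : 0 < volume.real C) {z : Fin n → Plane}
    (hz : Function.Injective z) {w w' : Fin n → ℝ} (hw : Fair C z w) (hw' : Fair C z w')
    (i : Fin n) : cell C z w i = cell C z w' i := by
  ext x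
  refine and_congr Iff.rfl (forall_congr' fun j => ?_)
  have := fair_unique hC hCc hpos hz hw hw' i j
  constructor <;> intro h <;> linarith

/-- If the functions of two diagrams differ by at most `η` on `C`, and the function of `i` dominates
the others at `c` with enough margin, then the homothety of ratio `s` at `c` maps the cell of `i` in
either diagram into its cell in the other. -/
theorem homothety_cell_subset {n : ℕ} {C : Set Plane} (hCc : Convex ℝ C)
    {z z' : Fin n → Plane} {w w' : Fin n → ℝ} {i : Fin n} {c : Plane} (hc : c ∈ C) {s η : ℝ}
    (hs : 0 < s) (hs1 : s < 1)
    (hcη : ∀ j, j ≠ i → inner ℝ (z j) c + w j + 2 * η ≤ (1 - s) *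
      (inner ℝ (z i) c + w i) + s * (inner ℝ (z j) c + w j))
    (hη : ∀ x ∈ C, ∀ j, |(inner ℝ (z' j) x + w' j) - (inner ℝ (z j) x + w j)| ≤ η) :
    AffineMap.homothety c s '' cell C z w i ⊆ cell C z' w' i ∧
    AffineMap.homothety c s '' cell C z' w' i ⊆ cell C z w i := by
  have hη0 : 0 ≤ η := (abs_nonneg _).trans (hη c hc i)
  have hform : ∀ x, AffineMap.homothety c s x = s • x + (1 - s) • c := by
    intro x
    simp only [AffineMap.homothety_apply, vsub_eq_sub, vadd_eq_add]
    module
  have hinC : ∀ x ∈ C, s • x + (1 - s) • c ∈ C := fun x hx =>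
    hCc hx hc hs.le (by linarith) (by ring)
  have hval : ∀ j x, inner ℝ (z j) (s • x + (1 - s) • c) + w j =
      s * (inner ℝ (z j) x + w j) + (1 - s) * (inner ℝ (z j) c + w j) := by
    intro j x
    rw [inner_add_right, inner_smul_right, inner_smul_right]
    ring
  constructor
  · rintro _ ⟨x, hx, rfl⟩
    rw [hform]
    refine ⟨hinC x hx.1, fun j => ?_⟩
    by_cases hj : j = i
    · rw [hj]
    have h1 := abs_le.1 (hη _ (hinC x hx.1) j)
    have h2 := abs_le.1 (hη _ (hinC x hx.1) i)
    have h3 := hcη j hj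
    have h4 := mul_le_mul_of_nonneg_left (hx.2 j) hs.le
    rw [hval] at h1 h2
    linarith
  · rintro _ ⟨x, hx, rfl⟩
    rw [hform]
    refine ⟨hinC x hx.1, fun j => ?_⟩
    by_cases hj : j = i
    · rw [hj]
    have h1 := abs_le.1 (hη x hx.1 j)
    have h2 := abs_le.1 (hη x hx.1 i)
    have h3 := hcη j hj
    have h5 : inner ℝ (z j) x + w j ≤ inner ℝ (z i) x + w i + 2 * η := by
      have := hx.2 j
      linarith
    have h4 := mul_le_mul_of_nonneg_left h5 hs.le
    have h6 : s * (2 * η) ≤ 2 * η := by nlinarith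
    rw [hval, hval]
    linarith

theorem eventually_homothety_cell_subset {n : ℕ} {C : Set Plane} (hC : IsCompact C)
    (hCc : Convex ℝ C) {zs : ℕ → Fin n → Plane} {ws : ℕ → Fin n → ℝ}
    {z : Fin n → Plane} {w : Fin n → ℝ} (hz : Function.Injective z)
    (hzs : Filter.Tendsto zs Filter.atTop (nhds z))
    (hws : Filter.Tendsto ws Filter.atTop (nhds w)) {i : Fin n}
    (hi : volume.real (cell C z w i) ≠ 0) {s : ℝ} (hs : 0 < s) (hs1 : s < 1) :
    ∃ c, ∀ᶠ m in Filter.atTop,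
      AffineMap.homothety c s '' cell C z w i ⊆ cell C (zs m) (ws m) i ∧
      AffineMap.homothety c s '' cell C (zs m) (ws m) i ⊆ cell C z w i := by
  obtain ⟨c, hc, hlt⟩ := exists_strict_point hCc hz hi
  refine ⟨c, ?_⟩
  have hη : ∃ η : ℝ, 0 < η ∧ ∀ j, j ≠ i → 2 * η ≤ (1 - s) *
      ((inner ℝ (z i) c + w i) - (inner ℝ (z j) c + w j)) := by
    have h1 : ∀ᶠ η in nhds (0 : ℝ), ∀ j, j ≠ i → 2 * η ≤ (1 - s) *
      ((inner ℝ (z i) c + w i) - (inner ℝ (z j) c + w j)) := by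
      rw [Filter.eventually_all]
      intro j
      by_cases hj : j = i
      · simp [hj]
      · have h2 : ∀ᶠ η in nhds (0 : ℝ), 2 * η < (1 - s) *
          ((inner ℝ (z i) c + w i) - (inner ℝ (z j) c + w j)) := by
          apply ContinuousAt.eventually_lt (by fun_prop) continuousAt_const
          have := hlt j hj
          rw [mul_zero]
          exact mul_pos (by linarith) (by linarith)
        exact h2.mono fun η h _ => h.le
    obtain ⟨η, h2, h3⟩ := ((h1.filter_mono nhdsWithin_le_nhds).and
      self_mem_nhdsWithin : ∀ᶠ η in nhdsWithin (0 : ℝ) (Set.Ioi 0), _ ∧ η ∈ Set.Ioi (0 : ℝ)).exists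
    exact ⟨η, h3, h2⟩
  obtain ⟨η, hη, hηc⟩ := hη
  obtain ⟨R, hR⟩ := hC.isBounded.exists_norm_le
  have hR0 : 0 ≤ R := (norm_nonneg _).trans (hR c (interior_subset hc))
  have hsmall : ∀ᶠ m in Filter.atTop, ‖zs m - z‖ * R + ‖ws m - w‖ < η := by
    have h1 : Filter.Tendsto (fun m => ‖zs m - z‖ * R + ‖ws m - w‖) Filter.atTop
        (nhds (0 * R + 0)) :=
      ((tendsto_iff_norm_sub_tendsto_zero.1 hzs).mul_const R).add
        (tendsto_iff_norm_sub_tendsto_zero.1 hws)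
    exact h1.eventually_lt_const (by simpa using hη)
  filter_upwards [hsmall] with m hm
  refine homothety_cell_subset hCc (interior_subset hc) hs hs1 (η := η) (fun j hj => ?_)
    (fun x hx j => ?_)
  · have := hηc j hj
    linarith
  · have e : (inner ℝ (zs m j) x + ws m j) - (inner ℝ (z j) x + w j) =
        inner ℝ ((zs m - z) j) x + (ws m - w) j := by
      simp only [Pi.sub_apply, inner_sub_left]; ring
    rw [e]
    have h1 : |inner ℝ ((zs m - z) j) x| ≤ ‖zs m - z‖ * R :=
      (abs_real_inner_le_norm _ _).trans
        (mul_le_mul (norm_le_pi_norm _ j) (hR x hx) (norm_nonneg _) (norm_nonneg _))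
    have h2 : |(ws m - w) j| ≤ ‖ws m - w‖ := norm_le_pi_norm (ws m - w) j
    exact (abs_add_le _ _).trans (by linarith)

theorem interior_cell_nonempty {n : ℕ} {C : Set Plane} (hCc : Convex ℝ C)
    {z : Fin n → Plane} {w : Fin n → ℝ} {i : Fin n} (hi : volume.real (cell C z w i) ≠ 0) :
    (interior (cell C z w i)).Nonempty := by
  by_contra hne
  rw [Set.not_nonempty_iff_eq_empty] at hne
  apply hi
  rw [Measure.real, ENNReal.toReal_eq_zero_iff]
  left
  refine measure_mono_null (fun x hx => ?_) ((convex_cell hCc z w i).addHaar_frontier volume)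
  exact ⟨subset_closure hx, by rw [hne]; exact id⟩

/-- Weak inequalities between perimeters of nondegenerate cells pass to limits of diagrams. -/
theorem perimeter_le_of_tendsto {n : ℕ} {C : Set Plane} (hC : IsCompact C)
    (hCc : Convex ℝ C) {zs : ℕ → Fin n → Plane} {ws : ℕ → Fin n → ℝ}
    {z : Fin n → Plane} {w : Fin n → ℝ} (hz : Function.Injective z)
    (hzs : Filter.Tendsto zs Filter.atTop (nhds z))
    (hws : Filter.Tendsto ws Filter.atTop (nhds w))
    (hpos : ∀ i, volume.real (cell C z w i) ≠ 0)
    (hpos' : ∀ m i, volume.real (cell C (zs m) (ws m) i) ≠ 0) {i j : Fin n}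
    (hle : ∀ m, μH[1] (frontier (cell C (zs m) (ws m) j)) ≤
      μH[1] (frontier (cell C (zs m) (ws m) i))) :
    μH[1] (frontier (cell C z w j)) ≤ μH[1] (frontier (cell C z w i)) := by
  have key : ∀ s : ℝ, 0 < s → s < 1 → ENNReal.ofReal (s * s) * μH[1] (frontier (cell C z w j)) ≤
      μH[1] (frontier (cell C z w i)) := by
    intro s hs hs1
    obtain ⟨c, hc⟩ := eventually_homothety_cell_subset hC hCc hz hzs hws (hpos j) hs hs1
    obtain ⟨d, hd⟩ := eventually_homothety_cell_subset hC hCc hz hzs hws (hpos i) hs hs1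
    obtain ⟨m, hcm, hdm⟩ := (hc.and hd).exists
    have h1 := mul_perimeter_le (isCompact_cell hC z w j) (convex_cell hCc z w j)
      (interior_cell_nonempty hCc (hpos j)) (isCompact_cell hC _ _ j) hs c hcm.1
    have h2 := mul_perimeter_le (isCompact_cell hC _ _ i) (convex_cell hCc _ _ i)
      (interior_cell_nonempty hCc (hpos' m i)) (isCompact_cell hC z w i) hs d hdm.2
    rw [ENNReal.ofReal_mul hs.le, mul_assoc]
    exact (mul_le_mul_right (h1.trans (hle m)) _).trans h2
  have hlim : Filter.Tendsto (fun s : ℝ => ENNReal.ofReal (s * s) *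
      μH[1] (frontier (cell C z w j))) (nhdsWithin 1 (Set.Iio 1))
      (nhds (ENNReal.ofReal (1 * 1) * μH[1] (frontier (cell C z w j)))) := by
    apply Filter.Tendsto.mono_left _ nhdsWithin_le_nhds
    apply ENNReal.Tendsto.mul_const
    · exact ENNReal.tendsto_ofReal ((continuous_id.mul continuous_id).tendsto 1)
    · left; simp
  have h3 := le_of_tendsto hlim (b := μH[1] (frontier (cell C z w i))) (by
    filter_upwards [self_mem_nhdsWithin, nhdsWithin_le_nhds (lt_mem_nhds zero_lt_one)]
      with s hs1 hs0 using key s hs0 hs1)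
  simpa using h3

/-! ### Perimeters as functions of the sites -/

open Classical in
/-- Fair weights for `C` and the sites `z`, normalised by `w 0 = 0`, and `0` if there are none. -/
noncomputable def weight {n : ℕ} [NeZero n] (C : Set Plane) (z : Fin n → Plane) : Fin n → ℝ :=
  if h : ∃ w, w 0 = 0 ∧ Fair C z w then h.choose else 0

theorem weight_spec {n : ℕ} [NeZero n] {C : Set Plane} (hC : IsCompact C)
    (hpos : 0 < volume.real C) {z : Fin n → Plane} (hz : Function.Injective z) :
    weight C z 0 = 0 ∧ Fair C z (weight C z) := by
  have h := exists_fair hC hpos hz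
  rw [weight, dif_pos h]
  exact h.choose_spec

/-- The perimeter of the cell of `i` in the equal area power diagram of `C` with sites `z`. -/
noncomputable def per {n : ℕ} [NeZero n] (C : Set Plane) (z : Fin n → Plane) (i : Fin n) :
    ENNReal :=
  μH[1] (frontier (cell C z (weight C z) i))

theorem per_eq_of_fair {n : ℕ} [NeZero n] {C : Set Plane} (hC : IsCompact C)
    (hCc : Convex ℝ C) (hpos : 0 < volume.real C) {z : Fin n → Plane}
    (hz : Function.Injective z) {w : Fin n → ℝ} (hw : Fair C z w) (i : Fin n) :
    per C z i = μH[1] (frontier (cell C z w i)) := by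
  rw [per, cell_eq_of_fair hC hCc hpos hz (weight_spec hC hpos hz).2 hw]

/-- Permuting the sites permutes the perimeters. -/
theorem per_perm {n : ℕ} [NeZero n] {C : Set Plane} (hC : IsCompact C)
    (hCc : Convex ℝ C) (hpos : 0 < volume.real C) {z z' : Fin n → Plane}
    (hz : Function.Injective z) (hz' : Function.Injective z') (π : Equiv.Perm (Fin n))
    (hzz : ∀ i, z' (π i) = z i) (i : Fin n) : per C z' (π i) = per C z i := by
  have hcell : ∀ i, cell C z' (weight C z ∘ π.symm) (π i) = cell C z (weight C z) i := by
    intro i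
    ext x
    refine and_congr Iff.rfl ?_
    rw [← π.forall_congr_right]
    simp only [hzz, Function.comp_apply, Equiv.symm_apply_apply]
  have hfair : Fair C z' (weight C z ∘ π.symm) := by
    intro k
    obtain ⟨i, rfl⟩ := π.surjective k
    rw [hcell]
    exact (weight_spec hC hpos hz).2 i
  rw [per_eq_of_fair hC hCc hpos hz' hfair, hcell, per]

theorem Fair.ne_zero {n : ℕ} [NeZero n] {C : Set Plane} (hpos : 0 < volume.real C)
    {z : Fin n → Plane} {w : Fin n → ℝ} (hw : Fair C z w) (i : Fin n) :
    volume.real (cell C z w i) ≠ 0 := by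
  have hn : (0 : ℝ) < n := by exact_mod_cast Nat.pos_of_ne_zero (NeZero.ne n)
  rw [hw i]
  positivity

/-- Normalised fair weights are bounded in terms of the sites, because every cell is nonempty. -/
theorem Fair.norm_le {n : ℕ} [NeZero n] {C : Set Plane} (hpos : 0 < volume.real C)
    {z : Fin n → Plane} {w : Fin n → ℝ} (hw : Fair C z w) (hw0 : w 0 = 0) {R : ℝ}
    (hR : ∀ x ∈ C, ‖x‖ ≤ R) : ‖w‖ ≤ 2 * ‖z‖ * R := by
  have hne : ∀ i, (cell C z w i).Nonempty := by
    intro i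
    rw [Set.nonempty_iff_ne_empty]
    intro h
    exact hw.ne_zero hpos i (by rw [h]; simp)
  have hin : ∀ x ∈ C, ∀ j, |inner ℝ (z j) x| ≤ ‖z‖ * R := fun x hx j =>
    (abs_real_inner_le_norm _ _).trans
      (mul_le_mul (norm_le_pi_norm z j) (hR x hx) (norm_nonneg _) (norm_nonneg _))
  have hbd : ∀ i j, w j - w i ≤ 2 * ‖z‖ * R := by
    intro i j
    obtain ⟨x, hx⟩ := hne i
    have h1 := hx.2 j
    have h2 := abs_le.1 (hin x hx.1 i)
    have h3 := abs_le.1 (hin x hx.1 j)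
    linarith
  have h0 : 0 ≤ 2 * ‖z‖ * R := by simpa using hbd 0 0
  refine (pi_norm_le_iff_of_nonneg h0).2 fun j => abs_le.2 ⟨?_, ?_⟩
  · have := hbd j 0
    linarith
  · have := hbd 0 j
    linarith

/-- Weak inequalities between the perimeters are closed under convergence of the sites: the fair
weights are bounded, and limits of fair weights are fair. -/
theorem per_le_of_tendsto {n : ℕ} [NeZero n] {C : Set Plane} (hC : IsCompact C)
    (hCc : Convex ℝ C) (hpos : 0 < volume.real C) {zs : ℕ → Fin n → Plane}
    {z : Fin n → Plane} (hzsi : ∀ m, Function.Injective (zs m)) (hz : Function.Injective z)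
    (hzs : Filter.Tendsto zs Filter.atTop (nhds z)) {i j : Fin n}
    (hle : ∀ m, per C (zs m) j ≤ per C (zs m) i) : per C z j ≤ per C z i := by
  obtain ⟨R, hR⟩ := hC.isBounded.exists_norm_le
  obtain ⟨B, hB⟩ := (Metric.isBounded_range_of_tendsto zs hzs).exists_norm_le
  have hspec := fun m => weight_spec hC hpos (hzsi m)
  have hR0 : 0 ≤ R := by
    obtain ⟨x, hx⟩ : C.Nonempty := by
      rw [Set.nonempty_iff_ne_empty]
      rintro rfl
      simp at hpos
    exact (norm_nonneg x).trans (hR x hx)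
  have hbd : ∀ m, weight C (zs m) ∈ Metric.closedBall (0 : Fin n → ℝ) (2 * B * R) := by
    intro m
    rw [mem_closedBall_zero_iff]
    refine ((hspec m).2.norm_le hpos (hspec m).1 hR).trans ?_
    have := hB (zs m) ⟨m, rfl⟩
    gcongr
  obtain ⟨w, -, φ, hφ, hw⟩ := (isCompact_closedBall _ _).tendsto_subseq hbd
  have hzφ := hzs.comp hφ.tendsto_atTop
  have hfair : Fair C z w := by
    intro k
    have h1 := tendsto_area_cell hC hz hzφ hw k
    refine tendsto_nhds_unique h1 ?_
    simp only [Function.comp_apply, (hspec _).2 k]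
    exact tendsto_const_nhds
  rw [per_eq_of_fair hC hCc hpos hz hfair, per_eq_of_fair hC hCc hpos hz hfair]
  exact perimeter_le_of_tendsto hC hCc hz hzφ hw (hfair.ne_zero hpos)
    (fun m => (hspec _).2.ne_zero hpos) fun m => hle (φ m)

/-! ### The family of sites -/

/-- The sign of `i - j`. -/
def orderSign {n : ℕ} (i j : Fin n) : ℝ := if j < i then 1 else if i < j then -1 else 0

/-- The sites with parameter `t`. In the second coordinate, indices interact only if their first
coordinates differ by less than `1`. -/
noncomputable def site {n : ℕ} (t : Fin n → ℝ) (i : Fin n) : Plane :=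
  !₂[t i, ∑ j, orderSign i j * max 0 (1 - |t i - t j|)]

theorem continuous_site {n : ℕ} : Continuous (site : (Fin n → ℝ) → Fin n → Plane) := by
  refine continuous_pi fun i => ?_
  unfold site
  fun_prop

/-- If `t i = t j` with `i < j`, the second coordinates are sums with the same bump factors, and each
sign is at most the corresponding one for `j`, with strict inequality at `i`. -/
theorem site_injective {n : ℕ} (t : Fin n → ℝ) : Function.Injective (site t) := by
  suffices h : ∀ i j, i < j → site t i ≠ site t j by
    intro i j hij
    by_contra hne
    rcases lt_or_gt_of_ne hne with hl | hl
    · exact h i j hl hij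
    · exact h j i hl hij.symm
  intro i j hij heq
  have h0 : t i = t j := by simpa [site] using congrArg (fun x : Plane => x 0) heq
  have h1 : ∑ k, orderSign i k * max 0 (1 - |t i - t k|) =
      ∑ k, orderSign j k * max 0 (1 - |t j - t k|) := by
    simpa [site] using congrArg (fun x : Plane => x 1) heq
  refine h1.not_lt (Finset.sum_lt_sum (fun k _ => ?_) ⟨i, Finset.mem_univ i, ?_⟩)
  · rw [h0]
    refine mul_le_mul_of_nonneg_right ?_ (le_max_left _ _)
    unfold orderSign
    split_ifs <;> first | (exfalso; omega) | norm_num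
  · rw [h0]
    simp [orderSign, hij]

/-- The sites are equivariant under shuffles of the two groups of parameters separated by a gap. -/
theorem site_shuffle {n : ℕ} {g : ℤ} (hg : 0 < g) {A : Finset (Fin n)}
    {π : Equiv.Perm (Fin n)} {u : Fin n → ℤ} (hu : Gap g A u) (hπ : IsShuffle A π) (i : Fin n) :
    site (fun k => ((u ∘ π.symm) k : ℝ) / g) (π i) = site (fun k => (u k : ℝ) / g) i := by
  have hg' : (0 : ℝ) < g := by exact_mod_cast hg
  have hgap : ∀ a ∈ A, ∀ b ∉ A, (u a : ℝ) / g + 1 ≤ (u b : ℝ) / g := by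
    intro a ha b hb
    have h : (u a : ℝ) + g ≤ u b := by exact_mod_cast hu.2.2 a ha b hb
    rw [div_add_one hg'.ne']
    gcongr
  have hlt : ∀ i j, (i ∈ A ↔ j ∈ A) → (i < j ↔ π i < π j) := by
    intro i j hij
    rcases lt_trichotomy i j with h | h | h
    · exact iff_of_true h (lt_of_le_of_ne (hπ i j hij h.le) (π.injective.ne h.ne))
    · simp [h]
    · exact iff_of_false h.not_gt (not_lt.2 (hπ j i hij.symm h.le))
  have hsum : ∑ k, orderSign (π i) k *
        max 0 (1 - |((u (π.symm (π i)) : ℝ) / g) - (u (π.symm k) : ℝ) / g|) =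
      ∑ k, orderSign i k * max 0 (1 - |(u i : ℝ) / g - (u k : ℝ) / g|) := by
    rw [← Equiv.sum_comp π]
    refine Finset.sum_congr rfl fun k _ => ?_
    simp only [Equiv.symm_apply_apply]
    by_cases hik : i ∈ A ↔ k ∈ A
    · congr 1
      simp only [orderSign, hlt i k hik, hlt k i hik.symm]
    · -- The two indices lie on different sides of the gap, and the bump function vanishes.
      have h1 : (1 : ℝ) ≤ |(u i : ℝ) / g - (u k : ℝ) / g| := by
        by_cases hi : i ∈ A
        · have hk : k ∉ A := fun hk => hik (iff_of_true hi hk)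
          have := hgap i hi k hk
          rw [abs_sub_comm]
          exact le_trans (by linarith) (le_abs_self _)
        · have hk : k ∈ A := by
            by_contra hk
            exact hik (iff_of_false hi hk)
          have := hgap k hk i hi
          exact le_trans (by linarith) (le_abs_self _)
      rw [max_eq_left (by linarith), mul_zero, mul_zero]
  simp only [Equiv.symm_apply_apply] at hsum
  simp only [site, Function.comp_apply, Equiv.symm_apply_apply, hsum]

/-- For a suitable parameter, every index has the maximal perimeter, so that all of them agree. -/
theorem exists_equal_per {n p m : ℕ} [NeZero n] (hp : p.Prime) (hn : n = p ^ m) (hn2 : 2 ≤ n)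
    {C : Set Plane} (hC : IsCompact C) (hCc : Convex ℝ C) (hpos : 0 < volume.real C) :
    ∃ t : Fin n → ℝ, ∀ i j, per C (site t) j ≤ per C (site t) i := by
  have hex : ∀ M : ℕ, ∃ (v : Fin n → ℤ) (τ : Equiv.Perm (Fin n)),
      (∀ i, |v i| ≤ n * (((M : ℤ) + 1) + 1)) ∧
      ∀ i, ∃ k, ∀ j, per C (site fun l => (vert v τ k l : ℝ) / ((M : ℤ) + 1 : ℤ)) j ≤
        per C (site fun l => (vert v τ k l : ℝ) / ((M : ℤ) + 1 : ℤ)) i := by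
    intro M
    refine exists_simplex hp hn hn2 (g := (M : ℤ) + 1) (by positivity)
      (fun u => per C (site fun l => (u l : ℝ) / ((M : ℤ) + 1 : ℤ))) ?_
    intro A π u hu hπ i
    exact per_perm hC hCc hpos (site_injective _) (site_injective _) π
      (site_shuffle (by positivity) hu hπ) i
  choose v τ hv k hk using hex
  set s : ℕ → Fin n → ℝ := fun M l => (v M l : ℝ) / ((M : ℤ) + 1 : ℤ) with hs
  have hbd : ∀ M, s M ∈ Metric.closedBall (0 : Fin n → ℝ) (2 * n) := by
    intro M
    rw [mem_closedBall_zero_iff]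
    refine (pi_norm_le_iff_of_nonneg (by positivity)).2 fun l => ?_
    have h1 : |(v M l : ℝ)| ≤ n * (((M : ℝ) + 1) + 1) := by exact_mod_cast hv M l
    have h2 : (0 : ℝ) < (M : ℝ) + 1 := by positivity
    have h3 : (0 : ℝ) ≤ n * M := by positivity
    simp only [hs, Real.norm_eq_abs, abs_div]
    push_cast
    rw [abs_of_pos h2, div_le_iff₀ h2]
    nlinarith
  obtain ⟨t, -, φ, hφ, ht⟩ := (isCompact_closedBall _ _).tendsto_subseq hbd
  refine ⟨t, fun i j => ?_⟩
  have hclose : ∀ M κ l, |(vert (v M) (τ M) κ l : ℝ) / ((M : ℤ) + 1 : ℤ) - s M l| ≤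
      1 / ((M : ℝ) + 1) := by
    intro M κ l
    have h2 : (0 : ℝ) < (M : ℝ) + 1 := by positivity
    have h3 : (vert (v M) (τ M) κ l : ℝ) ≤ v M l + 1 := by exact_mod_cast vert_le _ _ _ _
    have h4 : (v M l : ℝ) ≤ vert (v M) (τ M) κ l := by exact_mod_cast le_vert _ _ _ _
    simp only [hs]
    push_cast
    rw [← sub_div, abs_div, abs_of_pos h2]
    gcongr
    rw [abs_le]
    constructor <;> linarith
  have hlim : Filter.Tendsto (fun M l => (vert (v (φ M)) (τ (φ M)) (k (φ M) i) l : ℝ) /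
      (((φ M : ℕ) : ℤ) + 1 : ℤ)) Filter.atTop (nhds t) := by
    rw [tendsto_pi_nhds] at ht ⊢
    intro l
    have h5 : Filter.Tendsto (fun M => (vert (v (φ M)) (τ (φ M)) (k (φ M) i) l : ℝ) /
      (((φ M : ℕ) : ℤ) + 1 : ℤ) - s (φ M) l) Filter.atTop (nhds 0) :=
      squeeze_zero_norm (fun M => hclose (φ M) (k (φ M) i) l)
        (tendsto_one_div_add_atTop_nhds_zero_nat.comp hφ.tendsto_atTop)
    simpa using h5.add (ht l)
  exact per_le_of_tendsto hC hCc hpos (fun M => site_injective _) (site_injective t)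
    ((continuous_site.tendsto t).comp hlim) fun M => hk (φ M) i j
end FairPartition

/-- A convex body in the plane can be partitioned into `q` convex parts of equal areas and
equal perimeters, for `q` a prime power. -/
theorem stmt_5 (C : Set (EuclideanSpace ℝ (Fin 2)))
    (hC : IsCompact C) (hCconv : Convex ℝ C) (hCint : (interior C).Nonempty)
    (q : ℕ) (hq : IsPrimePow q) :
    ∃ V : Fin q → Set (EuclideanSpace ℝ (Fin 2)),
      (∀ j, IsClosed (V j)) ∧ (∀ j, Convex ℝ (V j)) ∧
      (⋃ j, V j) = C ∧
      (∀ j l, j ≠ l → volume (V j ∩ V l) = 0) ∧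
      (∀ j l, volume (V j) = volume (V l)) ∧
      (∀ j l, μH[1] (frontier (V j)) = μH[1] (frontier (V l))) := by
  obtain ⟨p, m, hp, -, hpm⟩ := (isPrimePow_nat_iff q).1 hq
  have hq2 : 2 ≤ q := hq.two_le
  have : NeZero q := ⟨by omega⟩
  have hpos : 0 < volume.real C := ENNReal.toReal_pos
    (Measure.measure_pos_of_nonempty_interior volume hCint).ne' hC.measure_lt_top.ne
  obtain ⟨t, ht⟩ := FairPartition.exists_equal_per hp hpm.symm hq2 hC hCconv hpos
  have hz := FairPartition.site_injective t
  obtain ⟨-, hfair⟩ := FairPartition.weight_spec hC hpos hz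
  refine ⟨FairPartition.cell C (FairPartition.site t)
    (FairPartition.weight C (FairPartition.site t)),
    fun j => (FairPartition.isCompact_cell hC _ _ j).isClosed,
    fun j => FairPartition.convex_cell hCconv _ _ j, FairPartition.iUnion_cell C _ _,
    fun j l hjl => FairPartition.volume_cell_inter hz _ hjl, fun j l => ?_,
    fun j l => le_antisymm (ht l j) (ht j l)⟩
  rw [← ENNReal.toReal_eq_toReal_iff' (FairPartition.volume_cell_ne_top hC _ _ j)
    (FairPartition.volume_cell_ne_top hC _ _ l)]
  exact (hfair j).trans (hfair l).symm
end
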